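/- The number α₁₀ = √21 · ln((√21 − 1)/(√21 + 1)) has non-quadraticity measure at most 10.034; that is, for every real κ > 10.034, there exist only finitely many real numbers β that are roots of irreducible integer polynomials of degree at most 2 and satisfy |α₁₀ − β| < H(β)^(−κ), where H(β) denotes the largest absolute value of the coefficients of the irreducible integer polynomial having β as a root. -/

import Mathlib

/-- The height of an integer polynomial: the largest absolute value of its coefficients. -/
def polyHeight (P : Polynomial ℤ) : ℕ :=
  P.support.sup fun i => (P.coeff i).natAbs

/-!
Put `z = (√21 - 1) / (√21 + 1)` and `λ = log z`, so that `α₁₀ = √21 * λ`, and write `S q` for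
`∑ v, q v * z ^ v`. For an integer polynomial `h₀ + h₁ X + h₂ X²` and `n = 14 k`, consider
`T = S (h₀ f - √21 h₁ f' + 21 h₂ f'')` with `f = R X ^ j`, `j ≤ 2`, where `R = kernelPoly n` is
the odd polynomial whose roots, with multiplicity, are the integers in `[-13 n, 13 n]`,
`[-11 n, 11 n]` and `[-9 n, 9 n]`.

* Expanding `f` and its derivatives in central binomial coefficients, whose series are powers of
  `z / (1 - z) ^ 2 = 5` up to a factor `(1 + z) / (1 - z) = √21`, shows that `T` is an integer or
  an integer times `√21`, divisible by `5 ^ (9 n + 1)` and by a large product of primes,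
  `kernelDivisor n`. Some `T` is nonzero: `R (x + 1) / R x` is a rational function of degree
  `(3, 3)`, so shifting the summation index would propagate the vanishing from `j ≤ 2` to every
  polynomial multiple of `R`, and one of these has a series with a single nonzero term.
* `S f' + λ S f` and `S f'' + 2 λ S f' + λ² S f` are contour integrals. Relative to
  `(26 n)! (22 n)! (18 n)!` they decay like `exp (-513.4613 k)`, whereas `S f` grows at most like
  `exp (1755.111 k)`. As `T` is `(h₀ + h₁ α₁₀ + h₂ α₁₀²) S f` plus a combination of these small
  quantities, the lower bound `kernelDivisor n * 5 ^ (9 n) ≤ |T|` bounds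
  `|h₀ + h₁ α₁₀ + h₂ α₁₀²|` from below.
* The size of `kernelDivisor n` compared with the factorials is a matter of counting primes in
  intervals and needs the prime number theorem, here obtained from the Wiener–Ikehara theorem.
-/

section FejerKernel

open MeasureTheory Filter Topology Set

/-- The Fejér kernel of bandwidth `l` on the real line, normalised to have the value `l` at `0`. -/
noncomputable def fejerKernel (l v : ℝ) : ℝ := l * Real.sinc (l * v / 2) ^ 2

/-- The triangle (tent) function supported on `[-l, l]`, whose Fourier transform is the
Fejér kernel. -/
noncomputable def triangle (l y : ℝ) : ℝ := max 0 (1 - |y| / l)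

variable {l v : ℝ}

lemma continuous_triangle (l : ℝ) : Continuous (triangle l) := by unfold triangle; fun_prop

lemma triangle_neg (l y : ℝ) : triangle l (-y) = triangle l y := by
  unfold triangle; rw [abs_neg]

lemma triangle_of_mem_Icc {y : ℝ} (hl : 0 < l) (hy : y ∈ Icc 0 l) :
    triangle l y = 1 - y / l := by
  unfold triangle
  rw [abs_of_nonneg hy.1, max_eq_right]
  exact sub_nonneg.2 ((div_le_one hl).2 hy.2)

lemma norm_triangle_le_one (hl : 0 ≤ l) (y : ℝ) : ‖(triangle l y : ℂ)‖ ≤ 1 := by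
  rw [Complex.norm_real, triangle, Real.norm_of_nonneg (le_max_left _ _)]
  exact max_le zero_le_one (sub_le_self _ (by positivity))

lemma fejerKernel_nonneg (hl : 0 ≤ l) : 0 ≤ fejerKernel l v := by unfold fejerKernel; positivity

lemma fejerKernel_neg (l v : ℝ) : fejerKernel l (-v) = fejerKernel l v := by
  unfold fejerKernel; rw [mul_neg, neg_div, Real.sinc_neg]

lemma continuous_fejerKernel (l : ℝ) : Continuous (fejerKernel l) := by
  have := Real.continuous_sinc
  unfold fejerKernel
  fun_prop

lemma fejerKernel_le_self (hl : 0 ≤ l) : fejerKernel l v ≤ l := by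
  refine mul_le_of_le_one_right hl ((sq_le_one_iff_abs_le_one _).2 (abs_le.2 ⟨?_, ?_⟩))
  exacts [Real.neg_one_le_sinc _, Real.sinc_le_one _]

lemma fejerKernel_of_ne_zero (hl : l ≠ 0) (hv : v ≠ 0) :
    fejerKernel l v = 4 * Real.sin (l * v / 2) ^ 2 / (l * v ^ 2) := by
  unfold fejerKernel
  rw [Real.sinc_of_ne_zero (by positivity)]
  field_simp
  ring

lemma fejerKernel_le_div_sq (hl : 0 < l) (hv : v ≠ 0) : fejerKernel l v ≤ 4 / (l * v ^ 2) := by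
  rw [fejerKernel_of_ne_zero hl.ne' hv]
  gcongr
  linarith [Real.sin_sq_le_one (l * v / 2)]

lemma half_le_sinc {x : ℝ} (hx : |x| ≤ 1) : 1 / 2 ≤ Real.sinc x := by
  have h_abs : Real.sinc x = Real.sinc |x| := by
    rcases abs_choice x with h | h <;> rw [h]
    rw [Real.sinc_neg]
  rcases eq_or_ne x 0 with rfl | hx0
  · rw [Real.sinc_zero]; norm_num
  have hpos : 0 < |x| := abs_pos.2 hx0
  rw [h_abs, Real.sinc_of_ne_zero hpos.ne', le_div_iff₀ hpos]
  have h_pi : 1 / 2 ≤ 2 / Real.pi := by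
    rw [le_div_iff₀ Real.pi_pos]; linarith [Real.pi_le_four]
  calc 1 / 2 * |x| ≤ 2 / Real.pi * |x| := by gcongr
    _ ≤ Real.sin |x| := Real.mul_le_sin hpos.le (by linarith [Real.pi_gt_three])

lemma quarter_le_fejerKernel (hl : 0 ≤ l) (hv : |l * v| ≤ 2) : l / 4 ≤ fejerKernel l v := by
  have h_half : 1 / 2 ≤ Real.sinc (l * v / 2) :=
    half_le_sinc (by rw [abs_div, abs_two]; linarith)
  calc l / 4 = l * (1 / 2) ^ 2 := by ring
    _ ≤ fejerKernel l v := by unfold fejerKernel; gcongr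

lemma integrable_fejerKernel (hl : 0 < l) : Integrable (fejerKernel l) := by
  refine Integrable.mono' (integrable_inv_one_add_sq.const_mul (l + 4 / l))
    (continuous_fejerKernel l).aestronglyMeasurable (Eventually.of_forall fun v => ?_)
  have h_sq : fejerKernel l v * v ^ 2 ≤ 4 / l := by
    rcases eq_or_ne v 0 with rfl | hv
    · rw [zero_pow two_ne_zero, mul_zero]; positivity
    · calc fejerKernel l v * v ^ 2 ≤ 4 / (l * v ^ 2) * v ^ 2 := by
            gcongr; exact fejerKernel_le_div_sq hl hv
        _ = 4 / l := by field_simp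
  rw [Real.norm_of_nonneg (fejerKernel_nonneg hl.le), ← div_eq_mul_inv,
    le_div_iff₀ (by positivity)]
  linarith [fejerKernel_le_self (v := v) hl.le]

lemma integral_one_sub_div_mul_exp {w : ℂ} (hl : l ≠ 0) (hw : w ≠ 0) :
    ∫ y in (0 : ℝ)..l, (1 - y / l : ℂ) * Complex.exp (w * y) =
      (Complex.exp (w * l) - 1 - w * l) / (l * w ^ 2) := by
  have hl' : (l : ℂ) ≠ 0 := Complex.ofReal_ne_zero.2 hl
  have h_deriv (y : ℝ) : HasDerivAt
      (fun y : ℝ => (1 - y / l : ℂ) * (Complex.exp (w * y) / w) + Complex.exp (w * y) / (l * w ^ 2))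
      ((1 - y / l : ℂ) * Complex.exp (w * y)) y := by
    have h_id : HasDerivAt (fun y : ℝ => (y : ℂ)) 1 y := Complex.ofRealCLM.hasDerivAt
    have h_exp := (h_id.const_mul w).cexp
    refine ((((h_id.div_const (l : ℂ)).const_sub 1).mul (h_exp.div_const w)).add
      (h_exp.div_const (l * w ^ 2))).congr_deriv ?_
    field_simp
    ring
  rw [intervalIntegral.integral_eq_sub_of_hasDerivAt (fun y _ => h_deriv y)
    (Continuous.intervalIntegrable (by fun_prop) _ _)]
  simp only [Complex.ofReal_zero, mul_zero, zero_div, Complex.exp_zero, div_self hl']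
  field_simp
  ring

lemma integral_triangle_mul_exp {w : ℂ} (hl : 0 < l) (hw : w ≠ 0) :
    ∫ y in (0 : ℝ)..l, (triangle l y : ℂ) * Complex.exp (w * y) =
      (Complex.exp (w * l) - 1 - w * l) / (l * w ^ 2) := by
  rw [← integral_one_sub_div_mul_exp hl.ne' hw]
  refine intervalIntegral.integral_congr fun y hy => ?_
  rw [uIcc_of_le hl.le] at hy
  simp only [triangle_of_mem_Icc hl hy]
  push_cast
  rfl

lemma integral_triangle_mul_exp_eq_fejerKernel (hl : 0 < l) (hv : v ≠ 0) :
    ∫ y in (-l)..l, (triangle l y : ℂ) * Complex.exp (Complex.I * y * v) = fejerKernel l v := by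
  have hv' : (v : ℂ) ≠ 0 := Complex.ofReal_ne_zero.2 hv
  have hl' : (l : ℂ) ≠ 0 := Complex.ofReal_ne_zero.2 hl.ne'
  have h_cont : Continuous fun y : ℝ => (triangle l y : ℂ) * Complex.exp (Complex.I * y * v) := by
    have := continuous_triangle l
    fun_prop
  have h_right := integral_triangle_mul_exp (w := Complex.I * v) hl
    (mul_ne_zero Complex.I_ne_zero hv')
  have h_left := integral_triangle_mul_exp (w := -(Complex.I * v)) hl
    (neg_ne_zero.2 (mul_ne_zero Complex.I_ne_zero hv'))
  have h_reflect : ∫ y in (-l)..0, (triangle l y : ℂ) * Complex.exp (Complex.I * y * v) =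
      ∫ y in (0 : ℝ)..l, (triangle l y : ℂ) * Complex.exp (-(Complex.I * v) * y) := by
    have h_neg := intervalIntegral.integral_comp_neg (a := 0) (b := l)
      fun y : ℝ => (triangle l y : ℂ) * Complex.exp (Complex.I * y * v)
    rw [neg_zero] at h_neg
    simp only [← h_neg, triangle_neg]
    congr! 4 with y
    push_cast
    ring
  have h_swap (y : ℝ) : Complex.I * y * v = Complex.I * v * y := by ring
  rw [← intervalIntegral.integral_add_adjacent_intervals (b := 0)
    (h_cont.intervalIntegrable _ _) (h_cont.intervalIntegrable _ _), h_reflect, h_left]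
  simp_rw [h_swap]
  rw [h_right, fejerKernel_of_ne_zero hl.ne' hv]
  have h_sin : 4 * Complex.sin (l * v / 2) ^ 2 = 2 - 2 * Complex.cos (l * v) := by
    rw [Complex.sin_sq, Complex.cos_sq, show (2 : ℂ) * (l * v / 2) = l * v by ring]
    ring
  push_cast
  rw [h_sin, Complex.cos, show (l : ℂ) * v * Complex.I = Complex.I * v * l by ring,
    show -((l : ℂ) * v) * Complex.I = -(Complex.I * v) * l by ring]
  field_simp
  simp only [Complex.I_sq]
  ring

lemma setIntegral_Ioi_fejerKernel_le {h : ℝ} (hl : 0 < l) (hh : 0 < h) :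
    ∫ v in Ioi h, fejerKernel l v ≤ 4 / (l * h) := by
  have h_int : IntegrableOn (fun v : ℝ => 4 / l * v ^ (-2 : ℝ)) (Ioi h) :=
    (integrableOn_Ioi_rpow_of_lt (by norm_num) hh).const_mul _
  calc ∫ v in Ioi h, fejerKernel l v ≤ ∫ v in Ioi h, 4 / l * v ^ (-2 : ℝ) := by
        refine setIntegral_mono_on (integrable_fejerKernel hl).integrableOn h_int
          measurableSet_Ioi fun v hv => ?_
        have hv0 : 0 < v := hh.trans hv
        refine (fejerKernel_le_div_sq hl hv0.ne').trans_eq ?_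
        rw [Real.rpow_neg hv0.le, Real.rpow_two]
        field_simp
    _ = 4 / (l * h) := by
        rw [integral_const_mul, integral_Ioi_rpow_of_lt (by norm_num) hh,
          show (-2 : ℝ) + 1 = -1 by norm_num, Real.rpow_neg_one]
        field_simp

lemma setIntegral_compl_Icc_fejerKernel_le {h : ℝ} (hl : 0 < l) (hh : 0 < h) (u : ℝ) :
    ∫ t in (Icc (u - h) (u + h))ᶜ, fejerKernel l (u - t) ≤ 8 / (l * h) := by
  have h_int : Integrable fun t => fejerKernel l (u - t) :=
    (integrable_fejerKernel hl).comp_sub_left u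
  have h_compl : (Icc (u - h) (u + h))ᶜ = Iio (u - h) ∪ Ioi (u + h) := by
    rw [← Ici_inter_Iic, compl_inter, compl_Ici, compl_Iic]
  have h_below : ∫ t in Iio (u - h), fejerKernel l (u - t) = ∫ v in Ioi h, fejerKernel l v := by
    rw [← integral_indicator measurableSet_Iio, ← integral_indicator measurableSet_Ioi,
      ← integral_sub_left_eq_self ((Ioi h).indicator (fejerKernel l)) volume u]
    congr! 2 with t
    simp only [indicator, mem_Iio, mem_Ioi, lt_sub_comm]
  have h_above : ∫ t in Ioi (u + h), fejerKernel l (u - t) = ∫ v in Ioi h, fejerKernel l v := by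
    have h_even (t : ℝ) : fejerKernel l (u - t) = fejerKernel l (t - u) := by
      rw [← fejerKernel_neg, neg_sub]
    simp_rw [h_even]
    rw [← integral_indicator measurableSet_Ioi, ← integral_indicator measurableSet_Ioi,
      ← integral_sub_right_eq_self ((Ioi h).indicator (fejerKernel l)) u]
    congr! 2
    simp only [indicator, mem_Ioi, lt_sub_iff_add_lt']
  have h_disj : Disjoint (Iio (u - h)) (Ioi (u + h)) :=
    (Iio_disjoint_Ici (by linarith)).mono_right Ioi_subset_Ici_self
  rw [h_compl, setIntegral_union h_disj measurableSet_Ioi h_int.integrableOn h_int.integrableOn,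
    h_below, h_above]
  calc _ ≤ 4 / (l * h) + 4 / (l * h) := by
        gcongr <;> exact setIntegral_Ioi_fejerKernel_le hl hh
    _ = 8 / (l * h) := by ring

end FejerKernel

section WienerIkehara

open MeasureTheory Filter Topology Set

/-- The one-sided Laplace transform of a real function. -/
noncomputable def laplaceTransform (g : ℝ → ℝ) (w : ℂ) : ℂ :=
  ∫ t in Ioi (0 : ℝ), (g t : ℂ) * Complex.exp (-(w * t))

variable {g : ℝ → ℝ} {C l : ℝ}

lemma integrable_bounded_mul_fejerKernel (hg : Measurable g) (hC : ∀ t, |g t| ≤ C) (hl : 0 < l)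
    (u : ℝ) : Integrable fun t => g t * fejerKernel l (u - t) :=
  ((integrable_fejerKernel hl).comp_sub_left u).bdd_mul hg.aestronglyMeasurable
    (Eventually.of_forall hC)

lemma integrable_triangle_mul_laplace_kernel (hg : Measurable g) (hC : ∀ t, |g t| ≤ C)
    (hl : 0 < l) (u : ℝ) {e : ℝ} (he : 0 < e) :
    Integrable (Function.uncurry fun y t : ℝ =>
        (triangle l y : ℂ) * Complex.exp (Complex.I * y * u) *
          ((g t : ℂ) * Complex.exp (-((e + Complex.I * y) * t))))
      ((volume.restrict (Ioc (-l) l)).prod (volume.restrict (Ioi 0))) := by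
  have h_dom : Integrable (fun p : ℝ × ℝ => (1 : ℝ) * (C * Real.exp (-e * p.2)))
      ((volume.restrict (Ioc (-l) l)).prod (volume.restrict (Ioi 0))) :=
    Integrable.mul_prod (f := fun _ : ℝ => (1 : ℝ)) (integrable_const _)
      ((integrableOn_exp_mul_Ioi (neg_lt_zero.2 he) 0).const_mul C)
  refine h_dom.mono' (Measurable.aestronglyMeasurable ?_) (Eventually.of_forall fun p => ?_)
  · have := (continuous_triangle l).measurable
    unfold Function.uncurry
    fun_prop
  · have h_re₁ : (Complex.I * p.1 * u).re = 0 := by simp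
    have h_re₂ : (-((e + Complex.I * p.1) * p.2)).re = -e * p.2 := by simp
    simp only [Function.uncurry]
    rw [norm_mul, norm_mul, norm_mul, Complex.norm_exp, Complex.norm_exp, h_re₁, h_re₂,
      Real.exp_zero, mul_one, Complex.norm_real (g _), Real.norm_eq_abs]
    gcongr
    · exact norm_triangle_le_one hl.le _
    · exact hC _

lemma integral_mul_exp_mul_fejerKernel (hg : Measurable g) (hC : ∀ t, |g t| ≤ C) (hl : 0 < l)
    (u : ℝ) {e : ℝ} (he : 0 < e) :
    ((∫ t in Ioi (0 : ℝ), g t * Real.exp (-(e * t)) * fejerKernel l (u - t) : ℝ) : ℂ) =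
      ∫ y in (-l)..l, (triangle l y : ℂ) * Complex.exp (Complex.I * y * u) *
        laplaceTransform g (e + Complex.I * y) := by
  unfold laplaceTransform
  rw [← integral_complex_ofReal, intervalIntegral.integral_of_le (by linarith)]
  simp_rw [← integral_const_mul]
  rw [integral_integral_swap (integrable_triangle_mul_laplace_kernel hg hC hl u he)]
  have h_ne : ∀ᵐ t ∂(volume.restrict (Ioi (0 : ℝ))), t ≠ u :=
    ae_restrict_of_ae (by simp [ae_iff])
  refine integral_congr_ae ?_
  filter_upwards [h_ne] with t ht
  push_cast
  rw [← integral_triangle_mul_exp_eq_fejerKernel hl (sub_ne_zero.2 ht.symm),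
    intervalIntegral.integral_of_le (by linarith), ← integral_const_mul]
  congr 1 with y
  rw [show Complex.I * y * ((u - t : ℝ) : ℂ) = Complex.I * y * u + -(Complex.I * y * t) by
      push_cast; ring,
    show -((e + Complex.I * y) * t) = -(e * t) + -(Complex.I * y * t) by ring,
    Complex.exp_add, Complex.exp_add]
  ring

lemma tendsto_integral_mul_exp_mul_fejerKernel (hg : Measurable g) (hC : ∀ t, |g t| ≤ C)
    (hl : 0 < l) (u : ℝ) :
    Tendsto (fun e : ℝ => ∫ t in Ioi (0 : ℝ), g t * Real.exp (-(e * t)) * fejerKernel l (u - t))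
      (𝓝[>] 0) (𝓝 (∫ t in Ioi (0 : ℝ), g t * fejerKernel l (u - t))) := by
  refine tendsto_integral_filter_of_dominated_convergence (fun t => C * fejerKernel l (u - t))
    (Eventually.of_forall fun e => ?_) ?_
    (((integrable_fejerKernel hl).comp_sub_left u).const_mul C).integrableOn
    (Eventually.of_forall fun t => ?_)
  · have := (continuous_fejerKernel l).measurable
    exact Measurable.aestronglyMeasurable (by fun_prop)
  · filter_upwards [self_mem_nhdsWithin] with e (he : 0 < e)
    filter_upwards [ae_restrict_mem measurableSet_Ioi] with t (ht : 0 < t)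
    rw [norm_mul, norm_mul, Real.norm_of_nonneg (fejerKernel_nonneg hl.le),
      Real.norm_of_nonneg (Real.exp_nonneg _), Real.norm_eq_abs]
    refine mul_le_mul_of_nonneg_right ?_ (fejerKernel_nonneg hl.le)
    exact (mul_le_of_le_one_right (abs_nonneg _)
      (Real.exp_le_one_iff.2 (neg_nonpos.2 (mul_pos he ht).le))).trans (hC t)
  · have h_cont : Continuous fun e : ℝ => g t * Real.exp (-(e * t)) * fejerKernel l (u - t) := by
      fun_prop
    simpa only [zero_mul, neg_zero, Real.exp_zero, mul_one] using
      (h_cont.tendsto 0).mono_left nhdsWithin_le_nhds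

section Boundary

variable {H : ℂ → ℂ}

lemma tendsto_integral_triangle_mul_exp_mul (hH : ContinuousOn H {w | 0 ≤ w.re}) (hl : 0 ≤ l)
    (u : ℝ) :
    Tendsto (fun e : ℝ => ∫ y in (-l)..l,
        (triangle l y : ℂ) * Complex.exp (Complex.I * y * u) * H (e + Complex.I * y)) (𝓝[>] 0)
      (𝓝 (∫ y in (-l)..l,
        (triangle l y : ℂ) * Complex.exp (Complex.I * y * u) * H (Complex.I * y))) := by
  have h_cont : ContinuousOn (fun p : ℝ × ℝ => H (p.1 + Complex.I * p.2)) (Icc 0 1 ×ˢ univ) :=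
    hH.comp (by fun_prop) fun p hp => by simpa using hp.1.1
  obtain ⟨M, hM⟩ := (isCompact_Icc.prod (isCompact_Icc (a := -l) (b := l))
    ).exists_bound_of_continuousOn (h_cont.mono (prod_mono Subset.rfl (subset_univ _)))
  have h_small : ∀ᶠ e : ℝ in 𝓝[>] 0, e ∈ Icc (0 : ℝ) 1 :=
    mem_of_superset (Ioc_mem_nhdsGT one_pos) Ioc_subset_Icc_self
  refine intervalIntegral.tendsto_integral_filter_of_dominated_convergence (fun _ => 1 * 1 * M)
    ?_ ?_ intervalIntegrable_const (Eventually.of_forall fun y _ => tendsto_const_nhds.mul ?_)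
  · filter_upwards [h_small] with e he
    have h_line : Continuous fun y : ℝ => H (e + Complex.I * y) :=
      h_cont.comp_continuous (f := fun y => (e, y)) (by fun_prop) fun y => ⟨he, mem_univ _⟩
    exact (((Complex.continuous_ofReal.comp (continuous_triangle l)).mul
      (by fun_prop)).mul h_line).aestronglyMeasurable
  · filter_upwards [h_small] with e he
    refine Eventually.of_forall fun y hy => ?_
    rw [uIoc_of_le (by linarith)] at hy
    rw [norm_mul, norm_mul]
    gcongr
    · exact norm_triangle_le_one hl y
    · rw [Complex.norm_exp]; simp
    · exact hM (e, y) ⟨he, hy.1.le, hy.2⟩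
  · have h_lim := (h_cont (0, y) ⟨left_mem_Icc.2 zero_le_one, mem_univ _⟩).tendsto
    have h_path : Tendsto (fun e : ℝ => (e, y)) (𝓝[>] 0) (𝓝[Icc 0 1 ×ˢ univ] (0, y)) :=
      tendsto_nhdsWithin_iff.2 ⟨((by fun_prop : Continuous fun e : ℝ => (e, y)).tendsto 0).mono_left
        nhdsWithin_le_nhds, h_small.mono fun e he => ⟨he, mem_univ _⟩⟩
    simpa only [Function.comp_def, Complex.ofReal_zero, zero_add] using h_lim.comp h_path

lemma integral_mul_fejerKernel_eq (hg : Measurable g) (hC : ∀ t, |g t| ≤ C)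
    (hH : ContinuousOn H {w | 0 ≤ w.re}) (hE : EqOn (laplaceTransform g) H {w | 0 < w.re})
    (hl : 0 < l) (u : ℝ) :
    ((∫ t in Ioi (0 : ℝ), g t * fejerKernel l (u - t) : ℝ) : ℂ) =
      ∫ y in (-l)..l, (triangle l y : ℂ) * Complex.exp (Complex.I * y * u) * H (Complex.I * y) := by
  refine tendsto_nhds_unique ((Complex.continuous_ofReal.tendsto _).comp
    (tendsto_integral_mul_exp_mul_fejerKernel hg hC hl u))
    ((tendsto_integral_triangle_mul_exp_mul hH hl.le u).congr' ?_)
  filter_upwards [self_mem_nhdsWithin] with e (he : 0 < e)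
  simp only [Function.comp_apply, integral_mul_exp_mul_fejerKernel hg hC hl u he]
  refine intervalIntegral.integral_congr fun y _ => ?_
  have h_mem : ((e : ℂ) + Complex.I * y) ∈ {w : ℂ | 0 < w.re} := by simpa using he
  simp only [hE h_mem]

lemma tendsto_integral_mul_fejerKernel_zero (hg : Measurable g) (hC : ∀ t, |g t| ≤ C)
    (hH : ContinuousOn H {w | 0 ≤ w.re}) (hE : EqOn (laplaceTransform g) H {w | 0 < w.re})
    (hl : 0 < l) :
    Tendsto (fun u => ∫ t in Ioi (0 : ℝ), g t * fejerKernel l (u - t)) atTop (𝓝 0) := by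
  have h_freq : Tendsto (fun u : ℝ => -u / (2 * Real.pi)) atTop (cocompact ℝ) :=
    (tendsto_neg_atTop_atBot.atBot_div_const (by positivity)).mono_right atBot_le_cocompact
  have h_riemann_lebesgue := (Real.tendsto_integral_exp_smul_cocompact
    ((Ioc (-l) l).indicator fun y : ℝ => (triangle l y : ℂ) * H (Complex.I * y))).comp h_freq
  have h_complex : Tendsto (fun u => ((∫ t in Ioi (0 : ℝ), g t * fejerKernel l (u - t) : ℝ) : ℂ))
      atTop (𝓝 0) := by
    refine h_riemann_lebesgue.congr fun u => ?_
    rw [integral_mul_fejerKernel_eq hg hC hH hE hl u,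
      intervalIntegral.integral_of_le (by linarith), ← integral_indicator measurableSet_Ioc]
    simp only [Function.comp_apply]
    congr 1 with y
    by_cases hy : y ∈ Ioc (-l) l
    · have h_phase : ((2 * Real.pi * -(y * (-u / (2 * Real.pi))) : ℝ) : ℂ) * Complex.I =
          Complex.I * y * u := by
        have : (Real.pi : ℂ) ≠ 0 := Complex.ofReal_ne_zero.2 Real.pi_ne_zero
        push_cast
        field_simp
      rw [indicator_of_mem hy, indicator_of_mem hy, Circle.smul_def, Real.fourierChar_apply,
        smul_eq_mul, h_phase]
      ring
    · rw [indicator_of_notMem hy, indicator_of_notMem hy, smul_zero]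
  simpa [Function.comp_def] using (Complex.continuous_re.tendsto _).comp h_complex

end Boundary

section Tauberian

variable {d h u : ℝ}

lemma le_setIntegral_Icc_mul_fejerKernel (hg : Measurable g) (hC : ∀ t, |g t| ≤ C) (hd : 0 ≤ d)
    (hl : 0 < l) (hlh : 2 ≤ l * h) (hlow : ∀ t, |t - u| ≤ h → d ≤ g t) :
    d ≤ ∫ t in Icc (u - h) (u + h), g t * fejerKernel l (u - t) := by
  have hI := integrable_bounded_mul_fejerKernel hg hC hl u
  have h_pos : 0 < 2 / l := by positivity
  have h_width : 2 / l ≤ h := by rw [div_le_iff₀ hl]; linarith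
  have h_sub : Icc (u - 2 / l) (u + 2 / l) ⊆ Icc (u - h) (u + h) :=
    Icc_subset_Icc (by linarith) (by linarith)
  have h_low {t : ℝ} (ht : t ∈ Icc (u - h) (u + h)) : d ≤ g t :=
    hlow t (abs_le.2 ⟨by linarith [ht.1], by linarith [ht.2]⟩)
  calc d = ∫ t in Icc (u - 2 / l) (u + 2 / l), d * (l / 4) := by
        rw [setIntegral_const, Real.volume_real_Icc_of_le (by linarith), smul_eq_mul]
        field_simp
        ring
    _ ≤ ∫ t in Icc (u - 2 / l) (u + 2 / l), g t * fejerKernel l (u - t) := by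
        refine setIntegral_mono_on (integrableOn_const (by simp)) hI.integrableOn
          measurableSet_Icc fun t ht => ?_
        have h_near : |l * (u - t)| ≤ 2 := by
          rw [abs_mul, abs_of_pos hl, ← le_div_iff₀' hl]
          exact abs_le.2 ⟨by linarith [ht.2], by linarith [ht.1]⟩
        exact mul_le_mul (h_low (h_sub ht)) (quarter_le_fejerKernel hl.le h_near) (by positivity)
          (hd.trans (h_low (h_sub ht)))
    _ ≤ _ := by
        refine setIntegral_mono_set hI.integrableOn ?_ h_sub.eventuallyLE
        filter_upwards [ae_restrict_mem measurableSet_Icc] with t ht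
        exact mul_nonneg (hd.trans (h_low ht)) (fejerKernel_nonneg hl.le)

lemma neg_le_setIntegral_diff_Icc_mul_fejerKernel (hg : Measurable g) (hC : ∀ t, |g t| ≤ C)
    (hl : 0 < l) (hh : 0 < h) (u : ℝ) :
    -(8 * C / (l * h)) ≤
      ∫ t in Ioi (0 : ℝ) \ Icc (u - h) (u + h), g t * fejerKernel l (u - t) := by
  have hC0 : 0 ≤ C := (abs_nonneg _).trans (hC 0)
  have hK : Integrable fun t => fejerKernel l (u - t) :=
    (integrable_fejerKernel hl).comp_sub_left u
  have h_tail : ∫ t in Ioi (0 : ℝ) \ Icc (u - h) (u + h), fejerKernel l (u - t) ≤ 8 / (l * h) :=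
    (setIntegral_mono_set hK.integrableOn
      (Eventually.of_forall fun t => fejerKernel_nonneg hl.le)
      (sdiff_subset_compl _ _).eventuallyLE).trans (setIntegral_compl_Icc_fejerKernel_le hl hh u)
  calc -(8 * C / (l * h)) = -C * (8 / (l * h)) := by ring
    _ ≤ -C * ∫ t in Ioi (0 : ℝ) \ Icc (u - h) (u + h), fejerKernel l (u - t) :=
        mul_le_mul_of_nonpos_left h_tail (neg_nonpos.2 hC0)
    _ = ∫ t in Ioi (0 : ℝ) \ Icc (u - h) (u + h), -C * fejerKernel l (u - t) := by
        rw [integral_const_mul]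
    _ ≤ _ := by
        refine setIntegral_mono_on (hK.const_mul _).integrableOn
          (integrable_bounded_mul_fejerKernel hg hC hl u).integrableOn
          (measurableSet_Ioi.diff measurableSet_Icc) fun t _ => ?_
        exact mul_le_mul_of_nonneg_right (abs_le.1 (hC t)).1 (fejerKernel_nonneg hl.le)

lemma sub_le_integral_mul_fejerKernel (hg : Measurable g) (hC : ∀ t, |g t| ≤ C) (hd : 0 ≤ d)
    (hh : 0 < h) (hl : 0 < l) (hlh : 2 ≤ l * h) (hu : h < u)
    (hlow : ∀ t, |t - u| ≤ h → d ≤ g t) :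
    d - 8 * C / (l * h) ≤ ∫ t in Ioi (0 : ℝ), g t * fejerKernel l (u - t) := by
  have hI := integrable_bounded_mul_fejerKernel hg hC hl u
  have h_window : Icc (u - h) (u + h) ⊆ Ioi 0 := fun t ht => (sub_pos.2 hu).trans_le ht.1
  rw [← union_sdiff_cancel h_window, setIntegral_union disjoint_sdiff_right
    (measurableSet_Ioi.diff measurableSet_Icc) hI.integrableOn hI.integrableOn]
  linarith [le_setIntegral_Icc_mul_fejerKernel hg hC hd hl hlh hlow,
    neg_le_setIntegral_diff_Icc_mul_fejerKernel hg hC hl hh u]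

lemma eventually_exists_lt_of_tendsto_fejer (hg : Measurable g) (hC : ∀ t, |g t| ≤ C)
    (hlim : ∀ l, 0 < l →
      Tendsto (fun u => ∫ t in Ioi (0 : ℝ), g t * fejerKernel l (u - t)) atTop (𝓝 0))
    (hd : 0 < d) (hh : 0 < h) : ∀ᶠ u in atTop, ∃ t, |t - u| ≤ h ∧ g t < d := by
  have hC0 : 0 ≤ C := (abs_nonneg _).trans (hC 0)
  obtain ⟨l, hl⟩ : ∃ l, l * h = 2 + 16 * C / d := ⟨(2 + 16 * C / d) / h, by field_simp⟩
  have h_ratio : 0 ≤ 16 * C / d := by positivity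
  have hl0 : 0 < l := pos_of_mul_pos_left (by rw [hl]; linarith) hh.le
  have h_tail : 8 * C / (l * h) ≤ d / 2 := by
    rw [hl, div_le_iff₀ (by positivity)]
    calc 8 * C ≤ d + 8 * C := by linarith
      _ = d / 2 * (2 + 16 * C / d) := by field_simp; ring
  filter_upwards [(hlim l hl0).eventually_lt_const (half_pos hd), eventually_gt_atTop h]
    with u hu hhu
  by_contra! h_low
  linarith [sub_le_integral_mul_fejerKernel hg hC hd.le hh hl0 (by linarith) hhu h_low]

end Tauberian

lemma exists_pos_lt_of_continuous {f : ℝ → ℝ} (hf : Continuous f) {a : ℝ} (ha : a < f 0) :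
    ∃ d, 0 < d ∧ d < 1 ∧ a < f d := by
  have h_near : ∀ᶠ d in 𝓝[>] 0, a < f d :=
    ((hf.tendsto 0).mono_left nhdsWithin_le_nhds).eventually_const_lt ha
  obtain ⟨d, had, hd⟩ := (h_near.and (Ioo_mem_nhdsGT one_pos)).exists
  exact ⟨d, hd.1, hd.2, had⟩

/-- The Wiener–Ikehara theorem, with `B t * exp t` in the role of the summatory function at
`exp t`. -/
theorem wiener_ikehara {B : ℝ → ℝ} {H : ℂ → ℂ} (hB : Measurable B)
    (hC : ∀ t, |B t - 1| ≤ C) (hmono : Monotone fun t => B t * Real.exp t)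
    (hH : ContinuousOn H {w | 0 ≤ w.re})
    (hE : EqOn (laplaceTransform fun t => B t - 1) H {w | 0 < w.re}) :
    Tendsto B atTop (𝓝 1) := by
  have hlim (l : ℝ) (hl : 0 < l) :=
    tendsto_integral_mul_fejerKernel_zero (hB.sub_const 1) hC hH hE hl
  have hlim_neg (l : ℝ) (hl : 0 < l) : Tendsto
      (fun u => ∫ t in Ioi (0 : ℝ), -(B t - 1) * fejerKernel l (u - t)) atTop (𝓝 0) := by
    simpa only [neg_mul, integral_neg, neg_zero] using (hlim l hl).neg
  have h_le {s t : ℝ} (hst : s ≤ t) : B s * Real.exp (s - t) ≤ B t := by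
    rw [Real.exp_sub, ← mul_div_assoc, div_le_iff₀ (Real.exp_pos _)]
    exact hmono hst
  refine tendsto_order.2 ⟨fun a ha => ?_, fun a ha => ?_⟩
  · obtain ⟨d, hd, hd1, had⟩ := exists_pos_lt_of_continuous
      (f := fun d => (1 - d) * Real.exp (-(2 * d))) (by fun_prop) (by simpa using ha)
    have h_window := eventually_exists_lt_of_tendsto_fejer
      (g := fun t => -(B t - 1)) (hB.sub_const 1).neg
      (fun t => (abs_neg _).trans_le (hC t)) hlim_neg hd hd
    filter_upwards [(tendsto_atTop_add_const_right atTop (-d) tendsto_id).eventually h_window]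
      with x ⟨t, htx, ht⟩
    obtain ⟨h_lower, h_upper⟩ := abs_le.1 htx
    rw [id] at h_lower h_upper
    have h_large : 1 - d < B t := by linarith
    calc a < (1 - d) * Real.exp (-(2 * d)) := had
      _ ≤ B t * Real.exp (t - x) := by gcongr <;> linarith
      _ ≤ B x := h_le (by linarith)
  · obtain ⟨d, hd, -, had⟩ := exists_pos_lt_of_continuous
      (f := fun d => -((1 + d) * Real.exp (2 * d))) (by fun_prop) (a := -a) (by simpa using ha)
    have h_window := eventually_exists_lt_of_tendsto_fejer (hB.sub_const 1) hC hlim hd hd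
    filter_upwards [(tendsto_atTop_add_const_right atTop d tendsto_id).eventually h_window]
      with x ⟨t, htx, ht⟩
    obtain ⟨h_lower, h_upper⟩ := abs_le.1 htx
    rw [id] at h_lower h_upper
    calc B x = B x * Real.exp (x - t) * Real.exp (t - x) := by
          rw [mul_assoc, ← Real.exp_add]; simp
      _ ≤ B t * Real.exp (t - x) := by gcongr; exact h_le (by linarith)
      _ ≤ (1 + d) * Real.exp (2 * d) := by gcongr <;> linarith
      _ < a := neg_lt_neg_iff.1 had

end WienerIkehara

section PrimeNumberTheorem

open MeasureTheory Filter Topology Set ArithmeticFunction.vonMangoldt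

/-- The ratio `ψ(x) / x` of Chebyshev's function, in the logarithmic variable `t = log x`. -/
noncomputable def psiRatioExp (t : ℝ) : ℝ := Chebyshev.psi (Real.exp t) * Real.exp (-t)

lemma measurable_psiRatioExp : Measurable psiRatioExp := by
  have := Chebyshev.psi_mono.measurable
  unfold psiRatioExp
  fun_prop

lemma abs_psiRatioExp_sub_one_le (t : ℝ) : |psiRatioExp t - 1| ≤ Real.log 4 + 4 := by
  have h_upper : psiRatioExp t ≤ Real.log 4 + 4 := by
    rw [psiRatioExp, Real.exp_neg, ← div_eq_mul_inv, div_le_iff₀ (Real.exp_pos _)]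
    exact Chebyshev.psi_le_const_mul_self (Real.exp_nonneg t)
  have h_lower : 0 ≤ psiRatioExp t := mul_nonneg (Chebyshev.psi_nonneg _) (Real.exp_nonneg _)
  have h_log : 0 ≤ Real.log 4 := Real.log_nonneg (by norm_num)
  exact abs_le.2 ⟨by linarith, by linarith⟩

lemma monotone_psiRatioExp_mul_exp : Monotone fun t => psiRatioExp t * Real.exp t := by
  have h_eq (t : ℝ) : psiRatioExp t * Real.exp t = Chebyshev.psi (Real.exp t) := by
    rw [psiRatioExp, mul_assoc, ← Real.exp_add, neg_add_cancel, Real.exp_zero, mul_one]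
  simp only [h_eq]
  exact Chebyshev.psi_mono.comp Real.exp_monotone

lemma LSeries_vonMangoldt_eq_mul_integral {s : ℂ} (hs : 1 < s.re) :
    LSeries (fun n => (ArithmeticFunction.vonMangoldt n : ℂ)) s =
      s * ∫ t in Ioi (1 : ℝ), (Chebyshev.psi t : ℂ) * (t : ℂ) ^ (-(s + 1)) := by
  rw [LSeries_eq_mul_integral_of_nonneg (fun n => ArithmeticFunction.vonMangoldt n) zero_le_one hs
    _ fun n => ArithmeticFunction.vonMangoldt_nonneg]
  · congr 2 with t
    rw [Chebyshev.psi]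
    push_cast
    rfl
  · have h_sum : (fun n : ℕ => ∑ k ∈ Finset.Icc 1 n, ArithmeticFunction.vonMangoldt k) =
        fun n : ℕ => Chebyshev.psi n := by
      ext n
      rw [Chebyshev.psi, Nat.floor_natCast]
      rfl
    rw [h_sum]
    refine Asymptotics.IsBigO.of_bound (Real.log 4 + 4) (Eventually.of_forall fun n => ?_)
    rw [Real.norm_of_nonneg (Chebyshev.psi_nonneg _), Real.rpow_one,
      Real.norm_of_nonneg (Nat.cast_nonneg n)]
    exact Chebyshev.psi_le_const_mul_self (Nat.cast_nonneg n)

lemma LSeries_vonMangoldt_one_add {w : ℂ} (hw : 0 < w.re) :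
    LSeries (fun n => (ArithmeticFunction.vonMangoldt n : ℂ)) (1 + w) =
      (1 + w) * laplaceTransform psiRatioExp w := by
  have h_image : Real.exp '' Ioi 0 = Ioi 1 := by
    ext x
    refine ⟨?_, fun (hx : 1 < x) =>
      ⟨Real.log x, Real.log_pos hx, Real.exp_log (zero_lt_one.trans hx)⟩⟩
    rintro ⟨t, ht, rfl⟩
    exact Real.one_lt_exp_iff.2 ht
  rw [LSeries_vonMangoldt_eq_mul_integral (by simpa using hw), ← h_image,
    integral_image_eq_integral_abs_deriv_smul measurableSet_Ioi
      (fun x _ => (Real.hasDerivAt_exp x).hasDerivWithinAt) Real.exp_injective.injOn]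
  refine congrArg _ (integral_congr_ae (Eventually.of_forall fun t => ?_))
  have h_cpow : (Real.exp t : ℂ) ^ (-(1 + w + 1)) = Complex.exp (t * -(1 + w + 1)) := by
    rw [Complex.cpow_def_of_ne_zero (Complex.ofReal_ne_zero.2 (Real.exp_ne_zero t)),
      ← Complex.ofReal_log (Real.exp_nonneg _), Real.log_exp]
  simp only [psiRatioExp, abs_of_pos (Real.exp_pos t), Complex.real_smul, h_cpow]
  push_cast
  rw [mul_left_comm, mul_assoc, ← Complex.exp_add, ← Complex.exp_add]
  congr 2
  ring

lemma LFunctionResidueClassAux_modOne_eq {s : ℂ} (hs : 1 < s.re) :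
    LFunctionResidueClassAux (q := 1) 1 s =
      LSeries (fun n => (ArithmeticFunction.vonMangoldt n : ℂ)) s - 1 / (s - 1) := by
  have h_all : {n : ℕ | (n : ZMod 1) = 1} = univ :=
    eq_univ_of_forall fun n => Subsingleton.elim _ _
  rw [eqOn_LFunctionResidueClassAux isUnit_one hs]
  simp [residueClass, h_all]

lemma laplaceTransform_sub_one {B : ℝ → ℝ} {C : ℝ} {w : ℂ} (hB : Measurable B)
    (hC : ∀ t, |B t - 1| ≤ C) (hw : 0 < w.re) :
    laplaceTransform (fun t => B t - 1) w = laplaceTransform B w - 1 / w := by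
  have h_exp : IntegrableOn (fun t : ℝ => Complex.exp (-(w * t))) (Ioi 0) := by
    simpa only [neg_mul] using integrableOn_exp_mul_complex_Ioi (a := -w) (by simpa using hw) 0
  have h_value : ∫ t in Ioi (0 : ℝ), Complex.exp (-(w * t)) = 1 / w := by
    simpa [neg_mul] using integral_exp_mul_complex_Ioi (a := -w) (by simpa using hw) 0
  have h_bound (t : ℝ) : ‖(B t : ℂ)‖ ≤ C + 1 := by
    rw [Complex.norm_real, Real.norm_eq_abs]
    calc |B t| = |B t - 1 + 1| := by rw [sub_add_cancel]
      _ ≤ |B t - 1| + |1| := abs_add_le _ _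
      _ ≤ C + 1 := by rw [abs_one]; gcongr; exact hC t
  have h_int : IntegrableOn (fun t : ℝ => (B t : ℂ) * Complex.exp (-(w * t))) (Ioi 0) :=
    h_exp.bdd_mul (by fun_prop) (Eventually.of_forall h_bound)
  rw [laplaceTransform, laplaceTransform, ← h_value, ← integral_sub h_int h_exp]
  congr 1 with t
  push_cast
  ring

theorem tendsto_psi_div_id : Tendsto (fun x => Chebyshev.psi x / x) atTop (𝓝 1) := by
  have h_ne {w : ℂ} (hw : 0 ≤ w.re) : 1 + w ≠ 0 := fun h => by
    have := congrArg Complex.re h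
    rw [Complex.add_re, Complex.one_re, Complex.zero_re] at this
    linarith
  have h_num : ContinuousOn (fun w => LFunctionResidueClassAux (q := 1) 1 (1 + w) - 1)
      {w | 0 ≤ w.re} :=
    ((continuousOn_LFunctionResidueClassAux (q := 1) 1).comp (f := fun w => 1 + w)
      (by fun_prop) fun w hw => by simpa using hw).sub continuousOn_const
  have h_cont : ContinuousOn (fun w => (LFunctionResidueClassAux (q := 1) 1 (1 + w) - 1) / (1 + w))
      {w | 0 ≤ w.re} :=
    h_num.div (by fun_prop) fun w hw => h_ne hw
  have h_extends : EqOn (laplaceTransform fun t => psiRatioExp t - 1)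
      (fun w => (LFunctionResidueClassAux (q := 1) 1 (1 + w) - 1) / (1 + w)) {w | 0 < w.re} := by
    intro w (hw : 0 < w.re)
    have hw0 : w ≠ 0 := fun h => by simp [h] at hw
    have hw1 := h_ne hw.le
    simp only [laplaceTransform_sub_one measurable_psiRatioExp abs_psiRatioExp_sub_one_le hw,
      LFunctionResidueClassAux_modOne_eq (s := 1 + w) (by simpa using hw),
      LSeries_vonMangoldt_one_add hw, add_sub_cancel_left]
    field_simp
    ring
  refine ((wiener_ikehara measurable_psiRatioExp abs_psiRatioExp_sub_one_le
    monotone_psiRatioExp_mul_exp h_cont h_extends).comp Real.tendsto_log_atTop).congr' ?_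
  filter_upwards [eventually_gt_atTop 0] with x hx
  rw [Function.comp_apply, psiRatioExp, Real.exp_neg, Real.exp_log hx, div_eq_mul_inv]

theorem tendsto_theta_div_id : Tendsto (fun x => Chebyshev.theta x / x) atTop (𝓝 1) := by
  obtain ⟨C, hC⟩ := Chebyshev.psi_sub_theta_le_mul_sqrt
  have h_sqrt : Tendsto (fun x : ℝ => C * (√x)⁻¹) atTop (𝓝 0) := by
    simpa using (tendsto_inv_atTop_zero.comp Real.tendsto_sqrt_atTop).const_mul C
  have h_diff : Tendsto (fun x => (Chebyshev.psi x - Chebyshev.theta x) / x) atTop (𝓝 0) := by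
    refine squeeze_zero' ?_ ?_ h_sqrt
    · filter_upwards [eventually_gt_atTop 0] with x hx
      exact div_nonneg (sub_nonneg.2 (Chebyshev.theta_le_psi x)) hx.le
    · filter_upwards [eventually_gt_atTop 0] with x hx
      rw [div_le_iff₀ hx]
      calc Chebyshev.psi x - Chebyshev.theta x ≤ C * √x := hC x
        _ = C * (√x)⁻¹ * x := by
          rw [mul_assoc, inv_mul_eq_div, Real.div_sqrt]
  simpa only [sub_zero, ← sub_div, sub_sub_cancel] using tendsto_psi_div_id.sub h_diff

end PrimeNumberTheorem

section PolySeries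

open Polynomial

/-- The generating value `∑ q(v) z ^ v` of a polynomial `q`. -/
noncomputable def polySeries (z : ℝ) (q : ℝ[X]) : ℝ := ∑' v : ℕ, q.eval (v : ℝ) * z ^ v

variable {z : ℝ}

lemma summable_eval_mul_pow (hz : ‖z‖ < 1) (q : ℝ[X]) :
    Summable fun v : ℕ => q.eval (v : ℝ) * z ^ v := by
  induction q using Polynomial.induction_on' with
  | add p q hp hq => simpa only [eval_add, add_mul] using hp.add hq
  | monomial n a =>
    simpa only [eval_monomial, mul_assoc] using
      (summable_pow_mul_geometric_of_norm_lt_one n hz).mul_left a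

lemma polySeries_add (hz : ‖z‖ < 1) (p q : ℝ[X]) :
    polySeries z (p + q) = polySeries z p + polySeries z q := by
  simp only [polySeries, eval_add, add_mul]
  exact (summable_eval_mul_pow hz p).tsum_add (summable_eval_mul_pow hz q)

lemma polySeries_C_mul (c : ℝ) (q : ℝ[X]) : polySeries z (C c * q) = c * polySeries z q := by
  simp only [polySeries, eval_mul, eval_C, mul_assoc, tsum_mul_left]

lemma polySeries_eq_eval_zero_add (hz : ‖z‖ < 1) (q : ℝ[X]) :
    polySeries z q = q.eval 0 + z * polySeries z (q.comp (X + 1)) := by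
  rw [polySeries, (summable_eval_mul_pow hz q).tsum_eq_zero_add, polySeries, ← tsum_mul_left]
  congr 1
  · simp
  · congr 1 with v
    simp only [eval_comp, eval_add, eval_X, eval_one, Nat.cast_add, Nat.cast_one, pow_succ]
    ring

lemma polySeries_eq_sum_range_add (hz : ‖z‖ < 1) (q : ℝ[X]) (k : ℕ) :
    polySeries z q = ∑ v ∈ Finset.range k, q.eval (v : ℝ) * z ^ v +
      z ^ k * polySeries z (q.comp (X + C (k : ℝ))) := by
  induction k with
  | zero => simp
  | succ k ih =>
    have h_comp : (q.comp (X + C (k : ℝ))).comp (X + 1) = q.comp (X + C ((k + 1 : ℕ) : ℝ)) := by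
      rw [comp_assoc, add_comp, X_comp, C_comp, add_assoc, Nat.cast_add, Nat.cast_one, C_add, C_1,
        add_comm 1]
    rw [ih, Finset.sum_range_succ, polySeries_eq_eval_zero_add hz (q.comp _), h_comp, eval_comp,
      eval_add, eval_X, eval_C, zero_add]
    ring

lemma hasSum_choose_mul_pow (hz : ‖z‖ < 1) (m d : ℕ) :
    HasSum (fun v : ℕ => (((v + d).choose (m + d) : ℕ) : ℝ) * z ^ v)
      (z ^ m / (1 - z) ^ (m + d + 1)) := by
  have h_initial :
      ∑ i ∈ Finset.range m, (((i + d).choose (m + d) : ℕ) : ℝ) * z ^ i = 0 := by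
    refine Finset.sum_eq_zero fun i hi => ?_
    have := Finset.mem_range.1 hi
    rw [Nat.choose_eq_zero_of_lt (by omega), Nat.cast_zero, zero_mul]
  rw [← hasSum_nat_add_iff' m, h_initial, sub_zero, ← mul_one_div]
  refine ((hasSum_choose_mul_geometric_of_norm_lt_one (m + d) hz).mul_left (z ^ m)).congr_fun
    fun v => ?_
  rw [add_assoc, pow_add]
  ring

end PolySeries

section CentralFactorial

open Polynomial

/-- The central factorial polynomial `∏_{|i| ≤ c} (X - i)`. -/
noncomputable def centralFactorial (c : ℕ) : ℝ[X] :=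
  ∏ i ∈ Finset.Icc (-(c : ℤ)) c, (X - C (i : ℝ))

lemma centralFactorial_zero : centralFactorial 0 = X := by simp [centralFactorial]

lemma centralFactorial_succ (c : ℕ) : centralFactorial (c + 1) =
    (X + C ((c : ℝ) + 1)) * ((X - C ((c : ℝ) + 1)) * centralFactorial c) := by
  have h_Icc : Finset.Icc (-((c + 1 : ℕ) : ℤ)) ((c + 1 : ℕ) : ℤ) =
      insert (-((c + 1 : ℕ) : ℤ)) (insert ((c + 1 : ℕ) : ℤ) (Finset.Icc (-(c : ℤ)) c)) := by
    ext x
    simp only [Finset.mem_Icc, Finset.mem_insert]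
    omega
  rw [centralFactorial, h_Icc, Finset.prod_insert, Finset.prod_insert, centralFactorial]
  · push_cast
    simp only [C_neg, sub_neg_eq_add]
  · simp
  · simp only [Finset.mem_insert, Finset.mem_Icc]
    omega

lemma eval_natCast_centralFactorial (c v : ℕ) :
    (centralFactorial c).eval (v : ℝ) = ((v + c).descFactorial (2 * c + 1) : ℕ) := by
  induction c with
  | zero => simp [centralFactorial_zero]
  | succ c ih =>
    rw [centralFactorial_succ, eval_mul, eval_mul, ih, show 2 * (c + 1) + 1 = 2 * c + 2 + 1 by ring,
      ← add_assoc, Nat.succ_descFactorial_succ, Nat.descFactorial_succ (v + c) (2 * c + 1)]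
    simp only [eval_add, eval_sub, eval_X, eval_C]
    rcases Nat.lt_or_ge c v with h | h
    · rw [show v + c - (2 * c + 1) = v - (c + 1) by omega, Nat.cast_mul, Nat.cast_mul,
        Nat.cast_sub (by omega)]
      push_cast
      ring
    · rw [Nat.descFactorial_of_lt (show v + c < 2 * c + 1 by omega)]
      simp

lemma eval_centralFactorial_eq_zero {c v : ℕ} (h : v ≤ c) :
    (centralFactorial c).eval (v : ℝ) = 0 := by
  rw [eval_natCast_centralFactorial, Nat.descFactorial_of_lt (by omega), Nat.cast_zero]

lemma centralFactorial_comp_neg_X (c : ℕ) :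
    (centralFactorial c).comp (-X) = -centralFactorial c := by
  induction c with
  | zero => simp [centralFactorial_zero]
  | succ c ih =>
    rw [centralFactorial_succ, mul_comp, mul_comp, ih, add_comp, sub_comp, X_comp, C_comp]
    ring

lemma natDegree_centralFactorial (c : ℕ) : (centralFactorial c).natDegree = 2 * c + 1 := by
  rw [centralFactorial, natDegree_prod_of_monic _ _ fun i _ => monic_X_sub_C _]
  simp only [natDegree_X_sub_C, Finset.sum_const, Int.card_Icc, smul_eq_mul]
  omega

/-- A family of integer-valued polynomials of parity `ε` (so `ε = 1` or `ε = -1`), the `c`-th of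
which vanishes on `{0, …, c}` and equals `1` at `c + 1`: polynomials of that parity can be expanded
in it by Newton interpolation. -/
structure IsParityBasis (ε : ℝ) (b : ℕ → ℝ[X]) : Prop where
  natDegree_le (c : ℕ) : (b c).natDegree ≤ 2 * c + 2
  comp_neg_X (c : ℕ) : (b c).comp (-X) = C ε * b c
  exists_int_eval_eq (c v : ℕ) : ∃ m : ℤ, (b c).eval (v : ℝ) = m
  eval_eq_zero {c v : ℕ} : v ≤ c → (b c).eval (v : ℝ) = 0
  eval_succ (c : ℕ) : (b c).eval ((c + 1 : ℕ) : ℝ) = 1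

/-- The odd polynomial taking the value `(v + c).choose (2 * c + 1)` at `v`. -/
noncomputable def oddCentralBinomial (c : ℕ) : ℝ[X] :=
  C (((2 * c + 1).factorial : ℝ)⁻¹) * centralFactorial c

/-- The even polynomial taking at `v` the value
`(v + c + 1).choose (2 * c + 2) + (v + c).choose (2 * c + 2)`. -/
noncomputable def evenCentralBinomial (c : ℕ) : ℝ[X] :=
  C (((c + 1) * (2 * c + 1).factorial : ℝ)⁻¹) * (X * centralFactorial c)

lemma eval_oddCentralBinomial (c v : ℕ) :
    (oddCentralBinomial c).eval (v : ℝ) = ((v + c).choose (2 * c + 1) : ℕ) := by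
  rw [oddCentralBinomial, eval_mul, eval_C, eval_natCast_centralFactorial,
    Nat.descFactorial_eq_factorial_mul_choose, Nat.cast_mul,
    inv_mul_cancel_left₀ (Nat.cast_ne_zero.2 (Nat.factorial_ne_zero _))]

lemma eval_evenCentralBinomial (c v : ℕ) : (evenCentralBinomial c).eval (v : ℝ) =
    (((v + c + 1).choose (2 * c + 2) + (v + c).choose (2 * c + 2) : ℕ) : ℝ) := by
  have h_ratio : ((v + c).choose (2 * c + 2) : ℝ) * (2 * c + 2) =
      (v + c).choose (2 * c + 1) * (v - c - 1) := by
    rcases Nat.lt_or_ge c v with h | h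
    · have h_nat := Nat.choose_succ_right_eq (v + c) (2 * c + 1)
      rw [show v + c - (2 * c + 1) = v - (c + 1) by omega] at h_nat
      have h_real := congrArg (Nat.cast (R := ℝ)) h_nat
      push_cast [Nat.cast_sub (show c + 1 ≤ v by omega)] at h_real
      linarith
    · rw [Nat.choose_eq_zero_of_lt (show v + c < 2 * c + 1 by omega),
        Nat.choose_eq_zero_of_lt (show v + c < 2 * c + 2 by omega)]
      simp
  rw [evenCentralBinomial, eval_mul, eval_C, eval_mul, eval_X, eval_natCast_centralFactorial,
    Nat.descFactorial_eq_factorial_mul_choose, Nat.choose_succ_succ' (v + c) (2 * c + 1),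
    inv_mul_eq_div, div_eq_iff (by positivity)]
  push_cast
  linear_combination -((2 * c + 1).factorial : ℝ) * h_ratio

lemma isParityBasis_oddCentralBinomial : IsParityBasis (-1) oddCentralBinomial where
  natDegree_le c := (natDegree_C_mul_le _ _).trans (by rw [natDegree_centralFactorial]; omega)
  comp_neg_X c := by
    rw [oddCentralBinomial, mul_comp, C_comp, centralFactorial_comp_neg_X, C_neg, C_1]
    ring
  exists_int_eval_eq c v := ⟨((v + c).choose (2 * c + 1) : ℕ), by
    rw [eval_oddCentralBinomial, Int.cast_natCast]⟩
  eval_eq_zero h := by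
    rw [eval_oddCentralBinomial, Nat.choose_eq_zero_of_lt (by omega), Nat.cast_zero]
  eval_succ c := by
    rw [eval_oddCentralBinomial, show c + 1 + c = 2 * c + 1 by ring, Nat.choose_self, Nat.cast_one]

lemma isParityBasis_evenCentralBinomial : IsParityBasis 1 evenCentralBinomial where
  natDegree_le c := by
    refine (natDegree_C_mul_le _ _).trans (natDegree_mul_le.trans ?_)
    rw [natDegree_centralFactorial, natDegree_X]
    omega
  comp_neg_X c := by
    rw [evenCentralBinomial, mul_comp, mul_comp, C_comp, X_comp, centralFactorial_comp_neg_X, C_1]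
    ring
  exists_int_eval_eq c v :=
    ⟨((v + c + 1).choose (2 * c + 2) + (v + c).choose (2 * c + 2) : ℕ), by
      rw [eval_evenCentralBinomial, Int.cast_natCast]⟩
  eval_eq_zero h := by
    rw [eval_evenCentralBinomial, Nat.choose_eq_zero_of_lt (by omega),
      Nat.choose_eq_zero_of_lt (by omega), Nat.cast_zero]
  eval_succ c := by
    rw [eval_evenCentralBinomial, show c + 1 + c + 1 = 2 * c + 2 by ring, Nat.choose_self,
      Nat.choose_eq_zero_of_lt (by omega), Nat.cast_one]

variable {z : ℝ}

lemma pow_div_one_sub_pow_two_mul (z : ℝ) (c : ℕ) :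
    z ^ c / (1 - z) ^ (2 * c) = (z / (1 - z) ^ 2) ^ c := by
  rw [div_pow, ← pow_mul]

lemma polySeries_oddCentralBinomial (hz : ‖z‖ < 1) (c : ℕ) :
    polySeries z (oddCentralBinomial c) = (z / (1 - z) ^ 2) ^ (c + 1) := by
  have h_sum := hasSum_choose_mul_pow hz (c + 1) c
  rw [show c + 1 + c = 2 * c + 1 by ring] at h_sum
  simp only [polySeries, eval_oddCentralBinomial, h_sum.tsum_eq]
  rw [← pow_div_one_sub_pow_two_mul, show 2 * c + 1 + 1 = 2 * (c + 1) by ring]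

lemma polySeries_evenCentralBinomial (hz : ‖z‖ < 1) (c : ℕ) :
    polySeries z (evenCentralBinomial c) = (z / (1 - z) ^ 2) ^ (c + 1) * ((1 + z) / (1 - z)) := by
  have h_upper := hasSum_choose_mul_pow hz (c + 1) (c + 1)
  have h_lower := hasSum_choose_mul_pow hz (c + 2) c
  rw [show c + 1 + (c + 1) = 2 * c + 2 by ring] at h_upper
  simp only [← add_assoc] at h_upper
  rw [show c + 2 + c = 2 * c + 2 by ring] at h_lower
  simp only [polySeries, eval_evenCentralBinomial, Nat.cast_add, add_mul]
  rw [(h_upper.add h_lower).tsum_eq, ← pow_div_one_sub_pow_two_mul, div_mul_div_comm]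
  ring

lemma eq_zero_of_parity {q : ℝ[X]} {ε : ℝ} {c : ℕ} (hdeg : q.natDegree ≤ 2 * c)
    (hpar : q.comp (-X) = C ε * q) (hzero : ∀ v : ℕ, v ≤ c → q.eval (v : ℝ) = 0) : q = 0 := by
  refine eq_zero_of_natDegree_lt_card_of_eval_eq_zero
    (f := fun i : Finset.Icc (-(c : ℤ)) c => ((i : ℤ) : ℝ)) q
    (fun a b h => Subtype.ext (Int.cast_injective h)) ?_ ?_
  · rintro ⟨i, hi⟩
    rw [Finset.mem_Icc] at hi
    obtain ⟨k, rfl | rfl⟩ := i.eq_nat_or_neg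
    · simpa using hzero k (by omega)
    · have h_eval := congrArg (eval (k : ℝ)) hpar
      rw [eval_comp, eval_neg, eval_X, eval_mul, hzero k (by omega), mul_zero] at h_eval
      simpa using h_eval
  · rw [Fintype.card_coe, Int.card_Icc]
    omega

lemma IsParityBasis.eliminate_succ {ε : ℝ} {b : ℕ → ℝ[X]} (hb : IsParityBasis ε b) {g m : ℤ}
    {D c : ℕ} {q : ℝ[X]} (hdeg : q.natDegree ≤ 2 * c + (D + 1)) (hpar : q.comp (-X) = C ε * q)
    (hzero : ∀ v : ℕ, v ≤ c → q.eval (v : ℝ) = 0)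
    (hint : ∀ v : ℕ, ∃ m : ℤ, q.eval (v : ℝ) = g * m)
    (hm : q.eval ((c + 1 : ℕ) : ℝ) = g * m) {q' : ℝ[X]} (hq' : q' = q + C (-(g * m : ℝ)) * b c) :
    q'.natDegree ≤ 2 * (c + 1) + D ∧ q'.comp (-X) = C ε * q' ∧
      (∀ v : ℕ, v ≤ c + 1 → q'.eval (v : ℝ) = 0) ∧
      ∀ v : ℕ, ∃ m : ℤ, q'.eval (v : ℝ) = g * m := by
  subst hq'
  refine ⟨?_, ?_, fun v hv => ?_, fun v => ?_⟩
  · exact (natDegree_add_le _ _).trans (max_le (by omega)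
      ((natDegree_C_mul_le _ _).trans ((hb.natDegree_le c).trans (by omega))))
  · rw [add_comp, mul_comp, C_comp, hb.comp_neg_X, hpar]
    ring
  · rw [eval_add, eval_mul, eval_C]
    rcases hv.lt_or_eq with h | rfl
    · rw [hzero v (by omega), hb.eval_eq_zero (by omega)]
      ring
    · rw [hm, hb.eval_succ]
      ring
  · obtain ⟨k, hk⟩ := hint v
    obtain ⟨l, hl⟩ := hb.exists_int_eval_eq c v
    refine ⟨k - m * l, ?_⟩
    rw [eval_add, eval_mul, eval_C, hk, hl]
    push_cast
    ring

lemma IsParityBasis.exists_polySeries_eq (hz : ‖z‖ < 1) {ε r : ℝ} {s g : ℤ} {b : ℕ → ℝ[X]}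
    (hb : IsParityBasis ε b) (hsum : ∀ c, polySeries z (b c) = (s : ℝ) ^ (c + 1) * r) {c : ℕ}
    {q : ℝ[X]} (hpar : q.comp (-X) = C ε * q) (hzero : ∀ v : ℕ, v ≤ c → q.eval (v : ℝ) = 0)
    (hint : ∀ v : ℕ, ∃ m : ℤ, q.eval (v : ℝ) = g * m) :
    ∃ N : ℤ, polySeries z q = g * s ^ (c + 1) * N * r := by
  obtain ⟨D, hdeg⟩ : ∃ D, q.natDegree ≤ 2 * c + D := ⟨q.natDegree, by omega⟩
  induction D generalizing c q with
  | zero => exact ⟨0, by simp [eq_zero_of_parity hdeg hpar hzero, polySeries]⟩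
  | succ D ih =>
    obtain ⟨m, hm⟩ := hint (c + 1)
    obtain ⟨hdeg', hpar', hzero', hint'⟩ := hb.eliminate_succ hdeg hpar hzero hint hm rfl
    obtain ⟨N, hN⟩ := ih hpar' hzero' hint' hdeg'
    rw [polySeries_add hz, polySeries_C_mul, hsum, pow_succ] at hN
    refine ⟨s * N + m, ?_⟩
    push_cast
    linear_combination hN

lemma exists_polySeries_eq_of_odd (hz : ‖z‖ < 1) {s g : ℤ} (hs : z / (1 - z) ^ 2 = s)
    {c : ℕ} {q : ℝ[X]}
    (hpar : q.comp (-X) = -q) (hzero : ∀ v : ℕ, v ≤ c → q.eval (v : ℝ) = 0)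
    (hint : ∀ v : ℕ, ∃ m : ℤ, q.eval (v : ℝ) = g * m) :
    ∃ N : ℤ, polySeries z q = g * s ^ (c + 1) * N := by
  simpa only [mul_one] using isParityBasis_oddCentralBinomial.exists_polySeries_eq (r := 1) hz
    (fun c => by rw [polySeries_oddCentralBinomial hz, hs, mul_one])
    (by simpa using hpar) hzero hint

lemma exists_polySeries_eq_of_even (hz : ‖z‖ < 1) {s g : ℤ} (hs : z / (1 - z) ^ 2 = s)
    {c : ℕ} {q : ℝ[X]}
    (hpar : q.comp (-X) = q) (hzero : ∀ v : ℕ, v ≤ c → q.eval (v : ℝ) = 0)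
    (hint : ∀ v : ℕ, ∃ m : ℤ, q.eval (v : ℝ) = g * m) :
    ∃ N : ℤ, polySeries z q = g * s ^ (c + 1) * N * ((1 + z) / (1 - z)) :=
  isParityBasis_evenCentralBinomial.exists_polySeries_eq hz
    (fun c => by rw [polySeries_evenCentralBinomial hz, hs]) (by simpa using hpar) hzero hint

end CentralFactorial

section Base

/-- The number `z = (√21 - 1) / (√21 + 1)` whose logarithm times `√21` is `α₁₀`. -/
noncomputable def z21 : ℝ := (√21 - 1) / (√21 + 1)

lemma sq_sqrt_21 : √21 ^ 2 = (21 : ℝ) := Real.sq_sqrt (by norm_num)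

lemma lt_sqrt_21 : 4.582 < √21 := Real.lt_sqrt_of_sq_lt (by norm_num)

lemma sqrt_21_lt : √21 < 4.583 := (Real.sqrt_lt' (by norm_num)).2 (by norm_num)

lemma z21_eq : z21 = (11 - √21) / 10 := by
  have := lt_sqrt_21
  rw [z21, div_eq_div_iff (by linarith) (by norm_num)]
  linear_combination sq_sqrt_21

lemma z21_pos : 0 < z21 := by
  rw [z21_eq]
  linarith [sqrt_21_lt]

lemma z21_lt_one : z21 < 1 := by
  rw [z21_eq]
  linarith [lt_sqrt_21]

lemma norm_z21_lt_one : ‖z21‖ < 1 := by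
  rw [Real.norm_of_nonneg z21_pos.le]
  exact z21_lt_one

lemma z21_div_one_sub_sq : z21 / (1 - z21) ^ 2 = (5 : ℤ) := by
  have h_ne : (1 - z21) ^ 2 ≠ 0 := pow_ne_zero _ (sub_pos.2 z21_lt_one).ne'
  rw [div_eq_iff h_ne, z21_eq]
  push_cast
  linear_combination -(1 / 20) * sq_sqrt_21

lemma one_add_z21_div_one_sub : (1 + z21) / (1 - z21) = √21 := by
  rw [div_eq_iff (sub_pos.2 z21_lt_one).ne', z21_eq]
  linear_combination -(1 / 10) * sq_sqrt_21

end Base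

section Divisibility

open Polynomial

lemma card_filter_pow_dvd_le {p : ℕ} {x : ℤ} {L m : ℕ}
    (hm : ∀ l ∈ (Finset.Ico 1 L).filter fun l => ((p ^ l : ℕ) : ℤ) ∣ x, l ≤ m) :
    ((Finset.Ico 1 L).filter fun l => ((p ^ l : ℕ) : ℤ) ∣ x).card ≤ m := by
  have h_sub : ((Finset.Ico 1 L).filter fun l => ((p ^ l : ℕ) : ℤ) ∣ x) ⊆ Finset.Icc 1 m :=
    fun l hl => Finset.mem_Icc.2 ⟨(Finset.mem_Ico.1 (Finset.mem_filter.1 hl).1).1, hm l hl⟩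
  simpa using Finset.card_le_card h_sub

lemma pow_card_filter_pow_dvd_dvd (p : ℕ) (x : ℤ) (L : ℕ) :
    (p : ℤ) ^ ((Finset.Ico 1 L).filter fun l => ((p ^ l : ℕ) : ℤ) ∣ x).card ∣ x := by
  rcases ((Finset.Ico 1 L).filter fun l => ((p ^ l : ℕ) : ℤ) ∣ x).eq_empty_or_nonempty with h | h
  · rw [h, Finset.card_empty, pow_zero]
    exact one_dvd x
  · have h_dvd := (Finset.mem_filter.1 (Finset.max'_mem _ h)).2
    push_cast at h_dvd
    exact (pow_dvd_pow _ (card_filter_pow_dvd_le fun l hl => Finset.le_max' _ l hl)).trans h_dvd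

lemma pow_sum_dvd_prod {ι : Type*} (p : ℕ) (T : Finset ι) (x : ι → ℤ) (L : ℕ) (c : ℕ → ℕ)
    (h : ∀ l ∈ Finset.Ico 1 L, c l ≤ (T.filter fun i => ((p ^ l : ℕ) : ℤ) ∣ x i).card) :
    (p : ℤ) ^ (∑ l ∈ Finset.Ico 1 L, c l) ∣ ∏ i ∈ T, x i := by
  have h_exp : ∑ l ∈ Finset.Ico 1 L, c l ≤
      ∑ i ∈ T, ((Finset.Ico 1 L).filter fun l => ((p ^ l : ℕ) : ℤ) ∣ x i).card := by
    refine (Finset.sum_le_sum h).trans_eq ?_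
    simp_rw [Finset.card_filter]
    rw [Finset.sum_comm]
  refine (pow_dvd_pow _ h_exp).trans ?_
  rw [← Finset.prod_pow_eq_pow_sum]
  exact Finset.prod_dvd_prod_of_dvd _ _ fun i _ => pow_card_filter_pow_dvd_dvd p (x i) L

lemma dvd_eval_iterate_derivative_prod {ι : Type*} {d v : ℤ} {a : ι → ℤ} {k : ℕ}
    {s : Finset ι} (h : ∀ T ⊆ s, s.card ≤ T.card + k → d ∣ ∏ i ∈ T, (v - a i)) :
    d ∣ (derivative^[k] (∏ i ∈ s, (X - C (a i)))).eval v := by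
  classical
  induction k generalizing s with
  | zero =>
    rw [Function.iterate_zero, id, eval_prod]
    simpa only [eval_sub, eval_X, eval_C] using h s Finset.Subset.rfl le_rfl
  | succ k ih =>
    rw [Function.iterate_succ, Function.comp_apply, derivative_prod_finset]
    simp only [derivative_sub, derivative_X, derivative_C, sub_zero, mul_one]
    rw [iterate_derivative_sum, eval_finsetSum]
    refine Finset.dvd_sum fun i hi => ih fun T hT hcard => h T (hT.trans (s.erase_subset _)) ?_
    rw [Finset.card_erase_of_mem hi] at hcard
    omega

lemma card_filter_dvd_sub {q : ℕ} (hq : 0 < q) (B : ℕ) (v : ℤ) :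
    (((Finset.Icc (-(B : ℤ)) B).filter fun i => (q : ℤ) ∣ v - i).card : ℤ) =
      ((B : ℤ) - v) / q - (-(B : ℤ) - 1 - v) / q := by
  have h_floor (x : ℤ) : ⌊((x - v : ℤ) : ℚ) / (q : ℤ)⌋ = (x - v) / q := by
    simpa only [Int.cast_natCast] using Rat.floor_intCast_div_natCast (x - v) q
  have h_set : ((Finset.Icc (-(B : ℤ)) B).filter fun i => (q : ℤ) ∣ v - i) =
      (Finset.Ioc (-(B : ℤ) - 1) B).filter fun i => i ≡ v [ZMOD q] := by
    ext x
    simp only [Finset.mem_filter, Finset.mem_Icc, Finset.mem_Ioc, Int.modEq_iff_dvd]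
    constructor <;> rintro ⟨h, h_dvd⟩ <;> exact ⟨by omega, h_dvd⟩
  have h_mono : (-(B : ℤ) - 1 - v) / q ≤ (B - v) / q :=
    Int.ediv_le_ediv (Int.natCast_pos.2 hq) (by omega)
  rw [h_set, Int.Ioc_filter_modEq_card _ _ (Int.natCast_pos.2 hq), ← Int.cast_sub, ← Int.cast_sub,
    h_floor, h_floor]
  exact max_eq_left (sub_nonneg.2 h_mono)

lemma div_le_ediv_sub_ediv {q : ℕ} (hq : 0 < q) (B B' : ℕ) (v : ℤ) :
    (((B + B') / q : ℕ) : ℤ) ≤ ((B : ℤ) - v) / q - (-(B' : ℤ) - 1 - v) / q := by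
  have hq' : (0 : ℤ) < q := Int.natCast_pos.2 hq
  rw [le_sub_iff_add_le, Int.le_ediv_iff_mul_le hq', Int.natCast_div, add_mul]
  push_cast
  have h_left := Int.ediv_mul_le ((B : ℤ) + B') hq'.ne'
  have h_right := Int.ediv_mul_le (-(B' : ℤ) - 1 - v) hq'.ne'
  linarith

/-- A lower bound for the number of factors of the product `kernelPoly n` that are divisible by
`q` at an integer point. The four entries of the maximum pair the endpoints of the three root
intervals in different ways. -/
def factorCount (n q : ℕ) : ℕ :=
  max (26 * n / q + 22 * n / q + 18 * n / q) (max (2 * (24 * n / q) + 18 * n / q)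
    (max (3 * (22 * n / q)) (2 * (20 * n / q) + 26 * n / q)))

/-- A common divisor of the values at integers of `kernelPoly n` and of its first two derivatives;
the `- 2` accounts for the two factors that differentiation may remove. -/
noncomputable def kernelDivisor (n : ℕ) : ℕ :=
  ∏ p ∈ Nat.primesLE (26 * n),
    p ^ (∑ l ∈ Finset.Ico 1 (Nat.log p (26 * n) + 1), (factorCount n (p ^ l) - 2))

lemma kernelDivisor_pos (n : ℕ) : 0 < kernelDivisor n :=
  Finset.prod_pos fun _ hp => pow_pos (Nat.prime_of_mem_primesLE hp).pos _

/-- The polynomial `R` of the construction: a product of three central factorials. -/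
noncomputable def kernelPoly (n : ℕ) : ℝ[X] :=
  centralFactorial (13 * n) * centralFactorial (11 * n) * centralFactorial (9 * n)

/-- The roots of `kernelPoly n` with multiplicity, tagged by the factor they come from. -/
noncomputable def kernelRoots (n : ℕ) : Finset ((_ : ℕ) × ℤ) :=
  ({13, 11, 9} : Finset ℕ).sigma fun b => Finset.Icc (-((b * n : ℕ) : ℤ)) (b * n : ℕ)

/-- The polynomial `kernelPoly n` over the integers. -/
noncomputable def intKernelPoly (n : ℕ) : ℤ[X] := ∏ i ∈ kernelRoots n, (X - C i.2)

lemma map_intKernelPoly (n : ℕ) :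
    (intKernelPoly n).map (Int.castRingHom ℝ) = kernelPoly n := by
  rw [intKernelPoly, kernelRoots, Finset.prod_sigma, Finset.prod_insert (by simp),
    Finset.prod_insert (by simp), Finset.prod_singleton]
  simp only [Polynomial.map_mul, Polynomial.map_prod, Polynomial.map_sub, map_X, map_C,
    kernelPoly, centralFactorial, mul_assoc]
  rfl

lemma factorCount_le_card {q : ℕ} (hq : 0 < q) (n : ℕ) (v : ℤ) :
    factorCount n q ≤ ((kernelRoots n).filter fun i => (q : ℤ) ∣ v - i.2).card := by
  have h_card : (((kernelRoots n).filter fun i => (q : ℤ) ∣ v - i.2).card : ℤ) =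
      ∑ b ∈ ({13, 11, 9} : Finset ℕ),
        (((b * n : ℕ) - v) / q - (-((b * n : ℕ) : ℤ) - 1 - v) / q) := by
    simp only [← card_filter_dvd_sub hq, Finset.card_filter, kernelRoots, Finset.sum_sigma,
      Nat.cast_sum]
  rw [Finset.sum_insert (by simp), Finset.sum_insert (by simp), Finset.sum_singleton] at h_card
  have h_pair (b b' : ℕ) : (((b + b') * n / q : ℕ) : ℤ) ≤
      ((b * n : ℕ) - v) / q - (-((b' * n : ℕ) : ℤ) - 1 - v) / q := by
    rw [add_mul]
    exact div_le_ediv_sub_ediv hq _ _ v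
  have h₁₁ := h_pair 13 13
  have h₂₂ := h_pair 11 11
  have h₃₃ := h_pair 9 9
  have h₁₂ := h_pair 13 11
  have h₂₁ := h_pair 11 13
  have h₁₃ := h_pair 13 9
  have h₃₁ := h_pair 9 13
  have h₂₃ := h_pair 11 9
  have h₃₂ := h_pair 9 11
  norm_num only at h₁₁ h₂₂ h₃₃ h₁₂ h₂₁ h₁₃ h₃₁ h₂₃ h₃₂
  refine max_le ?_ (max_le ?_ (max_le ?_ ?_)) <;> zify at * <;> linarith

lemma kernelDivisor_dvd_prod (v : ℤ) {n : ℕ} {T : Finset ((_ : ℕ) × ℤ)} (hT : T ⊆ kernelRoots n)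
    (hcard : (kernelRoots n).card ≤ T.card + 2) :
    (kernelDivisor n : ℤ) ∣ ∏ i ∈ T, (v - i.2) := by
  rw [kernelDivisor, Nat.cast_prod]
  refine Finset.prod_dvd_of_coprime (fun p hp q hq hpq => ?_) fun p hp => ?_
  · have hp' := Nat.prime_of_mem_primesLE hp
    have hq' := Nat.prime_of_mem_primesLE hq
    push_cast
    exact (Nat.isCoprime_iff_coprime.2 ((Nat.coprime_primes hp' hq').2 hpq)).pow
  · have hp' := Nat.prime_of_mem_primesLE hp
    rw [Nat.cast_pow]
    refine pow_sum_dvd_prod p T _ _ _ fun l _ => ?_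
    have h_sub : ((kernelRoots n).filter fun i => ((p ^ l : ℕ) : ℤ) ∣ v - i.2) ⊆
        (T.filter fun i => ((p ^ l : ℕ) : ℤ) ∣ v - i.2) ∪ (kernelRoots n \ T) := by
      intro i
      simp only [Finset.mem_union, Finset.mem_filter, Finset.mem_sdiff]
      tauto
    have h_union := (Finset.card_le_card h_sub).trans (Finset.card_union_le _ _)
    have h_removed := Finset.card_sdiff_of_subset hT
    have h_count := factorCount_le_card (pow_pos hp'.pos l) n v
    omega

lemma kernelDivisor_dvd_eval_iterate_derivative (n : ℕ) (v : ℤ) {k : ℕ} (hk : k ≤ 2) :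
    (kernelDivisor n : ℤ) ∣ (derivative^[k] (intKernelPoly n)).eval v :=
  dvd_eval_iterate_derivative_prod fun _ hT hcard => kernelDivisor_dvd_prod v hT (by omega)

lemma kernelDivisor_dvd_eval_iterate_derivative_mul (n : ℕ) (v : ℤ) (u : ℤ[X]) {k : ℕ}
    (hk : k ≤ 2) : (kernelDivisor n : ℤ) ∣ (derivative^[k] (intKernelPoly n * u)).eval v := by
  rw [iterate_derivative_mul, eval_finsetSum]
  refine Finset.dvd_sum fun i _ => ?_
  rw [eval_smul, eval_mul, nsmul_eq_mul]
  exact ((kernelDivisor_dvd_eval_iterate_derivative n v (by omega)).mul_right _).mul_left _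

end Divisibility

section FactorCountGain

open Finset

/-- The intervals `[a, b)` of values of `51480 * n / p` modulo `51480` on which `factorCount n p`
exceeds the multiplicity of `p` in the product of factorials that `kernelPoly n` is compared with.
Here `51480 = 26 * 1980 = 24 * 2145 = 22 * 2340 = 20 * 2574 = 18 * 2860`. -/
def segments : Finset (ℕ × ℕ) :=
  [(2145, 2340), (2340, 2860), (4290, 4680), (4680, 5720), (6435, 7020), (7020, 7920),
    (7920, 8580), (8580, 9360), (9360, 9900), (10296, 11440), (11440, 11700), (11700, 11880),
    (12870, 13860), (13860, 14040), (14040, 14300), (15015, 15840), (15840, 16380),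
    (16380, 17160), (17160, 17820), (18018, 18720), (18720, 19800), (20592, 21060),
    (21060, 21780), (23166, 23400), (23400, 23760), (27885, 28080), (28080, 28600),
    (30030, 30420), (30420, 31460), (32175, 32760), (32760, 33660), (33660, 34320),
    (34320, 35100), (35100, 35640), (36036, 37180), (37180, 37440), (37440, 37620),
    (38610, 39600), (39600, 39780), (39780, 40040), (40755, 41580), (41580, 42120),
    (42120, 42900), (42900, 43560), (43758, 44460), (44460, 45540), (46332, 46800),
    (46800, 47520), (48906, 49140), (49140, 49500)].toFinset

lemma segments_bounds : ∀ s ∈ segments, 2145 ≤ s.1 ∧ s.1 ≤ s.2 ∧ s.2 ≤ 51480 := by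
  decide +kernel

lemma segments_gain : ∀ s ∈ segments,
    (s.2 - 1) / 1980 + (s.2 - 1) / 2340 + (s.2 - 1) / 2860 + 1 ≤
      max (2 * (s.1 / 2145) + s.1 / 2860)
        (max (3 * (s.1 / 2340)) (2 * (s.1 / 2574) + s.1 / 1980)) := by
  decide +kernel

lemma segments_disjoint : ∀ s ∈ segments, ∀ t ∈ segments, s = t ∨ s.2 ≤ t.1 ∨ t.2 ≤ s.1 := by
  decide +kernel

/-- The number of intervals `[a + 51480 * k, b + 51480 * k)` that contain `y`, where `[a, b)` runs
over `segments` and `k < K`. -/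
def segmentCount (K y : ℕ) : ℕ :=
  ((range K ×ˢ segments).filter fun i =>
    i.2.1 + 51480 * i.1 ≤ y ∧ y < i.2.2 + 51480 * i.1).card

lemma segmentCount_le_one (K y : ℕ) : segmentCount K y ≤ 1 := by
  refine card_le_one.2 fun ⟨k, s⟩ hi ⟨l, t⟩ hj => ?_
  simp only [mem_filter, mem_product] at hi hj
  have h_s := segments_bounds s hi.1.2
  have h_t := segments_bounds t hj.1.2
  have h_kl : k = l := by omega
  subst h_kl
  rcases segments_disjoint s hi.1.2 t hj.1.2 with h | h | h
  · rw [h]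
  · omega
  · omega

lemma gain_of_mem_segment {s : ℕ × ℕ} (hs : s ∈ segments) {k y : ℕ}
    (h_left : s.1 + 51480 * k ≤ y) (h_right : y < s.2 + 51480 * k) :
    y / 1980 + y / 2340 + y / 2860 + 1 ≤
      max (2 * (y / 2145) + y / 2860) (max (3 * (y / 2340)) (2 * (y / 2574) + y / 1980)) := by
  have h_upper : y / 1980 + y / 2340 + y / 2860 ≤
      66 * k + ((s.2 - 1) / 1980 + (s.2 - 1) / 2340 + (s.2 - 1) / 2860) := by
    have h₁ : y / 1980 ≤ 26 * k + (s.2 - 1) / 1980 := by omega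
    have h₂ : y / 2340 ≤ 22 * k + (s.2 - 1) / 2340 := by omega
    have h₃ : y / 2860 ≤ 18 * k + (s.2 - 1) / 2860 := by omega
    linarith
  have h₁ : 24 * k + s.1 / 2145 ≤ y / 2145 := by omega
  have h₂ : 18 * k + s.1 / 2860 ≤ y / 2860 := by omega
  have h₃ : 22 * k + s.1 / 2340 ≤ y / 2340 := by omega
  have h₄ : 20 * k + s.1 / 2574 ≤ y / 2574 := by omega
  have h₅ : 26 * k + s.1 / 1980 ≤ y / 1980 := by omega
  rcases le_max_iff.1 (segments_gain s hs) with h | h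
  · exact le_max_of_le_left (by linarith)
  rcases le_max_iff.1 h with h | h
  · exact le_max_of_le_right (le_max_of_le_left (by linarith))
  · exact le_max_of_le_right (le_max_of_le_right (by linarith))

lemma mul_mul_div_div (c n p : ℕ) {d : ℕ} (hd : 0 < d) : c * d * n / p / d = c * n / p := by
  rw [Nat.div_div_eq_div_mul, mul_right_comm, Nat.mul_div_mul_right _ _ hd]

lemma factorCount_eq (n p : ℕ) : factorCount n p =
    max (51480 * n / p / 1980 + 51480 * n / p / 2340 + 51480 * n / p / 2860)
      (max (2 * (51480 * n / p / 2145) + 51480 * n / p / 2860)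
        (max (3 * (51480 * n / p / 2340))
          (2 * (51480 * n / p / 2574) + 51480 * n / p / 1980))) := by
  rw [factorCount, ← mul_mul_div_div 26 n p (d := 1980) (by simp),
    ← mul_mul_div_div 24 n p (d := 2145) (by simp), ← mul_mul_div_div 22 n p (d := 2340) (by simp),
    ← mul_mul_div_div 20 n p (d := 2574) (by simp), ← mul_mul_div_div 18 n p (d := 2860) (by simp)]

lemma sub_factorCount_add_segmentCount_le {n p : ℕ} (K : ℕ) (hp : 0 < p) (hpn : p ≤ 26 * n) :
    (26 * n / p + 22 * n / p + 18 * n / p) - (factorCount n p - 2) + segmentCount K (51480 * n / p)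
      + (if 51480 * n / p < 2145 then 1 else 0) ≤ 2 := by
  rw [factorCount_eq, ← mul_mul_div_div 26 n p (d := 1980) (by simp),
    ← mul_mul_div_div 22 n p (d := 2340) (by simp), ← mul_mul_div_div 18 n p (d := 2860) (by simp)]
  norm_num only
  have hy : 1980 ≤ 51480 * n / p := (Nat.le_div_iff_mul_le hp).2 (by omega)
  set y := 51480 * n / p
  have h_count := segmentCount_le_one K y
  rcases Nat.eq_zero_or_pos (segmentCount K y) with h_zero | h_pos
  · split_ifs <;> omega
  · obtain ⟨⟨k, s⟩, hi⟩ := card_pos.1 h_pos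
    simp only [mem_filter, mem_product] at hi
    have h_gain := gain_of_mem_segment hi.1.2 hi.2.1 hi.2.2
    have h_s := segments_bounds s hi.1.2
    rw [if_neg (by omega)]
    omega

end FactorCountGain

section FactorialQuotient

open Finset Filter Topology
open scoped Nat

/-- The product of factorials that bounds the values of `kernelPoly n`. -/
def factorialProd (n : ℕ) : ℕ := (26 * n)! * (22 * n)! * (18 * n)!

lemma log_factorial_eq_sum_primesLE {m N : ℕ} (h : m ≤ N) : Real.log (m ! : ℝ) =
    ∑ p ∈ Nat.primesLE N, ((∑ l ∈ Ico 1 (Nat.log p N + 1), m / p ^ l : ℕ) : ℝ) * Real.log p := by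
  rw [Real.log_nat_eq_sum_factorization, Finsupp.sum_of_support_subset (s := Nat.primesLE N)]
  · refine sum_congr rfl fun p hp => ?_
    rw [Nat.factorization_factorial (Nat.prime_of_mem_primesLE hp)
      (Nat.lt_succ_of_le (Nat.log_mono_right h))]
  · intro p hp
    rw [Nat.support_factorization, Nat.mem_primeFactors] at hp
    exact Nat.mem_primesLE.2 ⟨(hp.1.dvd_factorial.1 hp.2.1).trans h, hp.1⟩
  · intro p _
    rw [Nat.cast_zero, zero_mul]

lemma log_factorialProd (n : ℕ) : Real.log (factorialProd n) = ∑ p ∈ Nat.primesLE (26 * n),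
    ((∑ l ∈ Ico 1 (Nat.log p (26 * n) + 1),
      (26 * n / p ^ l + 22 * n / p ^ l + 18 * n / p ^ l) : ℕ) : ℝ) * Real.log p := by
  rw [factorialProd]
  push_cast
  rw [Real.log_mul (by positivity) (by positivity), Real.log_mul (by positivity) (by positivity),
    log_factorial_eq_sum_primesLE le_rfl,
    log_factorial_eq_sum_primesLE (by omega : 22 * n ≤ 26 * n),
    log_factorial_eq_sum_primesLE (by omega : 18 * n ≤ 26 * n),
    ← sum_add_distrib, ← sum_add_distrib]
  simp only [← add_mul, ← Nat.cast_add, ← sum_add_distrib]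
  push_cast
  rfl

lemma log_kernelDivisor (n : ℕ) : Real.log (kernelDivisor n) = ∑ p ∈ Nat.primesLE (26 * n),
    ((∑ l ∈ Ico 1 (Nat.log p (26 * n) + 1), (factorCount n (p ^ l) - 2) : ℕ) : ℝ) *
      Real.log p := by
  rw [kernelDivisor, Nat.cast_prod, Real.log_prod fun p hp =>
    Nat.cast_ne_zero.2 (pow_pos (Nat.prime_of_mem_primesLE hp).pos _).ne']
  simp only [Nat.cast_pow, Real.log_pow]

/-- Chebyshev's `θ` at `51480 * n / a`. -/
noncomputable def thetaDiv (n a : ℕ) : ℝ := Chebyshev.theta (51480 * n / a : ℕ)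

lemma thetaDiv_eq_sum (n : ℕ) {a : ℕ} (ha : 1980 ≤ a) : thetaDiv n a =
    ∑ p ∈ Nat.primesLE (26 * n), (if a ≤ 51480 * n / p then 1 else 0) * Real.log p := by
  have h_primes : Nat.primesLE (51480 * n / a) =
      (Nat.primesLE (26 * n)).filter fun p => a ≤ 51480 * n / p := by
    ext p
    simp only [mem_filter, Nat.mem_primesLE, Nat.le_div_iff_mul_le (by omega : 0 < a)]
    constructor
    · rintro ⟨h, hp⟩
      have h_mul := Nat.mul_le_mul_left p ha
      exact ⟨⟨by omega, hp⟩, (Nat.le_div_iff_mul_le hp.pos).2 (by rwa [mul_comm])⟩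
    · rintro ⟨⟨-, hp⟩, h⟩
      exact ⟨by rw [mul_comm]; exact (Nat.le_div_iff_mul_le hp.pos).1 h, hp⟩
  rw [thetaDiv, Chebyshev.theta_eq_sum_primesLE_log, h_primes, sum_filter]
  simp only [ite_mul, one_mul, zero_mul]

/-- The main term of the upper bound for `log (factorialProd n / kernelDivisor n)`, with the
intervals of `segments` translated by fewer than `K` periods. -/
noncomputable def thetaBound (K n : ℕ) : ℝ :=
  thetaDiv n 1980 + thetaDiv n 2145 - ∑ i ∈ range K ×ˢ segments,
    (thetaDiv n (i.2.1 + 51480 * i.1) - thetaDiv n (i.2.2 + 51480 * i.1))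

lemma segments_bounds_of_mem_product {K : ℕ} {i : ℕ × ℕ × ℕ} (hi : i ∈ range K ×ˢ segments) :
    2145 ≤ i.2.1 ∧ i.2.1 ≤ i.2.2 ∧ i.2.2 ≤ 51480 :=
  segments_bounds _ (mem_product.1 hi).2

lemma cast_segmentCount (K y : ℕ) : (segmentCount K y : ℝ) = ∑ i ∈ range K ×ˢ segments,
    ((if i.2.1 + 51480 * i.1 ≤ y then 1 else 0) - if i.2.2 + 51480 * i.1 ≤ y then 1 else 0) := by
  rw [segmentCount, card_filter, Nat.cast_sum]
  refine sum_congr rfl fun i hi => ?_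
  have h_bounds := segments_bounds_of_mem_product hi
  split_ifs <;> first | omega | norm_num

lemma thetaBound_eq_sum (K n : ℕ) : thetaBound K n = ∑ p ∈ Nat.primesLE (26 * n),
    (2 - (if 51480 * n / p < 2145 then 1 else 0) - segmentCount K (51480 * n / p)) *
      Real.log p := by
  have h_segments : ∑ i ∈ range K ×ˢ segments,
      (thetaDiv n (i.2.1 + 51480 * i.1) - thetaDiv n (i.2.2 + 51480 * i.1)) =
      ∑ p ∈ Nat.primesLE (26 * n), segmentCount K (51480 * n / p) * Real.log p := by
    simp only [cast_segmentCount, sum_mul]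
    rw [sum_comm]
    refine sum_congr rfl fun i hi => ?_
    have h_bounds := segments_bounds_of_mem_product hi
    rw [thetaDiv_eq_sum _ (by omega), thetaDiv_eq_sum _ (by omega), ← sum_sub_distrib]
    simp only [sub_mul]
  rw [thetaBound, h_segments, thetaDiv_eq_sum _ le_rfl, thetaDiv_eq_sum _ (by norm_num),
    ← sum_add_distrib, ← sum_sub_distrib]
  refine sum_congr rfl fun p hp => ?_
  have hp' := Nat.mem_primesLE.1 hp
  rw [if_pos ((Nat.le_div_iff_mul_le hp'.2.pos).2 (by omega)), ← add_mul, ← sub_mul]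
  split_ifs <;> first | omega | norm_num

lemma sum_div_pow_add_le {n p : ℕ} (K : ℕ) (hp : p.Prime) (hpn : p ≤ 26 * n) :
    (∑ l ∈ Ico 1 (Nat.log p (26 * n) + 1), (26 * n / p ^ l + 22 * n / p ^ l + 18 * n / p ^ l)) +
      segmentCount K (51480 * n / p) + (if 51480 * n / p < 2145 then 1 else 0) + 2 ≤
    (∑ l ∈ Ico 1 (Nat.log p (26 * n) + 1), (factorCount n (p ^ l) - 2)) + 2 +
      2 * Nat.log p (26 * n) := by
  have h_log : 1 ≤ Nat.log p (26 * n) := Nat.le_log_of_pow_le hp.one_lt (by rwa [pow_one])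
  have h_first := sub_factorCount_add_segmentCount_le K hp.pos hpn
  have h_rest : (∑ l ∈ Ico 2 (Nat.log p (26 * n) + 1),
      (26 * n / p ^ l + 22 * n / p ^ l + 18 * n / p ^ l)) ≤
      ∑ l ∈ Ico 2 (Nat.log p (26 * n) + 1), (factorCount n (p ^ l) - 2 + 2) := by
    refine sum_le_sum fun l _ => ?_
    have h_max : 26 * n / p ^ l + 22 * n / p ^ l + 18 * n / p ^ l ≤ factorCount n (p ^ l) :=
      le_max_left _ _
    omega
  rw [sum_add_distrib (f := fun l => factorCount n (p ^ l) - 2), sum_const, Nat.card_Ico,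
    smul_eq_mul] at h_rest
  have h_lt : 1 < Nat.log p (26 * n) + 1 := by omega
  rw [sum_eq_sum_Ico_succ_bot h_lt, sum_eq_sum_Ico_succ_bot h_lt, pow_one]
  norm_num only
  omega

lemma log_factorialProd_sub_log_kernelDivisor_le (K n : ℕ) :
    Real.log (factorialProd n) - Real.log (kernelDivisor n) ≤ thetaBound K n +
      2 * (Chebyshev.psi (26 * n : ℕ) - Chebyshev.theta (26 * n : ℕ)) := by
  rw [log_factorialProd, log_kernelDivisor, thetaBound_eq_sum,
    Chebyshev.psi_eq_sum_mul_log_prime, Chebyshev.theta_eq_sum_primesLE_log, ← sum_sub_distrib,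
    ← sum_sub_distrib, mul_sum, ← sum_add_distrib]
  refine sum_le_sum fun p hp => ?_
  obtain ⟨hpn, hp⟩ := Nat.mem_primesLE.1 hp
  have h_count : ((_ : ℕ) : ℝ) ≤ (_ : ℕ) := Nat.cast_le.2 (sum_div_pow_add_le K hp hpn)
  rw [← sub_mul, ← sub_one_mul, ← mul_assoc, ← add_mul]
  refine mul_le_mul_of_nonneg_right ?_ (Real.log_natCast_nonneg p)
  push_cast at h_count ⊢
  linarith

end FactorialQuotient

section FactorialQuotientAsymptotics

open Finset Filter Topology

lemma tendsto_thetaDiv_div {a : ℕ} (ha : 0 < a) :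
    Tendsto (fun n : ℕ => thetaDiv n a / n) atTop (𝓝 (51480 / a)) := by
  have h_lin : Tendsto (fun n : ℕ => (51480 / a : ℝ) * n) atTop atTop :=
    tendsto_natCast_atTop_atTop.const_mul_atTop (by positivity)
  have h_theta := (tendsto_theta_div_id.comp h_lin).const_mul (51480 / a : ℝ)
  rw [mul_one] at h_theta
  refine h_theta.congr' ?_
  filter_upwards [eventually_gt_atTop 0] with n hn
  have h_floor : thetaDiv n a = Chebyshev.theta ((51480 / a : ℝ) * n) := by
    rw [thetaDiv, Chebyshev.theta_eq_theta_coe_floor ((51480 / a : ℝ) * n), div_mul_eq_mul_div,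
      ← Nat.floor_div_eq_div (K := ℝ)]
    push_cast
    rfl
  rw [h_floor, Function.comp_apply]
  field_simp

/-- The contribution to `thetaBoundLimit` of the interval `i.2 ∈ segments` translated by `i.1`
periods. -/
noncomputable def segmentTerm (i : ℕ × ℕ × ℕ) : ℝ :=
  51480 / (i.2.1 + 51480 * i.1 : ℕ) - 51480 / (i.2.2 + 51480 * i.1 : ℕ)

/-- The limit of `thetaBound K n / n` as `n → ∞`. -/
noncomputable def thetaBoundLimit (K : ℕ) : ℝ := 50 - ∑ i ∈ range K ×ˢ segments, segmentTerm i

lemma tendsto_thetaBound_div (K : ℕ) :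
    Tendsto (fun n : ℕ => thetaBound K n / n) atTop (𝓝 (thetaBoundLimit K)) := by
  have h_fifty : (50 : ℝ) = 51480 / (1980 : ℕ) + 51480 / (2145 : ℕ) := by norm_num
  simp only [thetaBound, thetaBoundLimit, h_fifty, sub_div, add_div, sum_div]
  refine ((tendsto_thetaDiv_div (by simp)).add (tendsto_thetaDiv_div (by simp))).sub
    (tendsto_finsetSum _ fun i hi => ?_)
  have h_bounds := segments_bounds_of_mem_product hi
  exact (tendsto_thetaDiv_div (by omega)).sub (tendsto_thetaDiv_div (by omega))

lemma tendsto_psi_sub_theta_div : Tendsto (fun n : ℕ =>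
    2 * (Chebyshev.psi (26 * n : ℕ) - Chebyshev.theta (26 * n : ℕ)) / n) atTop (𝓝 0) := by
  have h_lin : Tendsto (fun n : ℕ => ((26 * n : ℕ) : ℝ)) atTop atTop :=
    tendsto_natCast_atTop_atTop.comp (tendsto_id.const_mul_atTop' (by norm_num))
  have h_diff := ((tendsto_psi_div_id.comp h_lin).sub (tendsto_theta_div_id.comp h_lin)).const_mul
    (52 : ℝ)
  rw [sub_self, mul_zero] at h_diff
  refine h_diff.congr' ?_
  filter_upwards [eventually_gt_atTop 0] with n hn
  simp only [Function.comp_apply]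
  push_cast
  field_simp
  ring

lemma segmentTerm_eq {K : ℕ} {i : ℕ × ℕ × ℕ} (hi : i ∈ range K ×ˢ segments) : segmentTerm i =
    51480 * (i.2.2 - i.2.1) / ((i.2.1 + 51480 * i.1) * (i.2.2 + 51480 * i.1)) := by
  have h_bounds := segments_bounds_of_mem_product hi
  have h_left : (0 : ℝ) < i.2.1 := Nat.cast_pos.2 (by omega)
  have h_right : (0 : ℝ) < i.2.2 := Nat.cast_pos.2 (by omega)
  rw [segmentTerm]
  push_cast
  field_simp
  ring

/-- `10 ^ 10` times the sum of `segmentTerm` over the first 20 periods, each term rounded down. -/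
def headSum : ℕ := ∑ i ∈ range 20 ×ˢ segments, 51480 * 10 ^ 10 * (i.2.2 - i.2.1) /
  ((i.2.1 + 51480 * i.1) * (i.2.2 + 51480 * i.1))

/-- `10 ^ 10` times the sum over `segments` of `tailBound s 20`, each term rounded down. -/
def tailSum : ℕ := ∑ s ∈ segments, 4 * 10 ^ 10 * (s.2 - s.1) / (78 * 51480 + 2 * (s.1 + s.2) + 1287)

lemma le_headSum_add_tailSum : 149884940000 ≤ headSum + tailSum := by decide +kernel

lemma headSum_div_le : (headSum : ℝ) / 10 ^ 10 ≤ ∑ i ∈ range 20 ×ˢ segments, segmentTerm i := by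
  rw [headSum, Nat.cast_sum, sum_div]
  refine sum_le_sum fun i hi => ?_
  rw [segmentTerm_eq hi]
  refine (div_le_div_of_nonneg_right Nat.cast_div_le (by positivity)).trans_eq ?_
  push_cast [Nat.cast_sub (segments_bounds_of_mem_product hi).2.1]
  field_simp
  ring

/-- A telescoping minorant for the tail of the sum of `segmentTerm`: the numbers
`tailBound s k - tailBound s (k + 1)` are at most `segmentTerm (k, s)` once `20 ≤ k`. -/
noncomputable def tailBound (s : ℕ × ℕ) (k : ℕ) : ℝ :=
  4 * (s.2 - s.1) / (4 * 51480 * k - 2 * 51480 + 2 * (s.1 + s.2) + 1287)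

lemma tailBound_sub_le {s : ℕ × ℕ} (hs : s ∈ segments) {k : ℕ} (hk : 20 ≤ k) :
    tailBound s k - tailBound s (k + 1) ≤ segmentTerm (k, s) := by
  rw [segmentTerm_eq (mem_product.2 ⟨self_mem_range_succ k, hs⟩)]
  have h_bounds := segments_bounds s hs
  have h_left : (2145 : ℝ) ≤ s.1 := by exact_mod_cast h_bounds.1
  have h_le : (s.1 : ℝ) ≤ s.2 := by exact_mod_cast h_bounds.2.1
  have hk' : (20 : ℝ) ≤ k := by exact_mod_cast hk
  rw [tailBound, tailBound]
  push_cast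
  generalize (s.1 : ℝ) = a at *
  generalize (s.2 : ℝ) = b at *
  generalize (k : ℝ) = x at *
  have h_pos : 0 < 4 * 51480 * x - 2 * 51480 + 2 * (a + b) + 1287 := by linarith
  have h_pos' : 0 < 4 * 51480 * (x + 1) - 2 * 51480 + 2 * (a + b) + 1287 := by linarith
  have h_denom : 16 * ((a + 51480 * x) * (b + 51480 * x)) ≤
      (4 * 51480 * x - 2 * 51480 + 2 * (a + b) + 1287) *
        (4 * 51480 * (x + 1) - 2 * 51480 + 2 * (a + b) + 1287) := by
    nlinarith [sq_nonneg (a - b)]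
  rw [div_sub_div _ _ h_pos.ne' h_pos'.ne',
    div_le_div_iff₀ (mul_pos h_pos h_pos') (mul_pos (by linarith) (by linarith))]
  have h_mul := mul_le_mul_of_nonneg_left h_denom (by linarith : 0 ≤ (b - a) * 51480)
  linarith

lemma sum_tailBound_sub_le (K : ℕ) :
    ∑ s ∈ segments, tailBound s 20 - ∑ s ∈ segments, tailBound s (K + 20) ≤
      ∑ k ∈ range K, ∑ s ∈ segments, segmentTerm (k + 20, s) := by
  have h_telescope := sum_range_sub' (fun k => ∑ s ∈ segments, tailBound s (k + 20)) K
  simp only [zero_add] at h_telescope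
  rw [← h_telescope]
  refine sum_le_sum fun k _ => ?_
  rw [← sum_sub_distrib]
  refine sum_le_sum fun s hs => ?_
  rw [add_right_comm]
  exact tailBound_sub_le hs (by omega)

lemma tailSum_div_le : (tailSum : ℝ) / 10 ^ 10 ≤ ∑ s ∈ segments, tailBound s 20 := by
  rw [tailSum, Nat.cast_sum, sum_div]
  refine sum_le_sum fun s hs => ?_
  refine (div_le_div_of_nonneg_right Nat.cast_div_le (by positivity)).trans_eq ?_
  rw [tailBound]
  push_cast [Nat.cast_sub (segments_bounds s hs).2.1]
  norm_num only
  field_simp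
  ring

lemma tendsto_sum_tailBound :
    Tendsto (fun K : ℕ => ∑ s ∈ segments, tailBound s (K + 20)) atTop (𝓝 0) := by
  rw [← sum_const_zero (s := segments)]
  refine tendsto_finsetSum _ fun s _ => Tendsto.const_div_atTop ?_ _
  have h_lin : Tendsto (fun K : ℕ => (4 * 51480 : ℝ) * (K + 20 : ℕ)) atTop atTop :=
    (tendsto_natCast_atTop_atTop.comp (tendsto_add_atTop_nat 20)).const_mul_atTop (by norm_num)
  refine (tendsto_atTop_add_const_right atTop
    (-2 * 51480 + 2 * ((s.1 : ℝ) + s.2) + 1287) h_lin).congr fun K => ?_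
  ring

lemma exists_thetaBoundLimit_le : ∃ K, thetaBoundLimit K ≤ 35.011516 := by
  obtain ⟨K, hK⟩ := (tendsto_sum_tailBound.eventually_lt_const
    (by norm_num : (0 : ℝ) < 0.000005)).exists
  refine ⟨20 + K, ?_⟩
  have h_head := headSum_div_le
  have h_tail := (sub_le_sub_right tailSum_div_le _).trans (sum_tailBound_sub_le K)
  have h_num : (149884940000 : ℝ) ≤ headSum + tailSum := by exact_mod_cast le_headSum_add_tailSum
  rw [sum_product] at h_head
  rw [thetaBoundLimit, sum_product, sum_range_add]
  simp_rw [add_comm 20]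
  linarith

lemma eventually_log_factorialProd_sub_log_kernelDivisor_le : ∀ᶠ n : ℕ in atTop,
    Real.log (factorialProd n) - Real.log (kernelDivisor n) ≤ 35.01152 * n := by
  obtain ⟨K, hK⟩ := exists_thetaBoundLimit_le
  have h_lim := (tendsto_thetaBound_div K).add tendsto_psi_sub_theta_div
  rw [add_zero] at h_lim
  filter_upwards [h_lim.eventually_lt_const (by linarith : thetaBoundLimit K < 35.01152),
    eventually_gt_atTop 0] with n h_lt hn
  rw [← add_div, div_lt_iff₀ (Nat.cast_pos.2 hn)] at h_lt
  exact (log_factorialProd_sub_log_kernelDivisor_le K n).trans h_lt.le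

end FactorialQuotientAsymptotics

section SechSquared

open Complex MeasureTheory Set

/-- The kernel `1 / cosh² (π t)` of the contour integral. -/
noncomputable def sechSq (t : ℝ) : ℝ := 1 / Real.cosh (Real.pi * t) ^ 2

lemma sechSq_nonneg (t : ℝ) : 0 ≤ sechSq t := by
  rw [sechSq]
  positivity

lemma continuous_sechSq : Continuous sechSq :=
  continuous_const.div (by fun_prop) fun t => pow_ne_zero 2 (Real.cosh_pos _).ne'

lemma sechSq_le (t : ℝ) : sechSq t ≤ 4 * Real.exp (-(2 * Real.pi * |t|)) := by
  have h_cosh : Real.exp (Real.pi * |t|) / 2 ≤ Real.cosh (Real.pi * t) := by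
    rw [← Real.cosh_abs, abs_mul, abs_of_pos Real.pi_pos, Real.cosh_eq]
    have := Real.exp_pos (-(Real.pi * |t|))
    linarith
  have h_exp : Real.exp (-(2 * Real.pi * |t|)) = 1 / Real.exp (Real.pi * |t|) ^ 2 := by
    rw [← Real.exp_nat_mul, one_div, ← Real.exp_neg]
    push_cast
    ring_nf
  have h_pos := Real.exp_pos (Real.pi * |t|)
  rw [sechSq, h_exp, mul_one_div, div_le_div_iff₀ (by positivity) (by positivity)]
  nlinarith

lemma hasDerivAt_sechSq (t : ℝ) : HasDerivAt sechSq
    (-(2 * Real.pi * Real.sinh (Real.pi * t) / Real.cosh (Real.pi * t)) * sechSq t) t := by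
  have h_cosh : HasDerivAt (fun t : ℝ => Real.cosh (Real.pi * t))
      (Real.sinh (Real.pi * t) * (Real.pi * 1)) t := ((hasDerivAt_id t).const_mul Real.pi).cosh
  have h_inv := (h_cosh.fun_pow 2).fun_inv (pow_pos (Real.cosh_pos _) 2).ne'
  simp only [← one_div] at h_inv
  refine h_inv.congr_deriv ?_
  rw [sechSq, Nat.add_one_sub_one]
  field_simp
  push_cast
  ring

lemma abs_deriv_sechSq_le (t : ℝ) :
    |-(2 * Real.pi * Real.sinh (Real.pi * t) / Real.cosh (Real.pi * t)) * sechSq t| ≤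
      2 * Real.pi * sechSq t := by
  have h_sinh : |Real.sinh (Real.pi * t)| ≤ Real.cosh (Real.pi * t) := by
    rw [Real.abs_sinh, ← Real.cosh_abs]
    exact (Real.sinh_lt_cosh _).le
  rw [abs_mul, abs_of_nonneg (sechSq_nonneg t), abs_neg, abs_div, abs_mul,
    abs_of_pos Real.two_pi_pos, abs_of_pos (Real.cosh_pos _)]
  refine mul_le_mul_of_nonneg_right ?_ (sechSq_nonneg t)
  rw [div_le_iff₀ (Real.cosh_pos _)]
  exact mul_le_mul_of_nonneg_left h_sinh Real.two_pi_pos.le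

lemma hasDerivAt_sigmoid_two_pi_mul (t : ℝ) :
    HasDerivAt (fun t => Real.sigmoid (2 * Real.pi * t)) (Real.pi / 2 * sechSq t) t := by
  have h_lin : HasDerivAt (fun t => 2 * Real.pi * t) (2 * Real.pi) t := by
    simpa only [mul_one, id] using (hasDerivAt_id t).const_mul (2 * Real.pi)
  refine ((Real.hasDerivAt_sigmoid _).comp t h_lin).congr_deriv ?_
  have h_exp : Real.exp (-(2 * Real.pi * t)) = Real.exp (-(Real.pi * t)) ^ 2 := by
    rw [← Real.exp_nat_mul]
    push_cast
    ring_nf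
  rw [← Real.sigmoid_neg, ← Real.sigmoid_mul_rexp_neg, Real.sigmoid_def, sechSq, Real.cosh_eq,
    h_exp, ← neg_neg (Real.pi * t), Real.exp_neg (-(Real.pi * t)), neg_neg]
  field

-- The substitution `x = sigmoid (2 * π * t)` in the beta integral.
lemma betaIntegral_one_add_one_sub (a : ℂ) : betaIntegral (1 + a) (1 - a) =
    ∫ t : ℝ, cexp (2 * Real.pi * t * a) * ((Real.pi / 2 * sechSq t : ℝ) : ℂ) := by
  have h_image : (fun t => Real.sigmoid (2 * Real.pi * t)) '' univ = Ioo 0 1 := by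
    rw [image_univ, ← Real.range_sigmoid]
    exact (mul_left_surjective₀ Real.two_pi_pos.ne').range_comp Real.sigmoid
  have h_inj : Function.Injective fun t => Real.sigmoid (2 * Real.pi * t) :=
    Real.sigmoid_injective.comp (mul_right_injective₀ Real.two_pi_pos.ne')
  rw [betaIntegral, intervalIntegral.integral_of_le zero_le_one, integral_Ioc_eq_integral_Ioo,
    ← h_image, integral_image_eq_integral_abs_deriv_smul MeasurableSet.univ
      (fun t _ => (hasDerivAt_sigmoid_two_pi_mul t).hasDerivWithinAt) h_inj.injOn,
    Measure.restrict_univ]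
  refine integral_congr_ae (.of_forall fun t => ?_)
  have h_deriv : 0 ≤ Real.pi / 2 * sechSq t :=
    mul_nonneg Real.pi_div_two_pos.le (sechSq_nonneg t)
  have h_pos := Real.sigmoid_pos (2 * Real.pi * t)
  have h_exp := Real.exp_pos (-(2 * Real.pi * t))
  have h_sub : (1 : ℂ) - (Real.sigmoid (2 * Real.pi * t) : ℝ) =
      (Real.exp (-(2 * Real.pi * t)) : ℝ) * (Real.sigmoid (2 * Real.pi * t) : ℝ) := by
    rw [← ofReal_mul, mul_comm (Real.exp _), Real.sigmoid_mul_rexp_neg, Real.sigmoid_neg]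
    push_cast
    rfl
  simp only [abs_of_nonneg h_deriv, real_smul]
  rw [mul_comm, h_sub, add_sub_cancel_left, sub_sub_cancel_left,
    mul_cpow_ofReal_nonneg h_exp.le h_pos.le, mul_left_comm,
    ← cpow_add _ _ (ofReal_ne_zero.2 h_pos.ne'), add_neg_cancel, cpow_zero, mul_one,
    cpow_def_of_ne_zero (ofReal_ne_zero.2 h_exp.ne'), ← ofReal_log h_exp.le, Real.log_exp]
  push_cast
  ring_nf

lemma integral_exp_mul_sechSq {w : ℝ} (hw : w ≠ 0) :
    ∫ t : ℝ, cexp (w * (t * I)) * sechSq t = ((w / (Real.pi * Real.sinh (w / 2)) : ℝ) : ℂ) := by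
  have hpi : (Real.pi : ℂ) ≠ 0 := ofReal_ne_zero.2 Real.pi_ne_zero
  have h_sinh : Complex.sinh (w / 2) ≠ 0 := by
    have h_real : Real.sinh (w / 2) ≠ 0 := Real.sinh_ne_zero.2 (by simpa using hw)
    exact_mod_cast h_real
  set a : ℂ := ((w / (2 * Real.pi) : ℝ) : ℂ) * I with ha
  have h_re : a.re = 0 := by rw [ha, re_ofReal_mul, I_re, mul_zero]
  have h_ne : a ≠ 0 := mul_ne_zero
    (ofReal_ne_zero.2 (div_ne_zero hw Real.two_pi_pos.ne')) I_ne_zero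
  have h_beta := Gamma_mul_Gamma_eq_betaIntegral (s := 1 + a) (t := 1 - a) (by simp [h_re])
    (by simp [h_re])
  have h_sin : Complex.sin (Real.pi * a) = Complex.sinh (w / 2) * I := by
    rw [← Complex.sin_mul_I, ha]
    push_cast
    congr 1
    field_simp
  have h_two : Gamma 2 = 1 := by simp
  rw [add_add_sub_cancel, one_add_one_eq_two, h_two, one_mul, add_comm 1 a,
    Gamma_add_one a h_ne, mul_assoc, Gamma_mul_Gamma_one_sub, add_comm a 1,
    betaIntegral_one_add_one_sub, h_sin] at h_beta
  have h_integrand (t : ℝ) : cexp (w * (t * I)) * sechSq t =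
      2 / Real.pi * (cexp (2 * Real.pi * t * a) * ((Real.pi / 2 * sechSq t : ℝ) : ℂ)) := by
    have h_arg : 2 * Real.pi * t * a = w * (t * I) := by
      rw [ha]
      push_cast
      field_simp
    rw [h_arg]
    push_cast
    field_simp
  simp_rw [h_integrand]
  rw [integral_const_mul, ← h_beta, ha]
  push_cast
  field_simp

lemma integrable_pow_mul_exp_neg_mul_abs {c δ : ℝ} (hc : 0 ≤ c) (hδ : 0 < δ) (d : ℕ) :
    Integrable fun t : ℝ => (c + |t|) ^ d * Real.exp (-(δ * |t|)) := by
  refine (integrable_inv_one_add_sq.const_mul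
    ((d + 2).factorial / δ ^ (d + 2) * Real.exp (δ * (c + 1)))).mono'
    (by fun_prop) (.of_forall fun t => ?_)
  have ht := abs_nonneg t
  rw [Real.norm_of_nonneg (by positivity), ← div_eq_mul_inv, le_div_iff₀ (by positivity)]
  have h_pow : (c + 1 + |t|) ^ (d + 2) ≤
      (d + 2).factorial / δ ^ (d + 2) * Real.exp (δ * (c + 1 + |t|)) := by
    have := Real.pow_div_factorial_le_exp (δ * (c + 1 + |t|)) (by positivity) (d + 2)
    rw [div_le_iff₀ (by positivity), mul_pow] at this
    rw [div_mul_eq_mul_div, le_div_iff₀ (by positivity)]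
    linarith
  calc (c + |t|) ^ d * Real.exp (-(δ * |t|)) * (1 + t ^ 2)
      ≤ (c + 1 + |t|) ^ d * Real.exp (-(δ * |t|)) * (c + 1 + |t|) ^ 2 := by
        gcongr ?_ ^ d * _ * ?_
        · linarith
        · nlinarith [sq_abs t]
    _ = (c + 1 + |t|) ^ (d + 2) * Real.exp (-(δ * |t|)) := by ring
    _ ≤ (d + 2).factorial / δ ^ (d + 2) * Real.exp (δ * (c + 1 + |t|)) *
          Real.exp (-(δ * |t|)) := by gcongr
    _ = (d + 2).factorial / δ ^ (d + 2) * Real.exp (δ * (c + 1)) := by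
        rw [mul_assoc, ← Real.exp_add]
        ring_nf

lemma integrable_pow_mul_sechSq {c : ℝ} (hc : 0 ≤ c) (d : ℕ) :
    Integrable fun t : ℝ => (c + |t|) ^ d * sechSq t := by
  refine ((integrable_pow_mul_exp_neg_mul_abs hc Real.two_pi_pos d).const_mul 4).mono'
    ((by fun_prop : Continuous fun t : ℝ => (c + |t|) ^ d).mul
      continuous_sechSq).aestronglyMeasurable (.of_forall fun t => ?_)
  rw [Real.norm_of_nonneg (mul_nonneg (by positivity) (sechSq_nonneg t)), mul_left_comm]
  exact mul_le_mul_of_nonneg_left (sechSq_le t) (by positivity)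

end SechSquared

section SechTransform

open Complex MeasureTheory Polynomial Filter Topology Set

/-- The integrand `q(s) e^{ws}` on the vertical line, at `s = c + it`. -/
noncomputable def polyExp (q : ℝ[X]) (c w t : ℝ) : ℂ :=
  aeval ((c : ℂ) + t * I) q * cexp (w * ((c : ℂ) + t * I))

lemma hasDerivAt_polyExp (q : ℝ[X]) (c w t : ℝ) :
    HasDerivAt (polyExp q c w) (I * polyExp (derivative q + C w * q) c w t) t := by
  have h_line : HasDerivAt (fun t : ℝ => (c : ℂ) + t * I) (1 * I) t :=
    (ofRealCLM.hasDerivAt.mul_const I).const_add _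
  have h_poly := ((q.hasDerivAt_aeval ((c : ℂ) + t * I)).comp t h_line)
  refine (h_poly.mul (h_line.const_mul (w : ℂ)).cexp).congr_deriv ?_
  simp only [polyExp, map_add, map_mul, aeval_C, coe_algebraMap, Function.comp_apply]
  ring

lemma continuous_polyExp (q : ℝ[X]) (c w : ℝ) : Continuous (polyExp q c w) :=
  continuous_iff_continuousAt.2 fun t => (hasDerivAt_polyExp q c w t).continuousAt

lemma norm_polyExp (q : ℝ[X]) (c w t : ℝ) :
    ‖polyExp q c w t‖ = ‖aeval ((c : ℂ) + t * I) q‖ * Real.exp (w * c) := by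
  rw [polyExp, norm_mul, norm_exp, re_ofReal_mul, add_re, ofReal_re, re_ofReal_mul, I_re,
    mul_zero, add_zero]

lemma norm_polyExp_mul_sechSq (q : ℝ[X]) (c w t : ℝ) :
    ‖polyExp q c w t * sechSq t‖ = ‖polyExp q c w t‖ * sechSq t := by
  rw [norm_mul, norm_real, Real.norm_of_nonneg (sechSq_nonneg t)]

lemma integrable_norm_aeval_mul_sechSq (q : ℝ[X]) (c : ℝ) :
    Integrable fun t : ℝ => ‖aeval ((c : ℂ) + t * I) q‖ * sechSq t := by
  have h_meas (q : ℝ[X]) : AEStronglyMeasurable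
      (fun t : ℝ => ‖aeval ((c : ℂ) + t * I) q‖ * sechSq t) volume := by
    have := q.continuous_aeval (A := ℂ)
    have := continuous_sechSq
    exact Continuous.aestronglyMeasurable (by fun_prop)
  induction q using Polynomial.induction_on' with
  | add p q hp hq =>
    refine (hp.add hq).mono' (h_meas _) (.of_forall fun t => ?_)
    rw [Real.norm_of_nonneg (mul_nonneg (norm_nonneg _) (sechSq_nonneg t)), map_add,
      Pi.add_apply, ← add_mul]
    exact mul_le_mul_of_nonneg_right (norm_add_le _ _) (sechSq_nonneg t)
  | monomial d a =>
    refine ((integrable_pow_mul_sechSq (abs_nonneg c) d).const_mul |a|).mono' (h_meas _)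
      (.of_forall fun t => ?_)
    have h_line : ‖(c : ℂ) + t * I‖ ≤ |c| + |t| := by
      refine (norm_add_le _ _).trans_eq ?_
      rw [norm_mul, norm_I, mul_one, norm_real, norm_real, Real.norm_eq_abs, Real.norm_eq_abs]
    rw [Real.norm_of_nonneg (mul_nonneg (norm_nonneg _) (sechSq_nonneg t)), aeval_monomial,
      norm_mul, norm_pow, coe_algebraMap, norm_real, Real.norm_eq_abs, mul_assoc]
    have := sechSq_nonneg t
    gcongr

lemma integrable_norm_polyExp_mul_sechSq (q : ℝ[X]) (c w : ℝ) :
    Integrable fun t => ‖polyExp q c w t‖ * sechSq t := by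
  simp_rw [norm_polyExp, mul_right_comm]
  exact (integrable_norm_aeval_mul_sechSq q c).mul_const _

lemma integrable_polyExp_mul_sechSq (q : ℝ[X]) (c w : ℝ) :
    Integrable fun t => polyExp q c w t * sechSq t := by
  refine (integrable_norm_polyExp_mul_sechSq q c w).mono' ?_
    (.of_forall fun t => (norm_polyExp_mul_sechSq q c w t).le)
  exact ((continuous_polyExp q c w).mul
    (continuous_ofReal.comp continuous_sechSq)).aestronglyMeasurable

lemma hasDerivAt_integral_polyExp_mul_sechSq (q : ℝ[X]) (c w : ℝ) :
    HasDerivAt (fun w => ∫ t, polyExp q c w t * sechSq t)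
      (∫ t, polyExp (X * q) c w t * sechSq t) w := by
  refine (hasDerivAt_integral_of_dominated_loc_of_deriv_le
    (F' := fun w t : ℝ => polyExp (X * q) c w t * sechSq t)
    (bound := fun t : ℝ => ‖aeval ((c : ℂ) + t * I) (X * q)‖ * sechSq t *
      Real.exp ((|w| + 1) * |c|)) (Metric.ball_mem_nhds w one_pos)
    (.of_forall fun x => (integrable_polyExp_mul_sechSq q c x).aestronglyMeasurable)
    (integrable_polyExp_mul_sechSq q c w)
    (integrable_polyExp_mul_sechSq (X * q) c w).aestronglyMeasurable
    (.of_forall fun t x hx => ?_)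
    ((integrable_norm_aeval_mul_sechSq (X * q) c).mul_const _)
    (.of_forall fun t x _ => ?_)).2
  · rw [norm_polyExp_mul_sechSq, norm_polyExp, mul_right_comm]
    have h_abs : |x| ≤ |w| + 1 := by
      have h_ball : |x - w| < 1 := hx
      have := abs_sub_abs_le_abs_sub x w
      linarith
    refine mul_le_mul_of_nonneg_left (Real.exp_le_exp.2 ?_)
      (mul_nonneg (norm_nonneg _) (sechSq_nonneg t))
    calc x * c ≤ |x * c| := le_abs_self _
      _ = |x| * |c| := abs_mul x c
      _ ≤ (|w| + 1) * |c| := mul_le_mul_of_nonneg_right h_abs (abs_nonneg c)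
  · have h_lin : HasDerivAt (fun x : ℝ => (x : ℂ) * ((c : ℂ) + t * I))
        (1 * ((c : ℂ) + t * I)) x := ofRealCLM.hasDerivAt.mul_const _
    refine ((h_lin.cexp.const_mul (aeval ((c : ℂ) + t * I) q)).mul_const
      (sechSq t : ℂ)).congr_deriv ?_
    rw [polyExp, map_mul, aeval_X]
    ring

/-- The derivative of `x ↦ q(x) e^{wx}`, in expanded form. -/
noncomputable def derivMulExp (q : ℝ[X]) (w x : ℝ) : ℝ :=
  (q.derivative.eval x + w * q.eval x) * Real.exp (w * x)

lemma summable_eval_mul_exp (q : ℝ[X]) (k : ℕ) {w : ℝ} (hw : w < 0) :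
    Summable fun v : ℕ => |q.eval ((v + k : ℕ) : ℝ)| * Real.exp (w * (v + k : ℕ)) := by
  have h_norm : ‖Real.exp w‖ < 1 := by
    rw [Real.norm_of_nonneg (Real.exp_pos _).le]
    exact Real.exp_lt_one_iff.2 hw
  refine ((summable_nat_add_iff k).2 (summable_eval_mul_pow h_norm q).abs).congr fun v => ?_
  rw [abs_mul, abs_of_nonneg (pow_pos (Real.exp_pos w) _).le, ← Real.exp_nat_mul,
    mul_comm w]

lemma summable_derivMulExp (q : ℝ[X]) (k : ℕ) {w : ℝ} (hw : w < 0) :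
    Summable fun v : ℕ => derivMulExp q w (v + k : ℕ) := by
  refine Summable.of_norm_bounded ((summable_eval_mul_exp q.derivative k hw).add
    ((summable_eval_mul_exp q k hw).mul_left |w|)) fun v => ?_
  rw [derivMulExp, norm_mul, Real.norm_of_nonneg (Real.exp_pos _).le, ← mul_assoc, ← add_mul,
    ← abs_mul]
  exact mul_le_mul_of_nonneg_right (abs_add_le _ _) (Real.exp_pos _).le

lemma hasDerivAt_tsum_derivMulExp (q : ℝ[X]) (k : ℕ) {w : ℝ} (hw : w < 0) :
    HasDerivAt (fun w => ∑' v : ℕ, derivMulExp q w (v + k : ℕ))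
      (∑' v : ℕ, derivMulExp (X * q) w (v + k : ℕ)) w := by
  have h_half : w / 2 < 0 := by linarith
  have h_mem : w ∈ Ioo (2 * w) (w / 2) := ⟨by linarith, by linarith⟩
  refine hasDerivAt_tsum_of_isPreconnected (g := fun (v : ℕ) w => derivMulExp q w (v + k : ℕ))
    (g' := fun (v : ℕ) w => derivMulExp (X * q) w (v + k : ℕ))
    ((summable_eval_mul_exp (derivative (X * q)) k h_half).add
      ((summable_eval_mul_exp (X * q) k h_half).mul_left (-(2 * w))))
    isOpen_Ioo isPreconnected_Ioo (fun v y _ => ?_) (fun v y hy => ?_) h_mem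
    (summable_derivMulExp q k hw) h_mem
  · have h_exp : HasDerivAt (fun y : ℝ => y * ((v + k : ℕ) : ℝ)) (1 * ((v + k : ℕ) : ℝ)) y :=
      (hasDerivAt_id y).mul_const _
    have h_lin := ((hasDerivAt_id y).mul_const (q.eval ((v + k : ℕ) : ℝ))).const_add
      (q.derivative.eval ((v + k : ℕ) : ℝ))
    refine (h_lin.mul h_exp.exp).congr_deriv ?_
    simp only [derivMulExp, derivative_mul, derivative_X, eval_add, eval_mul, eval_X, eval_one,
      id]
    ring
  · have h_abs : |y| ≤ -(2 * w) := by
      rw [abs_of_neg (by linarith [hy.2])]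
      linarith [hy.1]
    rw [derivMulExp, norm_mul, Real.norm_of_nonneg (Real.exp_pos _).le, ← mul_assoc, ← add_mul]
    refine mul_le_mul ((abs_add_le _ _).trans ?_) (Real.exp_le_exp.2 ?_) (Real.exp_pos _).le
      (add_nonneg (abs_nonneg _) (mul_nonneg (by linarith) (abs_nonneg _)))
    · rw [abs_mul]
      gcongr
    · exact mul_le_mul_of_nonneg_right hy.2.le (Nat.cast_nonneg _)

lemma tsum_derivMulExp_C (a : ℝ) (m : ℕ) {w : ℝ} (hw : w < 0) :
    ((∑' v : ℕ, derivMulExp (C a) w (v + (m + 1) : ℕ) : ℝ) : ℂ) =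
      -(Real.pi / 2) * ∫ t, polyExp (C a) (m + 1 / 2) w t * sechSq t := by
  have h_term (v : ℕ) : derivMulExp (C a) w (v + (m + 1) : ℕ) =
      a * w * Real.exp (w * (m + 1)) * Real.exp w ^ v := by
    rw [derivMulExp, derivative_C, eval_zero, eval_C, zero_add, ← Real.exp_nat_mul,
      mul_assoc (a * w), ← Real.exp_add]
    push_cast
    ring_nf
  have h_integrand (t : ℝ) : polyExp (C a) (m + 1 / 2) w t * sechSq t =
      ((a * Real.exp (w * (m + 1 / 2)) : ℝ) : ℂ) * (cexp (w * (t * I)) * sechSq t) := by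
    rw [polyExp, aeval_C, coe_algebraMap, mul_add, Complex.exp_add]
    push_cast
    ring
  have h_exp : Real.exp (w * (m + 1)) = Real.exp (w * (m + 1 / 2)) * Real.exp (w / 2) := by
    rw [← Real.exp_add]
    ring_nf
  have h_denom : 1 - Real.exp w = -(2 * Real.sinh (w / 2) * Real.exp (w / 2)) := by
    have h_sq : Real.exp w = Real.exp (w / 2) * Real.exp (w / 2) := by
      rw [← Real.exp_add, add_halves]
    have h_one : Real.exp (-(w / 2)) * Real.exp (w / 2) = 1 := by
      rw [← Real.exp_add, neg_add_cancel, Real.exp_zero]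
    rw [Real.sinh_eq]
    linear_combination -h_sq - h_one
  have h_sinh : Real.sinh (w / 2) ≠ 0 := Real.sinh_ne_zero.2 (by linarith)
  simp_rw [h_term, h_integrand]
  rw [tsum_mul_left, tsum_geometric_of_lt_one (Real.exp_pos _).le (Real.exp_lt_one_iff.2 hw),
    integral_const_mul, integral_exp_mul_sechSq hw.ne]
  norm_cast
  rw [Nat.cast_add_one, h_exp, h_denom]
  field_simp

-- Both sides are additive in `q`, and multiplying `q` by `X` differentiates both sides in `w`.
lemma tsum_derivMulExp_eq_integral (q : ℝ[X]) (m : ℕ) : ∀ w : ℝ, w < 0 →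
    ((∑' v : ℕ, derivMulExp q w (v + (m + 1) : ℕ) : ℝ) : ℂ) =
      -(Real.pi / 2) * ∫ t, polyExp q (m + 1 / 2) w t * sechSq t := by
  induction q using Polynomial.induction_on with
  | C a => exact fun w => tsum_derivMulExp_C a m
  | add p q hp hq =>
    intro w hw
    have h_term (x : ℝ) : derivMulExp (p + q) w x = derivMulExp p w x + derivMulExp q w x := by
      simp only [derivMulExp, derivative_add, eval_add]
      ring
    have h_integrand (t : ℝ) : polyExp (p + q) (m + 1 / 2) w t * sechSq t =
        polyExp p (m + 1 / 2) w t * sechSq t + polyExp q (m + 1 / 2) w t * sechSq t := by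
      simp only [polyExp, map_add]
      ring
    simp_rw [h_term, h_integrand]
    rw [(summable_derivMulExp p _ hw).tsum_add (summable_derivMulExp q _ hw),
      integral_add (integrable_polyExp_mul_sechSq _ _ _) (integrable_polyExp_mul_sechSq _ _ _),
      ofReal_add, hp w hw, hq w hw, mul_add]
  | monomial n a ih =>
    intro w hw
    have h_series := (hasDerivAt_tsum_derivMulExp (C a * X ^ n) (m + 1) hw).ofReal_comp
    have h_integral := (hasDerivAt_integral_polyExp_mul_sechSq (C a * X ^ n)
      (m + 1 / 2) w).const_mul (-(Real.pi / 2 : ℂ))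
    rw [pow_succ', mul_left_comm]
    refine h_series.unique (h_integral.congr_of_eventuallyEq ?_)
    filter_upwards [Iio_mem_nhds hw] with x hx using ih x hx

lemma polySeries_derivative_add_eq_integral {z : ℝ} (hz₀ : 0 < z) (hz₁ : z < 1) {q : ℝ[X]} {m : ℕ}
    (h_root : ∀ v ≤ m, q.eval (v : ℝ) = 0)
    (h_root' : ∀ v ≤ m, q.derivative.eval (v : ℝ) = 0) :
    ((polySeries z q.derivative + Real.log z * polySeries z q : ℝ) : ℂ) =
      -(Real.pi / 2) * ∫ t, polyExp q (m + 1 / 2) (Real.log z) t * sechSq t := by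
  have hz : ‖z‖ < 1 := by rwa [Real.norm_of_nonneg hz₀.le]
  rw [← tsum_derivMulExp_eq_integral q m _ (Real.log_neg hz₀ hz₁), ← polySeries_C_mul,
    ← polySeries_add hz, polySeries,
    ← (summable_eval_mul_pow hz _).sum_add_tsum_nat_add (m + 1), Finset.sum_eq_zero, zero_add]
  · congr 1
    refine tsum_congr fun v => ?_
    rw [derivMulExp, mul_comm (Real.log z) ((v + (m + 1) : ℕ) : ℝ), Real.exp_nat_mul,
      Real.exp_log hz₀, eval_add, eval_C_mul]
  · intro v hv
    have hv' : v ≤ m := Nat.lt_succ_iff.1 (Finset.mem_range.1 hv)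
    rw [eval_add, eval_C_mul, h_root v hv', h_root' v hv', mul_zero, add_zero, zero_mul]

lemma norm_integral_polyExp_mul_sechSq_le (q : ℝ[X]) (c w : ℝ) :
    ‖∫ t, polyExp q c w t * sechSq t‖ ≤ ∫ t, ‖polyExp q c w t‖ * sechSq t := by
  simp_rw [← norm_polyExp_mul_sechSq]
  exact norm_integral_le_integral_norm _

lemma norm_integral_polyExp_derivative_add_le (q : ℝ[X]) (c w : ℝ) :
    ‖∫ t, polyExp (derivative q + C w * q) c w t * sechSq t‖ ≤
      2 * Real.pi * ∫ t, ‖polyExp q c w t‖ * sechSq t := by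
  set sechSq' : ℝ → ℝ :=
    fun t => -(2 * Real.pi * Real.sinh (Real.pi * t) / Real.cosh (Real.pi * t)) * sechSq t
  have h_cont : Continuous sechSq' :=
    (Continuous.div (by fun_prop) (by fun_prop) fun t => (Real.cosh_pos _).ne').neg.mul
      continuous_sechSq
  have h_le (t : ℝ) : ‖(sechSq' t : ℂ) * polyExp q c w t‖ ≤
      2 * Real.pi * (‖polyExp q c w t‖ * sechSq t) := by
    rw [norm_mul, norm_real, Real.norm_eq_abs, mul_comm ‖_‖, ← mul_assoc]
    exact mul_le_mul_of_nonneg_right (abs_deriv_sechSq_le t) (norm_nonneg _)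
  have h_bound := (integrable_norm_polyExp_mul_sechSq q c w).const_mul (2 * Real.pi)
  have h_parts := integral_mul_deriv_eq_deriv_mul_of_integrable
    (u := fun t => (sechSq t : ℂ)) (u' := fun t => (sechSq' t : ℂ))
    (fun t _ => (hasDerivAt_sechSq t).ofReal_comp) (fun t _ => hasDerivAt_polyExp q c w t)
    (((integrable_polyExp_mul_sechSq (derivative q + C w * q) c w).const_mul I).congr
      (.of_forall fun t => by simp only [Pi.mul_apply]; ring))
    (h_bound.mono' ((continuous_ofReal.comp h_cont).mul
      (continuous_polyExp q c w)).aestronglyMeasurable (.of_forall h_le))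
    ((integrable_polyExp_mul_sechSq q c w).congr (.of_forall fun t => mul_comm _ _))
  have h_factor : ∫ t, polyExp (derivative q + C w * q) c w t * sechSq t =
      -I * ∫ t, (sechSq t : ℂ) * (I * polyExp (derivative q + C w * q) c w t) := by
    rw [← integral_const_mul]
    refine integral_congr_ae (.of_forall fun t => ?_)
    linear_combination ((sechSq t : ℂ) * polyExp (derivative q + C w * q) c w t) * I_mul_I
  rw [h_factor, h_parts, norm_mul, norm_neg, norm_I, one_mul, norm_neg, ← integral_const_mul]
  exact norm_integral_le_of_norm_le h_bound (.of_forall h_le)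

lemma abs_polySeries_derivative_add_le {z : ℝ} (hz₀ : 0 < z) (hz₁ : z < 1) {q : ℝ[X]} {m : ℕ}
    (h_root : ∀ k ≤ 1, ∀ v ≤ m, (derivative^[k] q).eval (v : ℝ) = 0) :
    |polySeries z q.derivative + Real.log z * polySeries z q| ≤
      Real.pi / 2 * ∫ t, ‖polyExp q (m + 1 / 2) (Real.log z) t‖ * sechSq t := by
  rw [← Real.norm_eq_abs, ← norm_real, polySeries_derivative_add_eq_integral (q := q) hz₀ hz₁
    (h_root 0 zero_le_one) (h_root 1 le_rfl), norm_mul, norm_neg, norm_div, norm_real,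
    Real.norm_of_nonneg Real.pi_pos.le, RCLike.norm_ofNat]
  exact mul_le_mul_of_nonneg_left (norm_integral_polyExp_mul_sechSq_le _ _ _)
    Real.pi_div_two_pos.le

lemma abs_polySeries_derivative_derivative_add_le {z : ℝ} (hz₀ : 0 < z) (hz₁ : z < 1)
    {q : ℝ[X]} {m : ℕ} (h_root : ∀ k ≤ 2, ∀ v ≤ m, (derivative^[k] q).eval (v : ℝ) = 0) :
    |polySeries z q.derivative.derivative + 2 * Real.log z * polySeries z q.derivative +
        Real.log z ^ 2 * polySeries z q| ≤
      Real.pi ^ 2 * ∫ t, ‖polyExp q (m + 1 / 2) (Real.log z) t‖ * sechSq t := by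
  have hz : ‖z‖ < 1 := by rwa [Real.norm_of_nonneg hz₀.le]
  set w := Real.log z
  have h₀ : ∀ v ≤ m, q.eval (v : ℝ) = 0 := h_root 0 zero_le_two
  have h₁ : ∀ v ≤ m, q.derivative.eval (v : ℝ) = 0 := h_root 1 one_le_two
  have h_deriv : derivative (derivative q + C w * q) = derivative^[2] q + C w * derivative q := by
    rw [derivative_add, derivative_C_mul, Function.iterate_succ_apply, Function.iterate_one]
  have h_series : polySeries z q.derivative.derivative + 2 * w * polySeries z q.derivative +
      w ^ 2 * polySeries z q =
      polySeries z (derivative (derivative q + C w * q)) +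
        w * polySeries z (derivative q + C w * q) := by
    rw [h_deriv, polySeries_add hz, polySeries_add hz, polySeries_C_mul, polySeries_C_mul,
      Function.iterate_succ_apply, Function.iterate_one]
    ring
  rw [h_series, ← Real.norm_eq_abs, ← norm_real, polySeries_derivative_add_eq_integral hz₀ hz₁,
    norm_mul, norm_neg, norm_div, norm_real, Real.norm_of_nonneg Real.pi_pos.le,
    RCLike.norm_ofNat]
  · calc _ ≤ Real.pi / 2 * (2 * Real.pi * ∫ t, ‖polyExp q (m + 1 / 2) w t‖ * sechSq t) :=
        mul_le_mul_of_nonneg_left (norm_integral_polyExp_derivative_add_le _ _ _)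
          Real.pi_div_two_pos.le
      _ = _ := by ring
  · intro v hv
    rw [eval_add, eval_C_mul, h₀ v hv, h₁ v hv]
    ring
  · intro v hv
    rw [h_deriv, eval_add, eval_C_mul, h₁ v hv, h_root 2 le_rfl v hv]
    ring

end SechTransform

section GammaVerticalBound

open Complex Filter MeasureTheory Set Topology

lemma aestronglyMeasurable_cpow_mul_exp_neg_mul (b r : ℂ) :
    AEStronglyMeasurable (fun t : ℝ => (t : ℂ) ^ b * cexp (-(r * t)))
      (volume.restrict (Ioi 0)) := by
  refine ContinuousOn.aestronglyMeasurable (fun t ht => ?_) measurableSet_Ioi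
  exact ((continuousAt_ofReal_cpow_const _ _ (Or.inr (ne_of_gt ht))).mul
    (by fun_prop)).continuousWithinAt

lemma norm_cpow_mul_exp_neg_mul (b r : ℂ) {t : ℝ} (ht : 0 < t) :
    ‖(t : ℂ) ^ b * cexp (-(r * t))‖ = t ^ b.re * Real.exp (-(r.re * t)) := by
  rw [norm_mul, norm_cpow_eq_rpow_re_of_pos ht, norm_exp, neg_re, re_mul_ofReal]

lemma integrableOn_rpow_mul_exp_neg_mul {s δ : ℝ} (hs : -1 < s) (hδ : 0 < δ) :
    IntegrableOn (fun t : ℝ => t ^ s * Real.exp (-(δ * t))) (Ioi 0) := by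
  simpa only [Real.rpow_one, neg_mul] using
    integrableOn_rpow_mul_exp_neg_mul_rpow (p := 1) hs one_pos hδ

lemma integrableOn_cpow_mul_exp_neg_mul {b r : ℂ} (hb : -1 < b.re) (hr : 0 < r.re) :
    IntegrableOn (fun t : ℝ => (t : ℂ) ^ b * cexp (-(r * t))) (Ioi 0) := by
  refine (integrableOn_rpow_mul_exp_neg_mul hb hr).mono'
    (aestronglyMeasurable_cpow_mul_exp_neg_mul b r) ?_
  exact (ae_restrict_iff' measurableSet_Ioi).2 <| .of_forall fun t ht =>
    (norm_cpow_mul_exp_neg_mul b r ht).le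

lemma differentiableAt_integral_cpow_mul_exp_neg_mul {b r : ℂ} (hb : -1 < b.re) (hr : 0 < r.re) :
    DifferentiableAt ℂ (fun r : ℂ => ∫ t : ℝ in Ioi 0, (t : ℂ) ^ b * cexp (-(r * t))) r := by
  have h_cpow {t : ℝ} (ht : t ∈ Ioi (0 : ℝ)) (w : ℂ) :
      (t : ℂ) ^ b * t * cexp (-(w * t)) = (t : ℂ) ^ (b + 1) * cexp (-(w * t)) := by
    rw [cpow_add _ _ (ofReal_ne_zero.2 (ne_of_gt ht)), cpow_one]
  refine (hasDerivAt_integral_of_dominated_loc_of_deriv_le (μ := volume.restrict (Ioi (0 : ℝ)))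
    (F' := fun (w : ℂ) (t : ℝ) => -((t : ℂ) ^ b * t * cexp (-(w * t))))
    (s := {w : ℂ | r.re / 2 < w.re})
    (bound := fun t => t ^ (b + 1).re * Real.exp (-(r.re / 2 * t)))
    ((isOpen_lt continuous_const continuous_re).mem_nhds (half_lt_self hr))
    (.of_forall fun w => aestronglyMeasurable_cpow_mul_exp_neg_mul b w)
    (integrableOn_cpow_mul_exp_neg_mul hb hr) ?_ ?_ ?_ ?_).2.differentiableAt
  · refine (aestronglyMeasurable_cpow_mul_exp_neg_mul (b + 1) r).neg.congr ?_
    refine (ae_restrict_iff' measurableSet_Ioi).2 (.of_forall fun t ht => ?_)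
    simp only [Pi.neg_apply, h_cpow ht]
  · refine (ae_restrict_iff' measurableSet_Ioi).2 (.of_forall fun t ht w hw => ?_)
    have h_pos : (0 : ℝ) < t := ht
    rw [norm_neg, h_cpow ht, norm_cpow_mul_exp_neg_mul _ _ ht]
    gcongr
    exact le_of_lt hw
  · exact integrableOn_rpow_mul_exp_neg_mul (by rw [add_re, one_re]; linarith) (half_pos hr)
  · refine .of_forall fun t w _ => ?_
    refine (((hasDerivAt_id w).mul_const (t : ℂ)).fun_neg.cexp.const_mul
      ((t : ℂ) ^ b)).congr_deriv ?_
    simp only [id_eq]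
    ring

-- Both sides are holomorphic in the right half-plane and agree on the positive reals.
lemma integral_cpow_mul_exp_neg_mul_Ioi_of_re_pos {a r : ℂ} (ha : 0 < a.re) (hr : 0 < r.re) :
    ∫ t : ℝ in Ioi 0, (t : ℂ) ^ (a - 1) * cexp (-(r * t)) = (1 / r) ^ a * Complex.Gamma a := by
  have h_open : IsOpen {r : ℂ | 0 < r.re} := isOpen_lt continuous_const continuous_re
  have h_left : DifferentiableOn ℂ
      (fun r : ℂ => ∫ t : ℝ in Ioi 0, (t : ℂ) ^ (a - 1) * cexp (-(r * t))) {r : ℂ | 0 < r.re} :=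
    fun w hw => (differentiableAt_integral_cpow_mul_exp_neg_mul
      (by rw [sub_re, one_re]; linarith) hw).differentiableWithinAt
  have h_right : DifferentiableOn ℂ (fun r : ℂ => (1 / r) ^ a * Complex.Gamma a)
      {r : ℂ | 0 < r.re} := by
    intro w hw
    have h_ne : w ≠ 0 := by
      rintro rfl
      exact lt_irrefl (0 : ℝ) hw
    refine (DifferentiableAt.mul_const (DifferentiableAt.cpow
      ((differentiableAt_const _).div differentiableAt_id h_ne) (differentiableAt_const _)
      ?_) _).differentiableWithinAt
    change 1 / w ∈ slitPlane
    rw [one_div, mem_slitPlane_iff, inv_re]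
    exact Or.inl <| div_pos hw (normSq_pos.2 h_ne)
  have h_seq : Tendsto (fun n : ℕ => ((1 + 1 / ((n : ℝ) + 1) : ℝ) : ℂ)) atTop (𝓝[≠] 1) := by
    refine tendsto_nhdsWithin_iff.2 ⟨?_, .of_forall fun n => ?_⟩
    · simpa [Function.comp_def] using (continuous_ofReal.tendsto _).comp
        (tendsto_one_div_add_atTop_nhds_zero_nat.const_add (1 : ℝ))
    · have : 1 + 1 / ((n : ℝ) + 1) ≠ 1 := by
        rw [ne_eq, add_eq_left]
        positivity
      exact mem_compl_singleton_iff.2 (by exact_mod_cast this)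
  exact (h_left.analyticOnNhd h_open).eqOn_of_preconnected_of_frequently_eq
    (h_right.analyticOnNhd h_open) (convex_halfSpace_re_gt 0).isPreconnected
    (z₀ := 1) (by simp) (h_seq.frequently <| .of_forall fun n =>
      integral_cpow_mul_exp_neg_mul_Ioi ha (by positivity)) hr

-- Rotate the ray of integration in Euler's integral by the angle `± θ`.
lemma norm_Gamma_le {θ x : ℝ} (hθ₀ : 0 ≤ θ) (hθ : θ < Real.pi / 2) (hx : 0 < x) (y : ℝ) :
    ‖Complex.Gamma (x + y * I)‖ ≤
      Real.exp (-(θ * |y|)) * (Real.Gamma x / Real.cos θ ^ x) := by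
  have := Real.pi_pos
  have h_cos : 0 < Real.cos θ := Real.cos_pos_of_mem_Ioo ⟨by linarith, hθ⟩
  obtain ⟨φ, h_mul, h_cos_eq, h_gt, h_lt⟩ :
      ∃ φ : ℝ, φ * y = θ * |y| ∧ Real.cos φ = Real.cos θ ∧ -Real.pi < φ ∧ φ < Real.pi := by
    rcases le_total 0 y with h | h
    · exact ⟨θ, by rw [abs_of_nonneg h], rfl, by linarith, by linarith⟩
    · exact ⟨-θ, by rw [abs_of_nonpos h]; ring, Real.cos_neg θ, by linarith, by linarith⟩
  have h_re : (cexp (φ * I)).re = Real.cos θ := by rw [exp_ofReal_mul_I_re, h_cos_eq]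
  have h_Gamma := integral_cpow_mul_exp_neg_mul_Ioi_of_re_pos (a := x + y * I)
    (r := cexp (φ * I)) (by simpa using hx) (by rwa [h_re])
  have h_rot : ‖(1 / cexp (φ * I)) ^ ((x : ℂ) + y * I)‖ = Real.exp (θ * |y|) := by
    rw [one_div, ← exp_neg, cpow_def_of_ne_zero (exp_ne_zero _), log_exp, norm_exp, ← h_mul]
    · simp
    · simpa using h_lt
    · simpa using (by linarith : -φ ≤ Real.pi)
  have h_int : ‖∫ t : ℝ in Ioi 0, (t : ℂ) ^ ((x : ℂ) + y * I - 1) * cexp (-(cexp (φ * I) * t))‖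
      ≤ ∫ t : ℝ in Ioi 0, t ^ (x - 1) * Real.exp (-(Real.cos θ * t)) := by
    refine (norm_integral_le_integral_norm _).trans_eq
      (setIntegral_congr_fun measurableSet_Ioi fun t ht => ?_)
    rw [norm_cpow_mul_exp_neg_mul _ _ ht, h_re]
    simp
  rw [h_Gamma, norm_mul, h_rot, Real.integral_rpow_mul_exp_neg_mul_Ioi hx h_cos,
    Real.div_rpow zero_le_one h_cos.le, Real.one_rpow, one_div_mul_eq_div] at h_int
  rwa [Real.exp_neg, ← div_eq_inv_mul, le_div_iff₀' (Real.exp_pos _)]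

lemma Gamma_div_rpow_le_factorial_div_pow {x y : ℝ} {n d : ℕ} (hx : 2 ≤ x) (hn : x ≤ n + 1)
    (hd : x ≤ d) (hy₀ : 0 < y) (hy : y ≤ 1) :
    Real.Gamma x / y ^ x ≤ n.factorial / y ^ d := by
  refine div_le_div₀ (by positivity) ?_ (by positivity) ?_
  · rw [← Real.Gamma_nat_eq_factorial]
    exact Real.Gamma_strictMonoOn_Ici.monotoneOn hx (hx.trans hn) hn
  · rw [← Real.rpow_natCast]
    exact Real.rpow_le_rpow_of_exponent_ge hy₀ hy hd

lemma norm_Gamma_le_factorial_div_pow {θ x : ℝ} {n d : ℕ} (hθ : θ ∈ Ico 0 (Real.pi / 2))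
    (hx : 2 ≤ x) (hn : x ≤ n + 1) (hd : x ≤ d) (y : ℝ) :
    ‖Complex.Gamma (x + y * I)‖ ≤
      Real.exp (-(θ * |y|)) * (n.factorial / Real.cos θ ^ d) := by
  refine (norm_Gamma_le hθ.1 hθ.2 (by linarith) y).trans
    (mul_le_mul_of_nonneg_left ?_ (Real.exp_pos _).le)
  exact Gamma_div_rpow_le_factorial_div_pow hx hn hd
    (Real.cos_pos_of_mem_Ioo ⟨by linarith [hθ.1, Real.pi_pos], hθ.2⟩) (Real.cos_le_one _)

lemma norm_sin_pi_mul_add_half (m : ℕ) (t : ℝ) :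
    ‖Complex.sin (Real.pi * (((m + 1 / 2 : ℝ) : ℂ) + t * I))‖ = Real.cosh (Real.pi * t) := by
  have h_arg : (Real.pi : ℂ) * (((m + 1 / 2 : ℝ) : ℂ) + t * I) =
      ((Real.pi * t : ℝ) : ℂ) * I + m * Real.pi + Real.pi / 2 := by
    push_cast
    ring
  rw [h_arg, sin_add_pi_div_two, cos_antiperiodic.add_nat_mul_eq, cos_mul_I, norm_mul,
    ← ofReal_cosh, norm_real, Real.norm_of_nonneg (Real.cosh_pos _).le, norm_pow, norm_neg,
    norm_one, one_pow, one_mul]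

lemma Gamma_mul_Gamma_mul_sin_eq_centralFactorial {s : ℂ} (hs : ∀ n : ℤ, s ≠ n) (c : ℕ) :
    Complex.Gamma (c + 1 + s) * Complex.Gamma (c + 1 - s) * Complex.sin (Real.pi * s) =
      (-1) ^ c * Real.pi * Polynomial.aeval s (centralFactorial c) := by
  induction c with
  | zero =>
    have h_sin : Complex.sin (Real.pi * s) ≠ 0 := by
      rw [sin_ne_zero_iff]
      intro k hk
      rw [mul_comm (k : ℂ)] at hk
      exact hs k (mul_left_cancel₀ (ofReal_ne_zero.2 Real.pi_ne_zero) hk)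
    rw [centralFactorial_zero, Polynomial.aeval_X, Nat.cast_zero, zero_add, add_comm 1 s,
      Gamma_add_one s (by simpa using hs 0), mul_assoc s, Complex.Gamma_mul_Gamma_one_sub,
      mul_assoc, div_mul_cancel₀ _ h_sin]
    ring
  | succ c ih =>
    have h_add : (c : ℂ) + 1 + s ≠ 0 := fun h =>
      hs (-(c + 1)) (by push_cast; linear_combination h)
    have h_sub : (c : ℂ) + 1 - s ≠ 0 := fun h =>
      hs (c + 1) (by push_cast; linear_combination -h)
    rw [show ((c + 1 : ℕ) : ℂ) + 1 + s = (c + 1 + s) + 1 by push_cast; ring,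
      show ((c + 1 : ℕ) : ℂ) + 1 - s = (c + 1 - s) + 1 by push_cast; ring,
      Gamma_add_one _ h_add, Gamma_add_one _ h_sub, centralFactorial_succ]
    simp only [map_add, map_sub, map_mul, Polynomial.aeval_X, Polynomial.aeval_C, coe_algebraMap]
    push_cast
    linear_combination ((c : ℂ) + 1 + s) * (c + 1 - s) * ih

lemma add_half_add_mul_I_ne_intCast (m : ℕ) (t : ℝ) (n : ℤ) :
    ((m + 1 / 2 : ℝ) : ℂ) + t * I ≠ n := by
  intro h
  have h_re : (m + 1 / 2 : ℝ) = n := by simpa using congrArg re h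
  have : ((2 * m + 1 : ℤ) : ℝ) = ((2 * n : ℤ) : ℝ) := by
    push_cast
    linarith
  have : (2 * m + 1 : ℤ) = 2 * n := by exact_mod_cast this
  lia

lemma norm_aeval_centralFactorial_le {m c : ℕ} (hc : m + 2 ≤ c) {θ₁ θ₂ : ℝ}
    (hθ₁ : θ₁ ∈ Ico 0 (Real.pi / 2)) (hθ₂ : θ₂ ∈ Ico 0 (Real.pi / 2)) (t : ℝ) :
    ‖Polynomial.aeval (((m + 1 / 2 : ℝ) : ℂ) + t * I) (centralFactorial c)‖ ≤
      Real.exp (-((θ₁ + θ₂) * |t|)) *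
        (((c + m + 1).factorial / Real.cos θ₁ ^ (c + m + 2)) *
          ((c - m).factorial / Real.cos θ₂ ^ (c - m + 2))) * Real.cosh (Real.pi * t) := by
  set s : ℂ := ((m + 1 / 2 : ℝ) : ℂ) + t * I with hs
  have h_sub : ((c - m : ℕ) : ℝ) = c - m := Nat.cast_sub (by lia)
  have h_two : (2 : ℝ) ≤ ((c - m : ℕ) : ℝ) := by exact_mod_cast (by lia : 2 ≤ c - m)
  have : (0 : ℝ) ≤ m := Nat.cast_nonneg m
  have h_cos : 0 < Real.cos θ₁ :=
    Real.cos_pos_of_mem_Ioo ⟨by linarith [hθ₁.1, Real.pi_pos], hθ₁.2⟩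
  have h_add_bound : ‖Complex.Gamma (c + 1 + s)‖ ≤ Real.exp (-(θ₁ * |t|)) *
      ((c + m + 1).factorial / Real.cos θ₁ ^ (c + m + 2)) := by
    rw [show (c : ℂ) + 1 + s = ((c + m + 3 / 2 : ℝ) : ℂ) + t * I by rw [hs]; push_cast; ring]
    exact norm_Gamma_le_factorial_div_pow hθ₁ (by linarith) (by push_cast; linarith)
      (by push_cast; linarith) t
  have h_sub_bound : ‖Complex.Gamma (c + 1 - s)‖ ≤ Real.exp (-(θ₂ * |t|)) *
      ((c - m).factorial / Real.cos θ₂ ^ (c - m + 2)) := by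
    rw [show (c : ℂ) + 1 - s = (((c - m : ℕ) + 1 / 2 : ℝ) : ℂ) + (-t : ℝ) * I by
      rw [hs, h_sub]; push_cast; ring, ← abs_neg t]
    exact norm_Gamma_le_factorial_div_pow hθ₂ (by linarith) (by linarith)
      (by push_cast; linarith) (-t)
  have h_norm := congrArg norm (Gamma_mul_Gamma_mul_sin_eq_centralFactorial
    (add_half_add_mul_I_ne_intCast m t) c)
  rw [norm_mul, norm_mul, norm_mul, norm_mul, norm_sin_pi_mul_add_half, norm_pow, norm_neg,
    norm_one, one_pow, one_mul, norm_real, Real.norm_of_nonneg Real.pi_pos.le] at h_norm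
  calc ‖Polynomial.aeval s (centralFactorial c)‖
      ≤ Real.pi * ‖Polynomial.aeval s (centralFactorial c)‖ :=
        le_mul_of_one_le_left (norm_nonneg _) (by linarith [Real.pi_gt_three])
    _ = ‖Complex.Gamma (c + 1 + s)‖ * ‖Complex.Gamma (c + 1 - s)‖ * Real.cosh (Real.pi * t) :=
        h_norm.symm
    _ ≤ (Real.exp (-(θ₁ * |t|)) * ((c + m + 1).factorial / Real.cos θ₁ ^ (c + m + 2))) *
          (Real.exp (-(θ₂ * |t|)) * ((c - m).factorial / Real.cos θ₂ ^ (c - m + 2))) *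
          Real.cosh (Real.pi * t) := by
        gcongr
    _ = _ := by
        rw [add_mul, neg_add, Real.exp_add]
        ring

end GammaVerticalBound

section ExpRate

open Filter Topology

/-- `f k = k ^ (d k) e ^ ((ℓ + o(1)) k)`: the growth scale of the factorials, on which the sizes of
the approximations are compared. -/
def HasExpRate (f : ℕ → ℝ) (d ℓ : ℝ) : Prop :=
  (∀ᶠ k in atTop, 0 < f k) ∧
    Tendsto (fun k : ℕ => (Real.log (f k) - d * k * Real.log k) / k) atTop (𝓝 ℓ)

variable {f g : ℕ → ℝ} {d d' ℓ ℓ' : ℝ}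

lemma HasExpRate.mul (hf : HasExpRate f d ℓ) (hg : HasExpRate g d' ℓ') :
    HasExpRate (fun k => f k * g k) (d + d') (ℓ + ℓ') := by
  refine ⟨by filter_upwards [hf.1, hg.1] with k using mul_pos, (hf.2.add hg.2).congr' ?_⟩
  filter_upwards [hf.1, hg.1] with k h_f h_g
  rw [Real.log_mul h_f.ne' h_g.ne']
  ring

lemma HasExpRate.inv (hf : HasExpRate f d ℓ) : HasExpRate (fun k => (f k)⁻¹) (-d) (-ℓ) := by
  refine ⟨hf.1.mono fun k => inv_pos.2, hf.2.neg.congr fun k => ?_⟩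
  rw [Real.log_inv]
  ring

lemma HasExpRate.div (hf : HasExpRate f d ℓ) (hg : HasExpRate g d' ℓ') :
    HasExpRate (fun k => f k / g k) (d - d') (ℓ - ℓ') := by
  simpa only [div_eq_mul_inv, sub_eq_add_neg] using hf.mul hg.inv

lemma hasExpRate_const {c : ℝ} (hc : 0 < c) : HasExpRate (fun _ => c) 0 0 :=
  ⟨.of_forall fun _ => hc, by simpa using tendsto_const_div_atTop_nhds_zero_nat (Real.log c)⟩

lemma hasExpRate_pow {c : ℝ} (hc : 0 < c) (a : ℕ) :
    HasExpRate (fun k => c ^ (a * k)) 0 (a * Real.log c) := by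
  refine ⟨.of_forall fun k => pow_pos hc _, tendsto_const_nhds.congr' ?_⟩
  filter_upwards [eventually_ne_atTop 0] with k hk
  have : (k : ℝ) ≠ 0 := Nat.cast_ne_zero.2 hk
  rw [Real.log_pow]
  push_cast
  field_simp
  ring

lemma tendsto_log_natCast_div : Tendsto (fun k : ℕ => Real.log k / k) atTop (𝓝 0) :=
  Real.isLittleO_log_id_atTop.tendsto_div_nhds_zero.comp tendsto_natCast_atTop_atTop

lemma hasExpRate_natCast_mul_add_one (a : ℕ) :
    HasExpRate (fun k => ((a * k : ℕ) : ℝ) + 1) 0 0 := by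
  refine ⟨.of_forall fun k => by positivity, ?_⟩
  have h_upper : Tendsto (fun k : ℕ => Real.log ((a : ℝ) + 1) / k + Real.log (k : ℝ) / k) atTop
      (𝓝 0) := by
    simpa only [add_zero] using
      (tendsto_const_div_atTop_nhds_zero_nat _).add tendsto_log_natCast_div
  simp only [zero_mul, sub_zero]
  refine tendsto_of_tendsto_of_tendsto_of_le_of_le' tendsto_const_nhds h_upper
    (.of_forall fun k => div_nonneg (Real.log_nonneg ?_) k.cast_nonneg) ?_
  · exact le_add_of_nonneg_left (Nat.cast_nonneg _)
  · filter_upwards [eventually_ge_atTop 1] with k hk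
    have : (1 : ℝ) ≤ k := by exact_mod_cast hk
    rw [← add_div, ← Real.log_mul (by positivity) (by positivity)]
    gcongr
    push_cast
    linarith

lemma hasExpRate_factorial {a : ℕ} (ha : 0 < a) :
    HasExpRate (fun k => ((a * k).factorial : ℝ)) a (a * Real.log a - a) := by
  refine ⟨.of_forall fun k => by positivity, ?_⟩
  have h_stirling : Tendsto (fun k : ℕ => Real.log (Stirling.stirlingSeq (a * k)) / k) atTop
      (𝓝 0) := by
    have h_log : Tendsto (fun n : ℕ => Real.log (Stirling.stirlingSeq n)) atTop
        (𝓝 (Real.log √Real.pi)) :=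
      (Real.continuousAt_log (Real.sqrt_ne_zero'.2 Real.pi_pos)).tendsto.comp
        Stirling.tendsto_stirlingSeq_sqrt_pi
    exact (h_log.comp (tendsto_id.const_mul_atTop' ha)).div_atTop tendsto_natCast_atTop_atTop
  have h_sum := ((h_stirling.add (tendsto_const_div_atTop_nhds_zero_nat
    (1 / 2 * Real.log (2 * a)))).add (tendsto_log_natCast_div.const_mul (1 / 2))).add
    (tendsto_const_nhds (x := a * Real.log a - a))
  simp only [zero_add, mul_zero] at h_sum
  refine h_sum.congr' ?_
  filter_upwards [eventually_gt_atTop 0] with k hk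
  have : (0 : ℝ) < k := Nat.cast_pos.2 hk
  have : (0 : ℝ) < a := Nat.cast_pos.2 ha
  rw [Stirling.log_stirlingSeq_formula]
  push_cast
  rw [Real.log_div (by positivity) (by positivity), Real.log_exp, ← mul_assoc,
    Real.log_mul (x := 2 * a) (by positivity) (by positivity),
    Real.log_mul (x := a) (y := k) (by positivity) (by positivity)]
  field_simp
  ring

lemma HasExpRate.eventually_le_exp_mul (hf : HasExpRate f d ℓ) (hg : HasExpRate g d ℓ')
    {ρ : ℝ} (hρ : ℓ - ℓ' < ρ) : ∀ᶠ k : ℕ in atTop, f k ≤ Real.exp (ρ * k) * g k := by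
  filter_upwards [(hf.div hg).2.eventually_lt_const hρ, hf.1, hg.1, eventually_gt_atTop 0]
    with k h_lt h_f h_g hk
  rw [sub_self, zero_mul, zero_mul, sub_zero, div_lt_iff₀ (Nat.cast_pos.2 hk)] at h_lt
  rw [← div_le_iff₀ h_g, ← Real.log_le_iff_le_exp (div_pos h_f h_g)]
  exact h_lt.le

/-- The exponential growth rate of `factorialProd (14 * k)`, next to its factor `k ^ (924 * k)`. -/
noncomputable def factorialProdRate : ℝ :=
  364 * Real.log 364 + 308 * Real.log 308 + 252 * Real.log 252 - 924

lemma hasExpRate_factorialProd :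
    HasExpRate (fun k => (factorialProd (14 * k) : ℝ)) 924 factorialProdRate := by
  convert ((hasExpRate_factorial (a := 364) (by norm_num)).mul
    (hasExpRate_factorial (a := 308) (by norm_num))).mul
    (hasExpRate_factorial (a := 252) (by norm_num)) using 1
  · funext k
    rw [factorialProd, ← mul_assoc 26, ← mul_assoc 22, ← mul_assoc 18]
    push_cast
    rfl
  · norm_num
  · rw [factorialProdRate]
    push_cast
    ring

end ExpRate

section ContourBound

open Complex Filter MeasureTheory Polynomial Topology

/-- The approximate height, in units of `k`, of the saddle points `(15 ± i saddleHeight) k` of the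
integrand attached to `kernelPoly (14 * k)`. -/
noncomputable def saddleHeight : ℝ := 216923 / 2500

/-- The angle of rotation used for a factor `Γ(a k ± i t)`: the argument of the saddle point seen
from distance `a`. -/
noncomputable def saddleAngle (a : ℕ) : ℝ := Real.arctan (saddleHeight / a)

lemma saddleHeight_pos : 0 < saddleHeight := by norm_num [saddleHeight]

lemma saddleAngle_mem_Ico (a : ℕ) : saddleAngle a ∈ Set.Ico 0 (Real.pi / 2) :=
  ⟨Real.arctan_nonneg.2 (div_nonneg saddleHeight_pos.le a.cast_nonneg),
    Real.arctan_lt_pi_div_two _⟩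

lemma cos_saddleAngle_pos (a : ℕ) : 0 < Real.cos (saddleAngle a) := Real.cos_arctan_pos _

/-- The bound for `Γ(a k ± i t)` on a rotated ray, without its decay in `t`. -/
noncomputable def saddleFactor (a k : ℕ) : ℝ :=
  (a * k).factorial / Real.cos (saddleAngle a) ^ (a * k + 2)

/-- The bound for `centralFactorial (b * k)` on the line `re s = 15 k + 1 / 2`, without its
dependence on `t`. -/
noncomputable def lineFactor (b k : ℕ) : ℝ :=
  (((b + 15) * k : ℕ) + 1) * saddleFactor (b + 15) k * saddleFactor (b - 15) k

/-- The exponential decay in `t` gained from the two Gamma factors of `centralFactorial (b * k)`. -/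
noncomputable def lineAngle (b : ℕ) : ℝ := saddleAngle (b + 15) + saddleAngle (b - 15)

lemma saddleFactor_pos (a k : ℕ) : 0 < saddleFactor a k :=
  div_pos (by positivity) (pow_pos (cos_saddleAngle_pos a) _)

lemma lineFactor_pos (b k : ℕ) : 0 < lineFactor b k :=
  mul_pos (mul_pos (by positivity) (saddleFactor_pos _ _)) (saddleFactor_pos _ _)

lemma norm_aeval_centralFactorial_mul_le {b k : ℕ} (hb : 17 ≤ b) (hk : 1 ≤ k) (t : ℝ) :
    ‖aeval ((((15 * k : ℕ) + 1 / 2 : ℝ) : ℂ) + t * I) (centralFactorial (b * k))‖ ≤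
      Real.exp (-(lineAngle b * |t|)) * lineFactor b k * Real.cosh (Real.pi * t) := by
  have h_norm := norm_aeval_centralFactorial_le (m := 15 * k) (c := b * k) (by nlinarith)
    (saddleAngle_mem_Ico (b + 15)) (saddleAngle_mem_Ico (b - 15)) t
  rw [← add_mul, ← Nat.sub_mul, Nat.factorial_succ] at h_norm
  refine h_norm.trans_eq ?_
  rw [lineFactor, lineAngle, saddleFactor, saddleFactor]
  push_cast
  ring

/-- The net exponential decay in `t` of the integrand attached to `kernelPoly (14 * k)`: three
factors of `kernelPoly` against one factor `cosh (π t)` not absorbed by the kernel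
`1 / cosh² (π t)`. -/
noncomputable def contourDecay : ℝ := lineAngle 182 + lineAngle 154 + lineAngle 126 - Real.pi

lemma pi_lt_arctan_add_arctan_add_arctan {x y w : ℝ} (hx : 0 < x) (hxy : 1 < x * y)
    (hw : (x + y) / (x * y - 1) < w) :
    Real.pi < Real.arctan x + Real.arctan y + Real.arctan w := by
  have := Real.arctan_strictMono hw
  rw [Real.arctan_add_eq_add_pi hxy hx, ← neg_sub (x * y), div_neg, Real.arctan_neg]
  linarith

lemma contourDecay_pos : 0 < contourDecay := by
  rw [contourDecay, sub_pos]
  simp only [lineAngle, saddleAngle, saddleHeight]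
  norm_num only [Nat.cast_ofNat]
  rw [Real.arctan_add (x := 216923 / 492500) (by norm_num),
    Real.arctan_add (x := 216923 / 422500) (by norm_num),
    Real.arctan_add (x := 216923 / 352500) (by norm_num)]
  apply pi_lt_arctan_add_arctan_add_arctan <;> norm_num

lemma norm_pow_add_half_add_mul_I_le (m : ℕ) (t : ℝ) {j : ℕ} (hj : j ≤ 2) :
    ‖((m + 1 / 2 : ℝ) : ℂ) + t * I‖ ^ j ≤ ((m + 1) * (1 + |t|)) ^ 2 := by
  have h_prod : (0 : ℝ) ≤ m * |t| := by positivity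
  have h_abs := abs_nonneg t
  have : (0 : ℝ) ≤ m := m.cast_nonneg
  have h_norm : ‖((m + 1 / 2 : ℝ) : ℂ) + t * I‖ ≤ (m + 1) * (1 + |t|) := by
    refine (norm_add_le _ _).trans ?_
    rw [norm_mul, norm_I, mul_one, norm_real, norm_real, Real.norm_eq_abs t,
      Real.norm_of_nonneg (by positivity)]
    nlinarith
  exact (pow_le_pow_left₀ (norm_nonneg _) h_norm j).trans
    (pow_le_pow_right₀ (by nlinarith) hj)

lemma cosh_pi_mul_le (t : ℝ) : Real.cosh (Real.pi * t) ≤ Real.exp (Real.pi * |t|) := by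
  rw [← Real.cosh_abs, abs_mul, abs_of_pos Real.pi_pos, Real.cosh_eq]
  have : Real.exp (-(Real.pi * |t|)) ≤ Real.exp (Real.pi * |t|) :=
    Real.exp_le_exp.2 (neg_le_self (by positivity))
  linarith

lemma exp_log_z21_mul_add_half_le (m : ℕ) :
    Real.exp (Real.log z21 * (m + 1 / 2)) ≤ z21 ^ m := by
  rw [← Real.exp_log (pow_pos z21_pos m), Real.log_pow]
  exact Real.exp_le_exp.2 (by linarith [Real.log_neg z21_pos z21_lt_one])

/-- The bound for the integrand attached to `kernelPoly (14 * k)`, without its dependence on `t`. -/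
noncomputable def contourBound (k : ℕ) : ℝ :=
  lineFactor 182 k * lineFactor 154 k * lineFactor 126 k *
    (((15 * k : ℕ) + 1) * ((15 * k : ℕ) + 1)) * z21 ^ (15 * k)

lemma contourBound_pos (k : ℕ) : 0 < contourBound k := by
  have := z21_pos
  have h (b : ℕ) : 0 < lineFactor b k := lineFactor_pos b k
  rw [contourBound]
  exact mul_pos (mul_pos (mul_pos (mul_pos (h _) (h _)) (h _)) (by positivity)) (by positivity)

lemma norm_aeval_kernelPoly_mul_sechSq_le {k : ℕ} (hk : 1 ≤ k) (t : ℝ) :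
    ‖aeval ((((15 * k : ℕ) + 1 / 2 : ℝ) : ℂ) + t * I) (kernelPoly (14 * k))‖ * sechSq t ≤
      lineFactor 182 k * lineFactor 154 k * lineFactor 126 k *
        Real.exp (-(contourDecay * |t|)) := by
  set s : ℂ := (((15 * k : ℕ) + 1 / 2 : ℝ) : ℂ) + t * I
  have h_cosh := Real.cosh_pos (Real.pi * t)
  have h_pos (b : ℕ) : 0 < lineFactor b k := lineFactor_pos b k
  have h_exp : Real.exp (-(contourDecay * |t|)) = Real.exp (-(lineAngle 182 * |t|)) *
      Real.exp (-(lineAngle 154 * |t|)) * Real.exp (-(lineAngle 126 * |t|)) *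
      Real.exp (Real.pi * |t|) := by
    rw [← Real.exp_add, ← Real.exp_add, ← Real.exp_add, contourDecay]
    ring_nf
  rw [kernelPoly, ← mul_assoc 13, ← mul_assoc 11, ← mul_assoc 9, map_mul, map_mul, norm_mul,
    norm_mul, h_exp]
  have h_le {b : ℕ} (hb : 17 ≤ b) := norm_aeval_centralFactorial_mul_le hb hk t
  have h_nonneg (b : ℕ) :
      0 ≤ Real.exp (-(lineAngle b * |t|)) * lineFactor b k * Real.cosh (Real.pi * t) :=
    (mul_pos (mul_pos (Real.exp_pos _) (h_pos b)) h_cosh).le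
  calc ‖aeval s (centralFactorial (182 * k))‖ * ‖aeval s (centralFactorial (154 * k))‖ *
        ‖aeval s (centralFactorial (126 * k))‖ * sechSq t
      ≤ (Real.exp (-(lineAngle 182 * |t|)) * lineFactor 182 k * Real.cosh (Real.pi * t)) *
          (Real.exp (-(lineAngle 154 * |t|)) * lineFactor 154 k * Real.cosh (Real.pi * t)) *
          (Real.exp (-(lineAngle 126 * |t|)) * lineFactor 126 k * Real.cosh (Real.pi * t)) *
          sechSq t :=
        mul_le_mul_of_nonneg_right (mul_le_mul
          (mul_le_mul (h_le (by norm_num)) (h_le (by norm_num)) (norm_nonneg _) (h_nonneg _))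
          (h_le (by norm_num)) (norm_nonneg _) (mul_nonneg (h_nonneg _) (h_nonneg _)))
          (sechSq_nonneg t)
    _ = lineFactor 182 k * lineFactor 154 k * lineFactor 126 k *
          (Real.exp (-(lineAngle 182 * |t|)) * Real.exp (-(lineAngle 154 * |t|)) *
            Real.exp (-(lineAngle 126 * |t|)) * Real.cosh (Real.pi * t)) := by
        rw [sechSq]
        field_simp
    _ ≤ _ := by
        refine mul_le_mul_of_nonneg_left ?_
          (mul_pos (mul_pos (h_pos _) (h_pos _)) (h_pos _)).le
        exact mul_le_mul_of_nonneg_left (cosh_pi_mul_le t) (by positivity)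

lemma norm_polyExp_kernelPoly_mul_sechSq_le {k j : ℕ} (hk : 1 ≤ k) (hj : j ≤ 2) (t : ℝ) :
    ‖polyExp (kernelPoly (14 * k) * X ^ j) ((15 * k : ℕ) + 1 / 2) (Real.log z21) t‖ * sechSq t ≤
      contourBound k * ((1 + |t|) ^ 2 * Real.exp (-(contourDecay * |t|))) := by
  have h_kernel := norm_aeval_kernelPoly_mul_sechSq_le hk t
  have h_pow := norm_pow_add_half_add_mul_I_le (15 * k) t hj
  have h_exp := exp_log_z21_mul_add_half_le (15 * k)
  have h_sech := sechSq_nonneg t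
  rw [norm_polyExp, map_mul, map_pow, aeval_X, norm_mul, norm_pow, contourBound]
  calc _ = _ * _ * _ := by rw [mul_right_comm, mul_right_comm _ _ (sechSq t)]
    _ ≤ _ * _ * _ := mul_le_mul (mul_le_mul h_kernel h_pow (by positivity) (le_trans
        (mul_nonneg (norm_nonneg _) h_sech) h_kernel)) h_exp (by positivity)
        (mul_nonneg (le_trans (mul_nonneg (norm_nonneg _) h_sech) h_kernel) (by positivity))
    _ = _ := by ring

lemma exists_integral_norm_polyExp_kernelPoly_mul_sechSq_le :
    ∃ C > 0, ∀ k ≥ 1, ∀ j ≤ 2,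
      ∫ t, ‖polyExp (kernelPoly (14 * k) * X ^ j) ((15 * k : ℕ) + 1 / 2) (Real.log z21) t‖ *
        sechSq t ≤ C * contourBound k := by
  set C := ∫ t : ℝ, (1 + |t|) ^ 2 * Real.exp (-(contourDecay * |t|))
  refine ⟨|C| + 1, by positivity, fun k hk j hj => ?_⟩
  calc _ ≤ ∫ t : ℝ, contourBound k * ((1 + |t|) ^ 2 * Real.exp (-(contourDecay * |t|))) :=
        integral_mono_of_nonneg
          (.of_forall fun t => mul_nonneg (norm_nonneg _) (sechSq_nonneg t))
          ((integrable_pow_mul_exp_neg_mul_abs zero_le_one contourDecay_pos 2).const_mul _)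
          (.of_forall (norm_polyExp_kernelPoly_mul_sechSq_le hk hj))
    _ = C * contourBound k := by rw [integral_const_mul, mul_comm]
    _ ≤ (|C| + 1) * contourBound k :=
        mul_le_mul_of_nonneg_right (by linarith [le_abs_self C]) (contourBound_pos k).le

lemma eval_iterate_derivative_kernelPoly_mul_eq_zero {n v k : ℕ} (hv : v ≤ 9 * n) (hk : k ≤ 2)
    (u : ℝ[X]) : (derivative^[k] (kernelPoly n * u)).eval (v : ℝ) = 0 := by
  have h_13 : (centralFactorial (13 * n)).eval (v : ℝ) = 0 :=
    eval_centralFactorial_eq_zero (by lia)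
  have h_11 : (centralFactorial (11 * n)).eval (v : ℝ) = 0 :=
    eval_centralFactorial_eq_zero (by lia)
  have h_9 : (centralFactorial (9 * n)).eval (v : ℝ) = 0 := eval_centralFactorial_eq_zero hv
  interval_cases k <;> simp [kernelPoly, derivative_mul, h_13, h_11, h_9]

/-- The exponential growth rate of `saddleFactor a`. -/
noncomputable def saddleRate (a : ℕ) : ℝ := a / 2 * Real.log (a ^ 2 + saddleHeight ^ 2) - a

lemma hasExpRate_saddleFactor {a : ℕ} (ha : 0 < a) :
    HasExpRate (saddleFactor a) a (saddleRate a) := by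
  have h_cos := cos_saddleAngle_pos a
  have : (0 : ℝ) < a := Nat.cast_pos.2 ha
  have h_rate : saddleRate a =
      a * Real.log a - a - a * Real.log (Real.cos (saddleAngle a)) - 0 := by
    have h_frac : 1 + (saddleHeight / a) ^ 2 = (a ^ 2 + saddleHeight ^ 2) / (a : ℝ) ^ 2 := by
      field_simp
    rw [saddleRate, saddleAngle, Real.cos_arctan, one_div, Real.log_inv,
      Real.log_sqrt (by positivity), h_frac, Real.log_div (by positivity) (by positivity),
      Real.log_pow]
    push_cast
    ring
  rw [h_rate, ← sub_zero (a : ℝ), ← sub_zero ((a : ℝ) - 0)]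
  convert ((hasExpRate_factorial ha).div (hasExpRate_pow h_cos a)).div
    (hasExpRate_const (pow_pos h_cos 2)) using 1
  · funext k
    rw [saddleFactor, pow_add, div_div]
  · simp only [sub_zero]

lemma hasExpRate_lineFactor {b : ℕ} (hb : 15 < b) :
    HasExpRate (lineFactor b) (2 * b) (saddleRate (b + 15) + saddleRate (b - 15)) := by
  convert ((hasExpRate_natCast_mul_add_one (b + 15)).mul (hasExpRate_saddleFactor
    (by lia : 0 < b + 15))).mul (hasExpRate_saddleFactor (by lia : 0 < b - 15)) using 1
  · rfl
  · push_cast [Nat.cast_sub hb.le]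
    ring
  · rw [zero_add]

/-- The exponential growth rate of `contourBound`. -/
noncomputable def contourRate : ℝ :=
  saddleRate 197 + saddleRate 167 + (saddleRate 169 + saddleRate 139) +
    (saddleRate 141 + saddleRate 111) + 15 * Real.log z21

lemma hasExpRate_contourBound : HasExpRate contourBound 924 contourRate := by
  have h_linear := hasExpRate_natCast_mul_add_one 15
  convert ((((hasExpRate_lineFactor (b := 182) (by norm_num)).mul
    (hasExpRate_lineFactor (b := 154) (by norm_num))).mul
    (hasExpRate_lineFactor (b := 126) (by norm_num))).mul (h_linear.mul h_linear)).mul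
    (hasExpRate_pow z21_pos 15) using 1
  · rfl
  · norm_num
  · rw [contourRate]
    norm_num

lemma eventually_mul_integral_norm_polyExp_kernelPoly_le {c ρ : ℝ} (hc : 0 < c)
    (hρ : contourRate - factorialProdRate < ρ) :
    ∀ᶠ k : ℕ in atTop, ∀ j ≤ 2,
      c * ∫ t, ‖polyExp (kernelPoly (14 * k) * X ^ j) ((15 * k : ℕ) + 1 / 2) (Real.log z21) t‖ *
        sechSq t ≤ Real.exp (ρ * k) * factorialProd (14 * k) := by
  obtain ⟨C, hC, h_le⟩ := exists_integral_norm_polyExp_kernelPoly_mul_sechSq_le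
  have h_rate := (hasExpRate_const (mul_pos hc hC)).mul hasExpRate_contourBound
  rw [zero_add, zero_add] at h_rate
  filter_upwards [h_rate.eventually_le_exp_mul hasExpRate_factorialProd hρ,
    eventually_ge_atTop 1] with k h_k hk j hj
  refine (mul_le_mul_of_nonneg_left (h_le k hk j hj) hc.le).trans ?_
  rwa [← mul_assoc]

lemma eventually_abs_polySeries_derivative_add_le {ρ : ℝ}
    (hρ : contourRate - factorialProdRate < ρ) :
    ∀ᶠ k : ℕ in atTop, ∀ j ≤ 2,
      |polySeries z21 (derivative (kernelPoly (14 * k) * X ^ j)) +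
          Real.log z21 * polySeries z21 (kernelPoly (14 * k) * X ^ j)| ≤
        Real.exp (ρ * k) * factorialProd (14 * k) := by
  filter_upwards [eventually_mul_integral_norm_polyExp_kernelPoly_le Real.pi_div_two_pos hρ]
    with k h_k j hj
  exact (abs_polySeries_derivative_add_le z21_pos z21_lt_one fun i hi v hv =>
    eval_iterate_derivative_kernelPoly_mul_eq_zero (by lia) (by lia) _).trans (h_k j hj)

lemma eventually_abs_polySeries_derivative_derivative_add_le {ρ : ℝ}
    (hρ : contourRate - factorialProdRate < ρ) :
    ∀ᶠ k : ℕ in atTop, ∀ j ≤ 2,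
      |polySeries z21 (derivative (derivative (kernelPoly (14 * k) * X ^ j))) +
          2 * Real.log z21 * polySeries z21 (derivative (kernelPoly (14 * k) * X ^ j)) +
          Real.log z21 ^ 2 * polySeries z21 (kernelPoly (14 * k) * X ^ j)| ≤
        Real.exp (ρ * k) * factorialProd (14 * k) := by
  filter_upwards [eventually_mul_integral_norm_polyExp_kernelPoly_le (pow_pos Real.pi_pos 2) hρ]
    with k h_k j hj
  exact (abs_polySeries_derivative_derivative_add_le z21_pos z21_lt_one fun i hi v hv =>
    eval_iterate_derivative_kernelPoly_mul_eq_zero (by lia) hi _).trans (h_k j hj)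

end ContourBound

section PeakBound

open Filter Polynomial

lemma choose_le_div_pow {t : ℝ} (ht₀ : 0 < t) (ht₁ : t < 1) (i m : ℕ) :
    ((i + m).choose m : ℝ) ≤ 1 / (t ^ i * (1 - t) ^ (m + 1)) := by
  have h_sum := hasSum_choose_mul_geometric_of_norm_lt_one m
    (by rwa [Real.norm_of_nonneg ht₀.le] : ‖t‖ < 1)
  have h_term := le_hasSum h_sum i fun j _ => by positivity
  have : 0 < 1 - t := sub_pos.2 ht₁
  rw [le_div_iff₀ (by positivity), ← mul_assoc]
  rwa [le_div_iff₀ (by positivity)] at h_term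

lemma eval_natCast_centralFactorial_nonneg (c v : ℕ) :
    0 ≤ (centralFactorial c).eval (v : ℝ) := by
  rw [eval_natCast_centralFactorial]
  exact Nat.cast_nonneg _

lemma eval_natCast_centralFactorial_le {t : ℝ} (ht₀ : 0 < t) (ht₁ : t < 1) (c v : ℕ) :
    (centralFactorial c).eval (v : ℝ) ≤
      (2 * c + 1).factorial * (t / (1 - t) ^ 2) ^ (c + 1) * (1 / t) ^ v := by
  have h_sub : 0 < 1 - t := sub_pos.2 ht₁
  rcases le_or_gt v c with h_le | h_lt
  · rw [eval_centralFactorial_eq_zero h_le]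
    positivity
  obtain ⟨i, rfl⟩ := Nat.exists_eq_add_of_le' h_lt
  have h_arg : i + (c + 1) + c = i + (2 * c + 1) := by ring
  rw [eval_natCast_centralFactorial, h_arg, Nat.descFactorial_eq_factorial_mul_choose,
    Nat.cast_mul, mul_assoc]
  refine mul_le_mul_of_nonneg_left ?_ (Nat.cast_nonneg _)
  calc ((i + (2 * c + 1)).choose (2 * c + 1) : ℝ)
      ≤ 1 / (t ^ i * (1 - t) ^ (2 * c + 1 + 1)) := choose_le_div_pow ht₀ ht₁ i _
    _ = (t / (1 - t) ^ 2) ^ (c + 1) * (1 / t) ^ (i + (c + 1)) := by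
        rw [div_pow, ← pow_mul, one_div_pow, pow_add t i]
        field_simp
        ring

/-- The optimal parameter in `eval_natCast_centralFactorial_le` for `c = m * n`, at the place
`v ≈ 149.083 * n` where the terms of `polySeries z21 (kernelPoly n)` peak. -/
noncomputable def peakRatio (m : ℕ) : ℝ := (149.083 - m) / (149.083 + m)

lemma peakRatio_pos {m : ℕ} (hm : m ≤ 149) : 0 < peakRatio m := by
  have : (m : ℝ) ≤ 149 := by exact_mod_cast hm
  exact div_pos (by linarith) (by positivity)

lemma peakRatio_lt_one {m : ℕ} (hm : 0 < m) : peakRatio m < 1 := by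
  have : (0 : ℝ) < m := Nat.cast_pos.2 hm
  rw [peakRatio, div_lt_one (by positivity)]
  linarith

lemma z21_lt : z21 < 64174243051 / 10 ^ 11 := by
  have : (45825756949 : ℝ) / 10 ^ 10 < √21 := Real.lt_sqrt_of_sq_lt (by norm_num)
  rw [z21_eq]
  linarith

lemma z21_lt_peakRatio_mul : z21 < peakRatio 13 * peakRatio 11 * peakRatio 9 :=
  z21_lt.trans (by norm_num [peakRatio])

/-- The bound for `centralFactorial (14 * m * k)` coming from `peakRatio m`, without its dependence
on the argument. -/
noncomputable def peakFactor (m k : ℕ) : ℝ :=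
  (2 * (14 * m * k) + 1).factorial *
    (peakRatio m / (1 - peakRatio m) ^ 2) ^ (14 * m * k + 1)

/-- The excess of the exponential growth rate of `peakFactor m` over that of its factorial. -/
noncomputable def peakRate (m : ℕ) : ℝ :=
  14 * m * Real.log (peakRatio m / (1 - peakRatio m) ^ 2)

lemma peakRatio_div_pos {m : ℕ} (hm₀ : 0 < m) (hm : m ≤ 149) :
    0 < peakRatio m / (1 - peakRatio m) ^ 2 :=
  div_pos (peakRatio_pos hm) (pow_pos (sub_pos.2 (peakRatio_lt_one hm₀)) 2)

lemma peakFactor_pos {m : ℕ} (hm₀ : 0 < m) (hm : m ≤ 149) (k : ℕ) : 0 < peakFactor m k :=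
  mul_pos (by positivity) (pow_pos (peakRatio_div_pos hm₀ hm) _)

lemma hasExpRate_peakFactor {m : ℕ} (hm₀ : 0 < m) (hm : m ≤ 149) :
    HasExpRate (peakFactor m) (28 * m) (28 * m * Real.log (28 * m) - 28 * m + peakRate m) := by
  have h_pos := peakRatio_div_pos hm₀ hm
  convert (((hasExpRate_natCast_mul_add_one (28 * m)).mul
    (hasExpRate_factorial (by positivity : 0 < 28 * m))).mul
    (hasExpRate_pow h_pos (14 * m))).mul (hasExpRate_const h_pos) using 1
  · funext k
    have h_arg : 2 * (14 * m * k) = 28 * m * k := by ring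
    rw [peakFactor, Nat.factorial_succ, pow_succ, h_arg]
    push_cast
    ring
  · push_cast
    ring
  · rw [peakRate]
    push_cast
    ring

lemma pow_le_sq_add_one {j : ℕ} (hj : j ≤ 2) (v : ℕ) : (v : ℝ) ^ j ≤ v ^ 2 + 1 := by
  interval_cases j <;> nlinarith [sq_nonneg ((v : ℝ) - 1)]

/-- The bound for `polySeries z21 (kernelPoly (14 * k) * X ^ j)`, up to a constant factor. -/
noncomputable def peakBound (k : ℕ) : ℝ := peakFactor 13 k * peakFactor 11 k * peakFactor 9 k

lemma norm_eval_kernelPoly_mul_pow_le (k : ℕ) {j : ℕ} (hj : j ≤ 2) (v : ℕ) :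
    ‖(kernelPoly (14 * k) * X ^ j).eval (v : ℝ) * z21 ^ v‖ ≤
      peakBound k * ((v ^ 2 + 1) * (z21 / (peakRatio 13 * peakRatio 11 * peakRatio 9)) ^ v) := by
  have h_z := z21_pos
  have h_ratio {m : ℕ} (hm : m ≤ 149) := peakRatio_pos hm
  have h_nonneg (c : ℕ) := eval_natCast_centralFactorial_nonneg c v
  have h_le {m : ℕ} (hm₀ : 0 < m) (hm : m ≤ 149) :
      (centralFactorial (m * (14 * k))).eval (v : ℝ) ≤ peakFactor m k * (1 / peakRatio m) ^ v := by
    rw [peakFactor, ← mul_assoc m, mul_comm m]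
    exact eval_natCast_centralFactorial_le (h_ratio hm) (peakRatio_lt_one hm₀) _ v
  have h_13 := h_le (m := 13) (by norm_num) (by norm_num)
  have h_11 := h_le (m := 11) (by norm_num) (by norm_num)
  have h_9 := h_le (m := 9) (by norm_num) (by norm_num)
  have h_kernel : 0 ≤ (kernelPoly (14 * k)).eval (v : ℝ) := by
    rw [kernelPoly, eval_mul, eval_mul]
    exact mul_nonneg (mul_nonneg (h_nonneg _) (h_nonneg _)) (h_nonneg _)
  rw [eval_mul, eval_pow, eval_X, Real.norm_of_nonneg (by positivity), kernelPoly, eval_mul,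
    eval_mul]
  have h_13_pos := (h_nonneg (13 * (14 * k))).trans h_13
  have h_11_pos := (h_nonneg (11 * (14 * k))).trans h_11
  have h_9_pos := (h_nonneg (9 * (14 * k))).trans h_9
  calc _ ≤ (peakFactor 13 k * (1 / peakRatio 13) ^ v) * (peakFactor 11 k * (1 / peakRatio 11) ^ v) *
        (peakFactor 9 k * (1 / peakRatio 9) ^ v) * (v ^ 2 + 1) * z21 ^ v :=
        mul_le_mul_of_nonneg_right (mul_le_mul (mul_le_mul (mul_le_mul h_13 h_11 (h_nonneg _)
          h_13_pos) h_9 (h_nonneg _) (mul_nonneg h_13_pos h_11_pos)) (pow_le_sq_add_one hj v)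
          (by positivity) (mul_nonneg (mul_nonneg h_13_pos h_11_pos) h_9_pos)) (by positivity)
    _ = _ := by
        simp only [peakBound, div_eq_mul_inv, one_mul, mul_pow, inv_pow, mul_inv]
        ring

lemma exists_abs_polySeries_kernelPoly_le :
    ∃ C > 0, ∀ k, ∀ j ≤ 2,
      |polySeries z21 (kernelPoly (14 * k) * X ^ j)| ≤ C * peakBound k := by
  set r := z21 / (peakRatio 13 * peakRatio 11 * peakRatio 9)
  have h_prod := z21_pos.trans z21_lt_peakRatio_mul
  have h_r : ‖r‖ < 1 := by
    rw [Real.norm_of_nonneg (div_nonneg z21_pos.le h_prod.le), div_lt_one h_prod]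
    exact z21_lt_peakRatio_mul
  have h_summable : Summable fun v : ℕ => ((v : ℝ) ^ 2 + 1) * r ^ v := by
    simp only [add_one_mul]
    exact (summable_pow_mul_geometric_of_norm_lt_one 2 h_r).add
      (summable_geometric_of_norm_lt_one h_r)
  set C := ∑' v : ℕ, ((v : ℝ) ^ 2 + 1) * r ^ v
  refine ⟨|C| + 1, by positivity, fun k j hj => ?_⟩
  have h_bound : 0 ≤ peakBound k := (mul_pos (mul_pos (peakFactor_pos (by norm_num) (by norm_num) k)
    (peakFactor_pos (by norm_num) (by norm_num) k))
    (peakFactor_pos (by norm_num) (by norm_num) k)).le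
  calc |polySeries z21 (kernelPoly (14 * k) * X ^ j)| ≤ peakBound k * C :=
        tsum_of_norm_bounded (h_summable.hasSum.mul_left _)
          (norm_eval_kernelPoly_mul_pow_le k hj)
    _ ≤ (|C| + 1) * peakBound k := by
        rw [mul_comm]
        exact mul_le_mul_of_nonneg_right (by linarith [le_abs_self C]) h_bound

lemma hasExpRate_peakBound : HasExpRate peakBound 924
    (factorialProdRate + (peakRate 13 + peakRate 11 + peakRate 9)) := by
  convert ((hasExpRate_peakFactor (m := 13) (by norm_num) (by norm_num)).mul
    (hasExpRate_peakFactor (m := 11) (by norm_num) (by norm_num))).mul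
    (hasExpRate_peakFactor (m := 9) (by norm_num) (by norm_num)) using 1
  · rfl
  · norm_num
  · rw [factorialProdRate]
    norm_num
    ring

lemma eventually_abs_polySeries_kernelPoly_le {ρ : ℝ}
    (hρ : peakRate 13 + peakRate 11 + peakRate 9 < ρ) :
    ∀ᶠ k : ℕ in atTop, ∀ j ≤ 2, |polySeries z21 (kernelPoly (14 * k) * X ^ j)| ≤
      Real.exp (ρ * k) * factorialProd (14 * k) := by
  obtain ⟨C, hC, h_le⟩ := exists_abs_polySeries_kernelPoly_le
  have h_rate := (hasExpRate_const hC).mul hasExpRate_peakBound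
  rw [zero_add, zero_add] at h_rate
  filter_upwards [h_rate.eventually_le_exp_mul hasExpRate_factorialProd
    (by rwa [add_sub_cancel_left])] with k h_k j hj
  exact (h_le k j hj).trans h_k

end PeakBound

section NumericalRates

lemma log_le_of_le_mul (a b c : ℤ) {y u : ℝ} (hy : 0 < y) (hu : 0 < u)
    (h : y ≤ 2 ^ a * 3 ^ b * 5 ^ c * u) :
    Real.log y ≤ a * Real.log 2 + b * Real.log 3 + c * Real.log 5 + (u - 1) := by
  have h_log := Real.log_le_log hy h
  rw [Real.log_mul (by positivity) hu.ne', Real.log_mul (by positivity) (by positivity),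
    Real.log_mul (by positivity) (by positivity), Real.log_zpow, Real.log_zpow,
    Real.log_zpow] at h_log
  linarith [Real.log_le_sub_one_of_pos hu]

lemma le_log_of_le_mul (a b c : ℤ) {y u : ℝ} (hy : 0 < y) (hu : 0 < u)
    (h : 2 ^ a * 3 ^ b * 5 ^ c ≤ y * u) :
    a * Real.log 2 + b * Real.log 3 + c * Real.log 5 - (u - 1) ≤ Real.log y := by
  have h_inv : y⁻¹ ≤ 2 ^ (-a) * 3 ^ (-b) * 5 ^ (-c) * u := by
    rw [zpow_neg, zpow_neg, zpow_neg, ← mul_inv, ← mul_inv, inv_mul_eq_div,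
      le_div_iff₀ (by positivity), inv_mul_le_iff₀ hy]
    exact h
  have h_log := log_le_of_le_mul (-a) (-b) (-c) (inv_pos.2 hy) hu h_inv
  rw [Real.log_inv] at h_log
  push_cast at h_log
  linarith

lemma saddleRate_le (n : ℕ) (a b c : ℤ) {u : ℝ} (hn : 0 < n) (hu : 0 < u)
    (h : (n : ℝ) ^ 2 + saddleHeight ^ 2 ≤ 2 ^ a * 3 ^ b * 5 ^ c * u) :
    saddleRate n ≤
      n / 2 * (a * Real.log 2 + b * Real.log 3 + c * Real.log 5 + (u - 1)) - n := by
  have : (0 : ℝ) < n := Nat.cast_pos.2 hn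
  exact sub_le_sub_right (mul_le_mul_of_nonneg_left
    (log_le_of_le_mul a b c (by positivity) hu h) (by positivity)) _

-- The numbers below are approximated by products of powers of 2, 3 and 5, up to a factor within
-- `10⁻³` of 1.
lemma contourRate_sub_factorialProdRate_lt : contourRate - factorialProdRate < -513.4613 := by
  have h_197 := saddleRate_le 197 (-11) 5 8 (u := 9997696217 / 10 ^ 10) (by norm_num)
    (by norm_num) (by norm_num [saddleHeight])
  have h_167 := saddleRate_le 167 0 11 (-1) (u := 1999350487 / 2000000000) (by norm_num)
    (by norm_num) (by norm_num [saddleHeight])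
  have h_169 := saddleRate_le 169 28 8 (-11) (u := 10005659943 / 10 ^ 10) (by norm_num)
    (by norm_num) (by norm_num [saddleHeight])
  have h_139 := saddleRate_le 139 (-29) 10 12 (u := 9999075593 / 10 ^ 10) (by norm_num)
    (by norm_num) (by norm_num [saddleHeight])
  have h_141 := saddleRate_le 141 23 (-14) 6 (u := 1250273453 / 1250000000) (by norm_num)
    (by norm_num) (by norm_num [saddleHeight])
  have h_111 := saddleRate_le 111 3 (-9) 11 (u := 10002059903 / 10 ^ 10) (by norm_num)
    (by norm_num) (by norm_num [saddleHeight])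
  have h_z := log_le_of_le_mul 13 (-13) 3 (u := 2497911907 / 2500000000) z21_pos (by norm_num)
    (z21_lt.le.trans (by norm_num))
  have h_364 := le_log_of_le_mul 14 (-2) (-1) (y := 364) (u := 10002442003 / 10 ^ 10)
    (by norm_num) (by norm_num) (by norm_num)
  have h_308 := le_log_of_le_mul 18 (-12) 4 (y := 308) (u := 10009541077 / 10 ^ 10)
    (by norm_num) (by norm_num) (by norm_num)
  have h_252 := le_log_of_le_mul 3 9 (-4) (y := 252) (u := 4998857143 / 5000000000)
    (by norm_num) (by norm_num) (by norm_num)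
  push_cast at h_197 h_167 h_169 h_139 h_141 h_111 h_z h_364 h_308 h_252
  rw [contourRate, factorialProdRate]
  linarith [Real.log_two_gt_d9, Real.log_two_lt_d9, Real.log_three_gt_d9, Real.log_three_lt_d9,
    Real.log_five_gt_d9, Real.log_five_lt_d9]

lemma peakRate_eq {m : ℕ} (hm₀ : 0 < m) (hm : m ≤ 149) :
    peakRate m = 14 * m * (Real.log (peakRatio m) - 2 * Real.log (1 - peakRatio m)) := by
  rw [peakRate, Real.log_div (peakRatio_pos hm).ne'
    (pow_ne_zero 2 (sub_pos.2 (peakRatio_lt_one hm₀)).ne'), Real.log_pow, Nat.cast_ofNat]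

lemma peakRate_add_lt : peakRate 13 + peakRate 11 + peakRate 9 < 1755.111 := by
  have h_13 := log_le_of_le_mul 1 8 (-6) (y := peakRatio 13) (u := 9997384629 / 10 ^ 10)
    (peakRatio_pos (by norm_num)) (by norm_num) (by norm_num [peakRatio])
  have h_11 := log_le_of_le_mul (-21) (-3) 11 (y := peakRatio 11) (u := 10002731813 / 10 ^ 10)
    (peakRatio_pos (by norm_num)) (by norm_num) (by norm_num [peakRatio])
  have h_9 := log_le_of_le_mul (-6) 11 (-5) (y := peakRatio 9) (u := 10004524651 / 10 ^ 10)
    (peakRatio_pos (by norm_num)) (by norm_num) (by norm_num [peakRatio])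
  have h_13' := le_log_of_le_mul 11 (-13) 3 (y := 1 - peakRatio 13) (u := 5004927339 / 5000000000)
    (sub_pos.2 (peakRatio_lt_one (by norm_num))) (by norm_num) (by norm_num [peakRatio])
  have h_11' := le_log_of_le_mul 25 0 (-12) (y := 1 - peakRatio 11) (u := 200014909 / 200000000)
    (sub_pos.2 (peakRatio_lt_one (by norm_num))) (by norm_num) (by norm_num [peakRatio])
  have h_9' := le_log_of_le_mul (-8) 6 (-2) (y := 1 - peakRatio 9) (u := 2500922461 / 2500000000)
    (sub_pos.2 (peakRatio_lt_one (by norm_num))) (by norm_num) (by norm_num [peakRatio])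
  push_cast at h_13 h_11 h_9 h_13' h_11' h_9'
  rw [peakRate_eq (by norm_num) (by norm_num), peakRate_eq (by norm_num) (by norm_num),
    peakRate_eq (by norm_num) (by norm_num)]
  push_cast
  linarith [Real.log_two_gt_d9, Real.log_two_lt_d9, Real.log_three_gt_d9, Real.log_three_lt_d9,
    Real.log_five_gt_d9, Real.log_five_lt_d9]

end NumericalRates

section Nonvanishing

open Finset Polynomial

/-- The differential operator `c₀ + c₁ D + c₂ D²`. -/
noncomputable def diffOp (c₀ c₁ c₂ : ℝ) : ℝ[X] →ₗ[ℝ] ℝ[X] :=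
  c₀ • LinearMap.id + c₁ • derivative + c₂ • derivative ∘ₗ derivative

/-- The functional `q ↦ ∑ v, (c₀ q + c₁ q' + c₂ q'') (v) * z ^ v`. -/
noncomputable def twistedSeries {z : ℝ} (hz : ‖z‖ < 1) (c₀ c₁ c₂ : ℝ) : ℝ[X] →ₗ[ℝ] ℝ where
  toFun q := polySeries z (diffOp c₀ c₁ c₂ q)
  map_add' p q := by rw [map_add, polySeries_add hz]
  map_smul' a q := by rw [map_smul, smul_eq_C_mul, polySeries_C_mul, RingHom.id_apply, smul_eq_mul]

variable {z : ℝ} (hz : ‖z‖ < 1) (c₀ c₁ c₂ : ℝ)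

lemma diffOp_apply (q : ℝ[X]) :
    diffOp c₀ c₁ c₂ q =
      C c₀ * q + C c₁ * derivative q + C c₂ * derivative (derivative q) := by
  simp only [diffOp, LinearMap.add_apply, LinearMap.smul_apply, LinearMap.id_apply,
    LinearMap.comp_apply, smul_eq_C_mul]

lemma twistedSeries_apply (q : ℝ[X]) :
    twistedSeries hz c₀ c₁ c₂ q = polySeries z (diffOp c₀ c₁ c₂ q) := rfl

lemma diffOp_comp_X_add_C (a : ℝ) (q : ℝ[X]) :
    diffOp c₀ c₁ c₂ (q.comp (X + C a)) = (diffOp c₀ c₁ c₂ q).comp (X + C a) := by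
  simp only [diffOp_apply, derivative_comp, derivative_add, derivative_X, derivative_C, add_zero,
    one_mul, add_comp, mul_comp, C_comp]

lemma eval_diffOp_eq_zero {x : ℝ} {q : ℝ[X]} (hq : (X - C x) ^ 3 ∣ q) :
    (diffOp c₀ c₁ c₂ q).eval x = 0 := by
  obtain ⟨u, rfl⟩ := hq
  simp [diffOp_apply, derivative_mul, derivative_pow]

lemma X_sub_C_pow_three_dvd_kernelPoly {n v : ℕ} (hv : v ≤ 9 * n) :
    (X - C (v : ℝ)) ^ 3 ∣ kernelPoly n := by
  rw [pow_succ, pow_two, kernelPoly]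
  refine mul_dvd_mul (mul_dvd_mul ?_ ?_) ?_ <;>
    exact dvd_iff_isRoot.2 (eval_centralFactorial_eq_zero (by lia))

lemma centralFactorial_mul_comp_X_add_one (c : ℕ) :
    (centralFactorial c * (X - C ((c : ℝ) + 1))).comp (X + 1) =
      centralFactorial c * (X + C ((c : ℝ) + 1)) := by
  induction c with
  | zero => simp [centralFactorial_zero, mul_comm]
  | succ c ih =>
    simp only [centralFactorial_succ, mul_comp, sub_comp, add_comp, X_comp, C_comp, one_comp,
      Nat.cast_add, Nat.cast_one, C_add, C_1] at ih ⊢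
    linear_combination (X - C (c : ℝ) - 1) * (X + C (c : ℝ) + 2) * ih

/-- With `kernelShiftNum`, the numerator and the denominator of the rational function
`kernelPoly n (x + 1) / kernelPoly n x`. -/
noncomputable def kernelShiftDen (n : ℕ) : ℝ[X] :=
  (X - C (((13 * n : ℕ) : ℝ) + 1)) * (X - C (((11 * n : ℕ) : ℝ) + 1)) *
    (X - C (((9 * n : ℕ) : ℝ) + 1))

/-- See `kernelShiftDen`. -/
noncomputable def kernelShiftNum (n : ℕ) : ℝ[X] :=
  (X + C (((13 * n : ℕ) : ℝ) + 1)) * (X + C (((11 * n : ℕ) : ℝ) + 1)) *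
    (X + C (((9 * n : ℕ) : ℝ) + 1))

lemma kernelPoly_mul_comp_X_add_one (n : ℕ) :
    (kernelPoly n * kernelShiftDen n).comp (X + 1) = kernelPoly n * kernelShiftNum n := by
  have h_13 := centralFactorial_mul_comp_X_add_one (13 * n)
  have h_11 := centralFactorial_mul_comp_X_add_one (11 * n)
  have h_9 := centralFactorial_mul_comp_X_add_one (9 * n)
  have h_split : kernelPoly n * kernelShiftDen n =
      centralFactorial (13 * n) * (X - C (((13 * n : ℕ) : ℝ) + 1)) *
        (centralFactorial (11 * n) * (X - C (((11 * n : ℕ) : ℝ) + 1))) *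
        (centralFactorial (9 * n) * (X - C (((9 * n : ℕ) : ℝ) + 1))) := by
    rw [kernelPoly, kernelShiftDen]
    ring
  rw [h_split, mul_comp, mul_comp, h_13, h_11, h_9, kernelPoly, kernelShiftNum]
  ring

lemma monic_kernelShiftDen (n : ℕ) : (kernelShiftDen n).Monic :=
  ((monic_X_sub_C _).mul (monic_X_sub_C _)).mul (monic_X_sub_C _)

lemma monic_kernelShiftNum (n : ℕ) : (kernelShiftNum n).Monic :=
  ((monic_X_add_C _).mul (monic_X_add_C _)).mul (monic_X_add_C _)

lemma natDegree_kernelShiftDen (n : ℕ) : (kernelShiftDen n).natDegree = 3 := by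
  rw [kernelShiftDen, ((monic_X_sub_C _).mul (monic_X_sub_C _)).natDegree_mul (monic_X_sub_C _),
    (monic_X_sub_C _).natDegree_mul (monic_X_sub_C _)]
  simp only [natDegree_X_sub_C]

lemma natDegree_kernelShiftNum (n : ℕ) : (kernelShiftNum n).natDegree = 3 := by
  rw [kernelShiftNum, ((monic_X_add_C _).mul (monic_X_add_C _)).natDegree_mul (monic_X_add_C _),
    (monic_X_add_C _).natDegree_mul (monic_X_add_C _)]
  simp only [natDegree_X_add_C]

lemma twistedSeries_kernelPoly_mul_eq (n : ℕ) (q : ℝ[X]) :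
    twistedSeries hz c₀ c₁ c₂ (kernelPoly n * (kernelShiftDen n * q)) =
      z * twistedSeries hz c₀ c₁ c₂ (kernelPoly n * (kernelShiftNum n * q.comp (X + 1))) := by
  have h_root : (diffOp c₀ c₁ c₂ (kernelPoly n * (kernelShiftDen n * q))).eval 0 = 0 := by
    refine eval_diffOp_eq_zero _ _ _ (Dvd.dvd.mul_right ?_ _)
    simpa using X_sub_C_pow_three_dvd_kernelPoly (n := n) (Nat.zero_le _)
  rw [twistedSeries_apply, twistedSeries_apply, polySeries_eq_eval_zero_add hz, h_root, zero_add,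
    ← C_1, ← diffOp_comp_X_add_C, C_1, ← mul_assoc, mul_comp, kernelPoly_mul_comp_X_add_one,
    mul_assoc]

lemma map_eq_zero_of_degree_lt {L : ℝ[X] →ₗ[ℝ] ℝ} {d : ℕ} (hL : ∀ j < d, L (X ^ j) = 0)
    {q : ℝ[X]} (hq : q.degree < (d : WithBot ℕ)) : L q = 0 := by
  have h_le : degreeLT ℝ d ≤ L.ker := by
    rw [degreeLT_eq_span_X_pow, Submodule.span_le]
    simpa [Set.subset_def] using hL
  exact h_le (mem_degreeLT.2 hq)

lemma degree_sub_X_pow_lt {p : ℝ[X]} {d : ℕ} (hp : p.Monic) (hd : p.natDegree = d) :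
    (p - X ^ d).degree < (d : WithBot ℕ) := by
  have h_degree : p.degree = d := (degree_eq_iff_natDegree_eq hp.ne_zero).2 hd
  rw [← h_degree]
  exact degree_sub_lt_left (by rw [h_degree, degree_X_pow]) hp.ne_zero
    (by rw [hp.leadingCoeff, (monic_X_pow d).leadingCoeff])

-- The leading terms on the two sides of `h_rel` for `q = X ^ e` do not cancel because `z ≠ 1`, so
-- `L (X ^ (d + e))` is determined by the values of `L` on lower powers.
lemma eq_zero_of_map_mul_eq {L : ℝ[X] →ₗ[ℝ] ℝ} {a b : ℝ[X]} {d : ℕ} (hz' : z ≠ 1)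
    (ha : a.Monic) (hb : b.Monic) (had : a.natDegree = d) (hbd : b.natDegree = d)
    (h_rel : ∀ q, L (a * q) = z * L (b * q.comp (X + 1))) (hL : ∀ j < d, L (X ^ j) = 0) :
    L = 0 := by
  have h_pow (i : ℕ) : L (X ^ i) = 0 := by
    induction i using Nat.strong_induction_on with
    | _ i ih =>
      rcases lt_or_ge i d with h_lt | h_ge
      · exact hL i h_lt
      obtain ⟨e, rfl⟩ := Nat.exists_eq_add_of_le h_ge
      have h_shift : ((X + 1 : ℝ[X]) ^ e).Monic := by
        rw [← C_1]
        exact (monic_X_add_C 1).pow e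
      have h_a : L (a * X ^ e - X ^ (d + e)) = 0 := map_eq_zero_of_degree_lt ih <|
        degree_sub_X_pow_lt (ha.mul (monic_X_pow e))
          (by rw [ha.natDegree_mul (monic_X_pow e), had, natDegree_X_pow])
      have h_b : L (b * (X + 1) ^ e - X ^ (d + e)) = 0 := map_eq_zero_of_degree_lt ih <|
        degree_sub_X_pow_lt (hb.mul h_shift) (by rw [hb.natDegree_mul h_shift, hbd, ← C_1,
          (monic_X_add_C 1).natDegree_pow, natDegree_X_add_C, mul_one])
      have h_e := h_rel (X ^ e)
      rw [X_pow_comp] at h_e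
      rw [map_sub] at h_a h_b
      exact (mul_eq_zero.1 (by linear_combination h_e - h_a + z * h_b :
        (1 - z) * L (X ^ (d + e)) = 0)).resolve_left (sub_ne_zero.2 hz'.symm)
  refine LinearMap.ext fun q => ?_
  exact map_eq_zero_of_degree_lt (fun j _ => h_pow j)
    (degree_le_natDegree.trans_lt (by exact_mod_cast q.natDegree.lt_succ_self))

lemma twistedSeries_kernelPoly_mul_eq_zero (hz₁ : z ≠ 1) {n : ℕ}
    (h : ∀ j ≤ 2, twistedSeries hz c₀ c₁ c₂ (kernelPoly n * X ^ j) = 0) (q : ℝ[X]) :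
    twistedSeries hz c₀ c₁ c₂ (kernelPoly n * q) = 0 := by
  have h_zero : twistedSeries hz c₀ c₁ c₂ ∘ₗ LinearMap.mulLeft ℝ (kernelPoly n) = 0 :=
    eq_zero_of_map_mul_eq hz₁ (monic_kernelShiftDen n) (monic_kernelShiftNum n)
      (natDegree_kernelShiftDen n) (natDegree_kernelShiftNum n)
      (twistedSeries_kernelPoly_mul_eq hz c₀ c₁ c₂ n) fun j hj => h j (by lia)
  exact LinearMap.congr_fun h_zero q

lemma eval_natCast_centralFactorial_ne_zero {c v : ℕ} (h : c < v) :
    (centralFactorial c).eval (v : ℝ) ≠ 0 := by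
  rw [eval_natCast_centralFactorial, Nat.cast_ne_zero, Ne, Nat.descFactorial_eq_zero_iff_lt]
  lia

lemma eval_natCast_kernelPoly_ne_zero {n v : ℕ} (h : 13 * n < v) :
    (kernelPoly n).eval (v : ℝ) ≠ 0 := by
  rw [kernelPoly, eval_mul, eval_mul]
  exact mul_ne_zero (mul_ne_zero (eval_natCast_centralFactorial_ne_zero h)
    (eval_natCast_centralFactorial_ne_zero (by lia)))
    (eval_natCast_centralFactorial_ne_zero (by lia))

lemma kernelPoly_comp_neg_X (n : ℕ) : (kernelPoly n).comp (-X) = -kernelPoly n := by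
  simp only [kernelPoly, mul_comp, centralFactorial_comp_neg_X]
  ring

lemma eval_neg_natCast_kernelPoly_ne_zero {n v : ℕ} (h : 13 * n < v) :
    (kernelPoly n).eval (-(v : ℝ)) ≠ 0 := by
  have h_eval := congrArg (eval (v : ℝ)) (kernelPoly_comp_neg_X n)
  rw [eval_comp, eval_neg, eval_X, eval_neg] at h_eval
  rw [h_eval, neg_ne_zero]
  exact eval_natCast_kernelPoly_ne_zero h

lemma eq_zero_of_eval_diffOp_eq_zero {V : ℝ[X]} {x : ℝ} (hV : V.eval x ≠ 0)
    (h : ∀ e, (diffOp c₀ c₁ c₂ (V * (X - C x) ^ e)).eval x = 0) : c₀ = 0 ∧ c₁ = 0 ∧ c₂ = 0 := by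
  have h_two := h 2
  have h_one := h 1
  have h_zero := h 0
  simp [diffOp_apply, derivative_mul, derivative_pow, hV] at h_two h_one h_zero
  simp_all

-- Shifting the summation by `k` annihilates the tail, since `q (x + k)` is again a multiple of the
-- kernel, and the third-order roots annihilate all remaining terms except that at `v`.
lemma eval_diffOp_eq_zero_of_dvd (hz₀ : z ≠ 0) {n v k : ℕ} (hv : v < k)
    (h : ∀ q, twistedSeries hz c₀ c₁ c₂ (kernelPoly n * q) = 0) {q : ℝ[X]}
    (hq : kernelPoly n ∣ q) (hq' : kernelPoly n ∣ q.comp (X + C (k : ℝ)))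
    (h_root : ∀ u ∈ (range k).erase v, (X - C (u : ℝ)) ^ 3 ∣ q) :
    (diffOp c₀ c₁ c₂ q).eval (v : ℝ) = 0 := by
  have h_map {p : ℝ[X]} (hp : kernelPoly n ∣ p) : polySeries z (diffOp c₀ c₁ c₂ p) = 0 := by
    obtain ⟨p', rfl⟩ := hp
    exact h p'
  have h_sum := h_map hq
  rw [polySeries_eq_sum_range_add hz _ k, ← diffOp_comp_X_add_C, h_map hq', mul_zero, add_zero,
    ← sum_erase_add _ _ (mem_range.2 hv), sum_eq_zero fun u hu => by
      rw [eval_diffOp_eq_zero _ _ _ (h_root u hu), zero_mul], zero_add] at h_sum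
  exact (mul_eq_zero.1 h_sum).resolve_right (pow_ne_zero _ hz₀)

theorem exists_twistedSeries_kernelPoly_mul_X_pow_ne_zero (hz₀ : z ≠ 0) (hz₁ : z ≠ 1)
    (hc : ¬(c₀ = 0 ∧ c₁ = 0 ∧ c₂ = 0)) (n : ℕ) :
    ∃ j ≤ 2, twistedSeries hz c₀ c₁ c₂ (kernelPoly n * X ^ j) ≠ 0 := by
  by_contra! h
  obtain ⟨v, hv⟩ : ∃ v, 13 * n < v := ⟨_, lt_add_one _⟩
  let w : ℝ[X] := ∏ u ∈ (range (2 * v)).erase v, (X - C (u : ℝ))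
  have h_w : w.eval (v : ℝ) ≠ 0 := by
    rw [eval_prod, prod_ne_zero_iff]
    intro u hu
    rw [eval_sub, eval_X, eval_C, sub_ne_zero]
    exact Nat.cast_injective.ne (ne_of_mem_erase hu).symm
  have h_V : (kernelPoly n * (kernelPoly n).comp (X - C ((2 * v : ℕ) : ℝ)) * w ^ 3).eval (v : ℝ) ≠
      0 := by
    have h_arg : (X - C ((2 * v : ℕ) : ℝ)).eval (v : ℝ) = -(v : ℝ) := by
      rw [eval_sub, eval_X, eval_C]
      push_cast
      ring
    rw [eval_mul, eval_mul, eval_comp, eval_pow, h_arg]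
    exact mul_ne_zero (mul_ne_zero (eval_natCast_kernelPoly_ne_zero hv)
      (eval_neg_natCast_kernelPoly_ne_zero hv)) (pow_ne_zero _ h_w)
  refine hc (eq_zero_of_eval_diffOp_eq_zero c₀ c₁ c₂ h_V fun e => ?_)
  refine eval_diffOp_eq_zero_of_dvd hz c₀ c₁ c₂ hz₀ (by lia : v < 2 * v)
    (twistedSeries_kernelPoly_mul_eq_zero hz c₀ c₁ c₂ hz₁ h) ?_ ?_ fun u hu => ?_
  · exact ((dvd_mul_right _ _).mul_right _).mul_right _
  · have h_arg : (X - C ((2 * v : ℕ) : ℝ)).comp (X + C ((2 * v : ℕ) : ℝ)) = X := by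
      rw [sub_comp, X_comp, C_comp, add_sub_cancel_right]
    rw [mul_comp, mul_comp, mul_comp, comp_assoc, h_arg, comp_X]
    exact ((dvd_mul_left _ _).mul_right _).mul_right _
  · have h_dvd : X - C (u : ℝ) ∣ w := dvd_prod_of_mem (fun u : ℕ => X - C (u : ℝ)) hu
    exact ((pow_dvd_pow_of_dvd h_dvd 3).mul_left _).mul_right _

end Nonvanishing

section LinearForm

open Polynomial

lemma derivative_comp_neg_X {q : ℝ[X]} {e : ℝ} (h : q.comp (-X) = C e * q) :
    (derivative q).comp (-X) = C (-e) * derivative q := by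
  have h_deriv := congrArg derivative h
  rw [derivative_comp, derivative_C_mul, derivative_neg, derivative_X] at h_deriv
  rw [C_neg]
  linear_combination -h_deriv

lemma iterate_derivative_kernelPoly_mul_X_pow_comp_neg_X (n j i : ℕ) :
    (derivative^[i] (kernelPoly n * X ^ j)).comp (-X) =
      C ((-1) ^ (i + j + 1)) * derivative^[i] (kernelPoly n * X ^ j) := by
  induction i with
  | zero =>
    rw [Function.iterate_zero_apply, mul_comp, kernelPoly_comp_neg_X, X_pow_comp,
      neg_pow (X : ℝ[X]), C_pow, C_neg, C_1]
    ring
  | succ i ih =>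
    rw [Function.iterate_succ_apply', derivative_comp_neg_X ih]
    congr 2
    ring

lemma exists_eval_iterate_derivative_kernelPoly_mul_X_pow_eq (n j : ℕ) {i : ℕ} (hi : i ≤ 2)
    (v : ℕ) : ∃ m : ℤ, (derivative^[i] (kernelPoly n * X ^ j)).eval (v : ℝ) =
      ((kernelDivisor n : ℤ) : ℝ) * m := by
  obtain ⟨m, hm⟩ := kernelDivisor_dvd_eval_iterate_derivative_mul n v (X ^ j) hi
  have h_map : kernelPoly n * X ^ j = (intKernelPoly n * X ^ j).map (Int.castRingHom ℝ) := by
    rw [Polynomial.map_mul, map_intKernelPoly, Polynomial.map_pow, map_X]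
  refine ⟨m, ?_⟩
  rw [h_map, iterate_derivative_map, ← Int.cast_natCast v, ← Int.cast_mul, ← hm]
  exact eval_intCast_map (Int.castRingHom ℝ) _ _

lemma exists_polySeries_iterate_derivative_eq_of_even {n j i : ℕ} (hi : i ≤ 2) (h : Even (i + j)) :
    ∃ N : ℤ, polySeries z21 (derivative^[i] (kernelPoly n * X ^ j)) =
      kernelDivisor n * 5 ^ (9 * n + 1) * N := by
  have h_comp := iterate_derivative_kernelPoly_mul_X_pow_comp_neg_X n j i
  rw [h.add_one.neg_one_pow, C_neg, C_1, neg_one_mul] at h_comp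
  exact_mod_cast exists_polySeries_eq_of_odd norm_z21_lt_one z21_div_one_sub_sq h_comp
    (fun v hv => eval_iterate_derivative_kernelPoly_mul_eq_zero hv hi _)
    (exists_eval_iterate_derivative_kernelPoly_mul_X_pow_eq n j hi)

lemma exists_polySeries_iterate_derivative_eq_of_odd {n j i : ℕ} (hi : i ≤ 2) (h : Odd (i + j)) :
    ∃ N : ℤ, polySeries z21 (derivative^[i] (kernelPoly n * X ^ j)) =
      kernelDivisor n * 5 ^ (9 * n + 1) * N * √21 := by
  have h_comp := iterate_derivative_kernelPoly_mul_X_pow_comp_neg_X n j i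
  rw [h.add_one.neg_one_pow, C_1, one_mul] at h_comp
  have h_exists := exists_polySeries_eq_of_even norm_z21_lt_one z21_div_one_sub_sq h_comp
    (fun v hv => eval_iterate_derivative_kernelPoly_mul_eq_zero hv hi _)
    (exists_eval_iterate_derivative_kernelPoly_mul_X_pow_eq n j hi)
  rw [one_add_z21_div_one_sub] at h_exists
  exact_mod_cast h_exists

lemma twistedSeries_eq_add {z : ℝ} (hz : ‖z‖ < 1) (c₀ c₁ c₂ : ℝ) (q : ℝ[X]) :
    twistedSeries hz c₀ c₁ c₂ q = c₀ * polySeries z q + c₁ * polySeries z (derivative q) +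
      c₂ * polySeries z (derivative (derivative q)) := by
  rw [twistedSeries_apply, diffOp_apply, polySeries_add hz, polySeries_add hz, polySeries_C_mul,
    polySeries_C_mul, polySeries_C_mul]

lemma exists_twistedSeries_eq (n j : ℕ) (h₀ h₁ h₂ : ℤ) :
    ∃ N : ℤ, ∃ r ∈ ({1, √21} : Set ℝ),
      twistedSeries norm_z21_lt_one h₀ (-√21 * h₁) (√21 ^ 2 * h₂) (kernelPoly n * X ^ j) =
        kernelDivisor n * 5 ^ (9 * n + 1) * N * r := by
  rcases Nat.even_or_odd j with hj | hj
  · obtain ⟨N₀, e₀⟩ := exists_polySeries_iterate_derivative_eq_of_even (n := n) (j := j) (i := 0)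
      (by lia) (by grind)
    obtain ⟨N₁, e₁⟩ := exists_polySeries_iterate_derivative_eq_of_odd (n := n) (j := j) (i := 1)
      (by lia) (by grind)
    obtain ⟨N₂, e₂⟩ := exists_polySeries_iterate_derivative_eq_of_even (n := n) (j := j) (i := 2)
      (by lia) (by grind)
    refine ⟨h₀ * N₀ - 21 * h₁ * N₁ + 21 * h₂ * N₂, 1, Or.inl rfl, ?_⟩
    simp only [Function.iterate_succ_apply, Function.iterate_zero_apply] at e₀ e₁ e₂
    rw [twistedSeries_eq_add, e₀, e₁, e₂]
    push_cast
    linear_combination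
      (kernelDivisor n * 5 ^ (9 * n + 1) * (h₂ * N₂ - h₁ * N₁) : ℝ) * sq_sqrt_21
  · obtain ⟨N₀, e₀⟩ := exists_polySeries_iterate_derivative_eq_of_odd (n := n) (j := j) (i := 0)
      (by lia) (by grind)
    obtain ⟨N₁, e₁⟩ := exists_polySeries_iterate_derivative_eq_of_even (n := n) (j := j) (i := 1)
      (by lia) (by grind)
    obtain ⟨N₂, e₂⟩ := exists_polySeries_iterate_derivative_eq_of_odd (n := n) (j := j) (i := 2)
      (by lia) (by grind)
    refine ⟨h₀ * N₀ - h₁ * N₁ + 21 * h₂ * N₂, √21, Or.inr rfl, ?_⟩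
    simp only [Function.iterate_succ_apply, Function.iterate_zero_apply] at e₀ e₁ e₂
    rw [twistedSeries_eq_add, e₀, e₁, e₂, sq_sqrt_21]
    push_cast
    ring

lemma le_abs_twistedSeries {n j : ℕ} {h₀ h₁ h₂ : ℤ}
    (hne : twistedSeries norm_z21_lt_one h₀ (-√21 * h₁) (√21 ^ 2 * h₂) (kernelPoly n * X ^ j) ≠ 0) :
    (kernelDivisor n : ℝ) * 5 ^ (9 * n) ≤
      |twistedSeries norm_z21_lt_one h₀ (-√21 * h₁) (√21 ^ 2 * h₂) (kernelPoly n * X ^ j)| := by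
  obtain ⟨N, r, hr, h_eq⟩ := exists_twistedSeries_eq n j h₀ h₁ h₂
  have h_r : 1 ≤ r := by
    rcases hr with rfl | rfl
    · rfl
    · linarith [lt_sqrt_21]
  have h_N : 1 ≤ |(N : ℝ)| := by
    have h_ne : N ≠ 0 := by
      rintro rfl
      rw [h_eq, Int.cast_zero, mul_zero, zero_mul] at hne
      exact hne rfl
    exact_mod_cast Int.one_le_abs h_ne
  rw [h_eq, abs_mul, abs_mul, abs_of_nonneg (by positivity : (0 : ℝ) ≤ kernelDivisor n * 5 ^ _),
    abs_of_nonneg (by linarith : 0 ≤ r)]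
  calc (kernelDivisor n : ℝ) * 5 ^ (9 * n) ≤ kernelDivisor n * 5 ^ (9 * n + 1) := by
        gcongr
        · norm_num
        · lia
    _ ≤ kernelDivisor n * 5 ^ (9 * n + 1) * |(N : ℝ)| * r := by
      rw [mul_assoc _ |(N : ℝ)|]
      exact le_mul_of_one_le_right (by positivity) (one_le_mul_of_one_le_of_one_le h_N h_r)

lemma twistedSeries_eq_mul_add {z : ℝ} (hz : ‖z‖ < 1) (s l h₀ h₁ h₂ : ℝ) (q : ℝ[X]) :
    twistedSeries hz h₀ (-s * h₁) (s ^ 2 * h₂) q =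
      polySeries z q * (h₀ + h₁ * (s * l) + h₂ * (s * l) ^ 2) -
        (s * h₁ + 2 * s ^ 2 * l * h₂) * (polySeries z (derivative q) + l * polySeries z q) +
        s ^ 2 * h₂ * (polySeries z (derivative (derivative q)) +
          2 * l * polySeries z (derivative q) + l ^ 2 * polySeries z q) := by
  rw [twistedSeries_eq_add]
  ring

lemma abs_log_z21_le_one : |Real.log z21| ≤ 1 := by
  have h_exp : Real.exp (-1) < 0.3679 := by
    rw [Real.exp_neg, inv_lt_comm₀ (Real.exp_pos _) (by norm_num)]
    exact lt_trans (by norm_num) Real.exp_one_gt_d9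
  have h_lt : -1 < Real.log z21 := by
    rw [Real.lt_log_iff_exp_lt z21_pos, z21_eq]
    linarith [sqrt_21_lt]
  exact abs_le.2 ⟨h_lt.le, (Real.log_nonpos z21_pos.le z21_lt_one.le).trans zero_le_one⟩

/-- The number `α₁₀`, which equals `√21 * log ((√21 - 1) / (√21 + 1))` by definition. -/
noncomputable def alphaTen : ℝ := √21 * Real.log z21

lemma abs_twistedSeries_le {q : ℝ[X]} {h₀ h₁ h₂ H A ε : ℝ} (hh₁ : |h₁| ≤ H) (hh₂ : |h₂| ≤ H)
    (hA : |polySeries z21 q| ≤ A)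
    (hε₁ : |polySeries z21 (derivative q) + Real.log z21 * polySeries z21 q| ≤ ε)
    (hε₂ : |polySeries z21 (derivative (derivative q)) +
      2 * Real.log z21 * polySeries z21 (derivative q) +
        Real.log z21 ^ 2 * polySeries z21 q| ≤ ε) :
    |twistedSeries norm_z21_lt_one h₀ (-√21 * h₁) (√21 ^ 2 * h₂) q| ≤
      A * |h₀ + h₁ * alphaTen + h₂ * alphaTen ^ 2| + 70 * H * ε := by
  have h_H : 0 ≤ H := (abs_nonneg _).trans hh₁
  have h_coeff₁ : |√21 * h₁ + 2 * √21 ^ 2 * Real.log z21 * h₂| ≤ 49 * H :=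
    calc |√21 * h₁ + 2 * √21 ^ 2 * Real.log z21 * h₂|
        ≤ √21 * |h₁| + 42 * |Real.log z21| * |h₂| := by
          refine (abs_add_le _ _).trans_eq ?_
          rw [sq_sqrt_21, abs_mul, abs_mul, abs_mul, abs_of_nonneg (Real.sqrt_nonneg 21)]
          norm_num
      _ ≤ 7 * H + 42 * 1 * H := by
          gcongr
          · linarith [sqrt_21_lt]
          · exact abs_log_z21_le_one
      _ = 49 * H := by ring
  have h_coeff₂ : |√21 ^ 2 * h₂| ≤ 21 * H := by
    rw [sq_sqrt_21, abs_mul, abs_of_pos (by norm_num)]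
    gcongr
  rw [twistedSeries_eq_mul_add _ _ (Real.log z21), ← alphaTen]
  refine (abs_add_le _ _).trans ((add_le_add_left (abs_sub _ _) _).trans ?_)
  rw [abs_mul, abs_mul _ (_ + _), abs_mul _ (_ + _ + _)]
  calc _ ≤ A * |h₀ + h₁ * alphaTen + h₂ * alphaTen ^ 2| + 49 * H * ε + 21 * H * ε := by gcongr
    _ = _ := by ring

end LinearForm

section AlphaTen

open Filter Polynomial

lemma five_pow_eq_exp (k : ℕ) : (5 : ℝ) ^ (9 * (14 * k)) = Real.exp (126 * Real.log 5 * k) := by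
  rw [← Real.exp_log (pow_pos (by norm_num : (0 : ℝ) < 5) _), Real.log_pow]
  push_cast
  ring_nf

lemma eventually_exp_mul_factorialProd_le {ρ σ : ℝ} (h : ρ + 14 * 35.01152 ≤ 126 * Real.log 5 + σ) :
    ∀ᶠ k : ℕ in atTop, Real.exp (ρ * k) * factorialProd (14 * k) ≤
      kernelDivisor (14 * k) * 5 ^ (9 * (14 * k)) * Real.exp (σ * k) := by
  have h_tendsto : Tendsto (fun k : ℕ => 14 * k) atTop atTop :=
    tendsto_id.const_mul_atTop' (by norm_num)
  filter_upwards [h_tendsto.eventually eventually_log_factorialProd_sub_log_kernelDivisor_le]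
    with k hk
  push_cast at hk
  have h_div : (0 : ℝ) < kernelDivisor (14 * k) := by exact_mod_cast kernelDivisor_pos _
  have h_prod : (0 : ℝ) < factorialProd (14 * k) := by
    rw [factorialProd]
    positivity
  rw [five_pow_eq_exp, ← Real.log_le_log_iff (by positivity) (by positivity),
    Real.log_mul (Real.exp_ne_zero _) h_prod.ne',
    Real.log_mul (mul_pos h_div (Real.exp_pos _)).ne' (Real.exp_ne_zero _),
    Real.log_mul h_div.ne' (Real.exp_ne_zero _), Real.log_exp, Real.log_exp, Real.log_exp]
  have := mul_le_mul_of_nonneg_right h (Nat.cast_nonneg (α := ℝ) k)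
  linarith

lemma eventually_one_le_exp_mul_add : ∀ᶠ k : ℕ in atTop, ∀ h₀ h₁ h₂ : ℤ, ∀ H : ℝ,
    ¬(h₀ = 0 ∧ h₁ = 0 ∧ h₂ = 0) → |(h₁ : ℝ)| ≤ H → |(h₂ : ℝ)| ≤ H →
      1 ≤ Real.exp (2042.4832 * k) * |h₀ + h₁ * alphaTen + h₂ * alphaTen ^ 2| +
        70 * H * Real.exp (-226.089 * k) := by
  filter_upwards [eventually_abs_polySeries_kernelPoly_le peakRate_add_lt,
    eventually_abs_polySeries_derivative_add_le contourRate_sub_factorialProdRate_lt,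
    eventually_abs_polySeries_derivative_derivative_add_le contourRate_sub_factorialProdRate_lt,
    eventually_exp_mul_factorialProd_le (ρ := 1755.111) (σ := 2042.4832)
      (by linarith [Real.log_five_gt_d9]),
    eventually_exp_mul_factorialProd_le (ρ := -513.4613) (σ := -226.089)
      (by linarith [Real.log_five_gt_d9])]
    with k h_size h_small₁ h_small₂ h_rate h_rate' h₀ h₁ h₂ H hne hh₁ hh₂
  have h_coeff : ¬((h₀ : ℝ) = 0 ∧ -√21 * (h₁ : ℝ) = 0 ∧ √21 ^ 2 * (h₂ : ℝ) = 0) := by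
    simpa using hne
  obtain ⟨j, hj, h_ne⟩ := exists_twistedSeries_kernelPoly_mul_X_pow_ne_zero norm_z21_lt_one _ _ _
    z21_pos.ne' z21_lt_one.ne h_coeff (14 * k)
  have h_main := (le_abs_twistedSeries h_ne).trans
    (abs_twistedSeries_le hh₁ hh₂ (h_size j hj) (h_small₁ j hj) (h_small₂ j hj))
  have h_H : 0 ≤ 70 * H := by linarith [(abs_nonneg _).trans hh₁]
  have h_pos : (0 : ℝ) < kernelDivisor (14 * k) * 5 ^ (9 * (14 * k)) := by
    have := kernelDivisor_pos (14 * k)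
    positivity
  refine le_of_mul_le_mul_left ?_ h_pos
  linarith [mul_le_mul_of_nonneg_right h_rate
    (abs_nonneg ((h₀ : ℝ) + h₁ * alphaTen + h₂ * alphaTen ^ 2)),
    mul_le_mul_of_nonneg_left h_rate' h_H]

-- Taking `k` minimal with `B * H * exp (-b * k) ≤ 1 / 2` makes `exp (a * k)` of order
-- `H ^ (a / b)`.
lemma exists_one_le_mul_rpow_mul {a b B μ : ℝ} (ha : 0 ≤ a) (hb : 0 < b) (hB : 1 ≤ B)
    (hμ : a ≤ μ * b) (k₀ : ℕ) : ∃ c : ℝ, 0 ≤ c ∧ ∀ H L : ℝ, 1 ≤ H → 0 ≤ L →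
      (∀ k ≥ k₀, 1 ≤ Real.exp (a * k) * L + B * H * Real.exp (-b * k)) → 1 ≤ c * H ^ μ * L := by
  refine ⟨2 * (Real.exp (a * (k₀ + 1)) * (2 * B) ^ μ), by positivity, fun H L hH hL h => ?_⟩
  have h_log : 0 ≤ Real.log (2 * B * H) := Real.log_nonneg (by nlinarith)
  set m := ⌈Real.log (2 * B * H) / b⌉₊
  have h_le : Real.log (2 * B * H) ≤ b * m := (div_le_iff₀' hb).1 (Nat.le_ceil _)
  have h_lt : (m : ℝ) < Real.log (2 * B * H) / b + 1 := Nat.ceil_lt_add_one (by positivity)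
  have h_exp_neg : B * H * Real.exp (-b * (k₀ + m)) ≤ 1 / 2 := by
    have : Real.exp (-b * (k₀ + m)) ≤ (2 * B * H)⁻¹ := by
      rw [← Real.exp_log (by positivity : 0 < 2 * B * H), ← Real.exp_neg, Real.exp_le_exp]
      linarith [mul_nonneg hb.le (Nat.cast_nonneg (α := ℝ) k₀)]
    calc B * H * Real.exp (-b * (k₀ + m)) ≤ B * H * (2 * B * H)⁻¹ := by gcongr
      _ = 1 / 2 := by field_simp
  have h_exp : Real.exp (a * (k₀ + m)) ≤ Real.exp (a * (k₀ + 1)) * (2 * B) ^ μ * H ^ μ := by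
    rw [mul_assoc, ← Real.mul_rpow (by positivity) (by positivity),
      Real.rpow_def_of_pos (by positivity), ← Real.exp_add, Real.exp_le_exp]
    have h_quot : a * (Real.log (2 * B * H) / b) ≤ Real.log (2 * B * H) * μ := by
      rw [← mul_div_assoc, div_le_iff₀ hb]
      linarith [mul_le_mul_of_nonneg_left hμ h_log]
    linarith [mul_le_mul_of_nonneg_left h_lt.le ha]
  have h_key := h (k₀ + m) (Nat.le_add_right _ _)
  rw [Nat.cast_add] at h_key
  linarith [mul_le_mul_of_nonneg_right h_exp hL]

end AlphaTen

section AlgebraicApproximation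

open Polynomial Finset

lemma abs_coeff_le_polyHeight (P : ℤ[X]) (i : ℕ) : |(P.coeff i : ℝ)| ≤ polyHeight P := by
  have h_le : (P.coeff i).natAbs ≤ polyHeight P := by
    by_cases h : P.coeff i = 0
    · simp [h]
    · exact le_sup (f := fun i => (P.coeff i).natAbs) (mem_support_iff.2 h)
  rw [← Int.cast_abs, Int.abs_eq_natAbs]
  exact_mod_cast h_le

lemma one_le_polyHeight {P : ℤ[X]} (hP : P ≠ 0) : (1 : ℝ) ≤ polyHeight P := by
  refine le_trans ?_ (abs_coeff_le_polyHeight P P.natDegree)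
  exact_mod_cast Int.one_le_abs (leadingCoeff_ne_zero.2 hP)

lemma finite_setOf_aeval_eq_zero_of_polyHeight_le (d M : ℕ) :
    {β : ℝ | ∃ P : ℤ[X], P ≠ 0 ∧ P.natDegree ≤ d ∧ polyHeight P ≤ M ∧ aeval β P = 0}.Finite := by
  refine (bUnion_roots_finite (Int.castRingHom ℝ) d (Set.finite_Icc (-(M : ℤ)) M)).subset ?_
  rintro β ⟨P, hP, hd, hM, hβ⟩
  have h_map : P.map (Int.castRingHom ℝ) ≠ 0 :=
    (Polynomial.map_ne_zero_iff (RingHom.injective_int _)).2 hP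
  refine Set.mem_biUnion (show P.natDegree ≤ d ∧ ∀ i, P.coeff i ∈ _ from ⟨hd, fun i => ?_⟩) ?_
  · rw [Set.mem_Icc, ← abs_le]
    exact_mod_cast (abs_coeff_le_polyHeight P i).trans (Nat.cast_le.2 hM)
  · simpa [mem_roots h_map, eval_map, aeval_def] using hβ

lemma abs_aeval_sub_aeval_le {α β : ℝ} (h : |α - β| ≤ 1) {P : ℤ[X]} {d : ℕ}
    (hd : P.natDegree ≤ d) : |aeval α P - aeval β P| ≤
      |α - β| * (polyHeight P * ∑ i ∈ range (d + 1), i * (|α| + 1) ^ (i - 1)) := by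
  have h_max : max |α| |β| ≤ |α| + 1 :=
    max_le (by linarith) (by linarith [abs_sub_abs_le_abs_sub β α, abs_sub_comm α β])
  rw [aeval_eq_sum_range' (Nat.lt_succ_of_le hd), aeval_eq_sum_range' (Nat.lt_succ_of_le hd),
    ← sum_sub_distrib, mul_sum, mul_sum]
  refine (abs_sum_le_sum_abs _ _).trans (sum_le_sum fun i _ => ?_)
  rw [zsmul_eq_mul, zsmul_eq_mul, ← mul_sub, abs_mul]
  calc |(P.coeff i : ℝ)| * |α ^ i - β ^ i|
      ≤ polyHeight P * (|α - β| * i * (|α| + 1) ^ (i - 1)) := by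
        gcongr
        · exact abs_coeff_le_polyHeight P i
        · exact (abs_pow_sub_pow_le ..).trans (by gcongr)
    _ = |α - β| * (polyHeight P * (i * (|α| + 1) ^ (i - 1))) := by ring

lemma le_rpow_inv_of_one_le_mul_rpow_neg {H δ D : ℝ} (hH : 0 < H) (hδ : 0 < δ)
    (h : 1 ≤ D * H ^ (-δ)) : H ≤ D ^ δ⁻¹ := by
  rw [Real.rpow_neg hH.le, ← div_eq_mul_inv, one_le_div (by positivity)] at h
  calc H = (H ^ δ) ^ δ⁻¹ := (Real.rpow_rpow_inv hH.le hδ.ne').symm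
    _ ≤ D ^ δ⁻¹ := by gcongr

theorem finite_setOf_abs_sub_lt_polyHeight_rpow {α c μ κ : ℝ} {d : ℕ} (hc : 0 ≤ c) (hμ : 0 ≤ μ)
    (h_lower : ∀ P : ℤ[X], P ≠ 0 → P.natDegree ≤ d →
      1 ≤ c * (polyHeight P : ℝ) ^ μ * |aeval α P|) (hκ : μ + 1 < κ) :
    {β : ℝ | ∃ P : ℤ[X], P ≠ 0 ∧ P.natDegree ≤ d ∧ aeval β P = 0 ∧
      |α - β| < (polyHeight P : ℝ) ^ (-κ)}.Finite := by
  set D := ∑ i ∈ range (d + 1), (i : ℝ) * (|α| + 1) ^ (i - 1)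
  refine (finite_setOf_aeval_eq_zero_of_polyHeight_le d
    ⌈(c * D) ^ (κ - (μ + 1))⁻¹⌉₊).subset ?_
  rintro β ⟨P, hP, hd, hβ, h_lt⟩
  refine ⟨P, hP, hd, ?_, hβ⟩
  have h_one := one_le_polyHeight hP
  have h_H : (0 : ℝ) < polyHeight P := by linarith
  have h_near : |α - β| ≤ 1 :=
    h_lt.le.trans (Real.rpow_le_one_of_one_le_of_nonpos h_one (by linarith))
  have h_aeval := abs_aeval_sub_aeval_le h_near hd
  rw [hβ, sub_zero] at h_aeval
  have h_le : 1 ≤ c * D * (polyHeight P : ℝ) ^ (-(κ - (μ + 1))) :=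
    calc 1 ≤ c * (polyHeight P : ℝ) ^ μ *
        ((polyHeight P : ℝ) ^ (-κ) * (polyHeight P * D)) := by
          refine (h_lower P hP hd).trans ?_
          gcongr
          exact h_aeval.trans (by gcongr)
      _ = c * D * ((polyHeight P : ℝ) ^ μ * (polyHeight P : ℝ) ^ (-κ) *
          (polyHeight P : ℝ) ^ (1 : ℝ)) := by
        rw [Real.rpow_one]
        ring
      _ = c * D * (polyHeight P : ℝ) ^ (-(κ - (μ + 1))) := by
        rw [← Real.rpow_add h_H, ← Real.rpow_add h_H]
        ring_nf
  exact_mod_cast (le_rpow_inv_of_one_le_mul_rpow_neg h_H (by linarith) h_le).trans (Nat.le_ceil _)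

lemma exists_one_le_mul_polyHeight_rpow_mul_abs_aeval_alphaTen :
    ∃ c : ℝ, 0 ≤ c ∧ ∀ P : ℤ[X], P ≠ 0 → P.natDegree ≤ 2 →
      1 ≤ c * (polyHeight P : ℝ) ^ (9.034 : ℝ) * |aeval alphaTen P| := by
  obtain ⟨k₀, hk₀⟩ := Filter.eventually_atTop.1 eventually_one_le_exp_mul_add
  obtain ⟨c, hc, h_lower⟩ := exists_one_le_mul_rpow_mul (a := 2042.4832) (b := 226.089) (B := 70)
    (μ := 9.034) (by norm_num) (by norm_num) (by norm_num) (by norm_num) k₀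
  refine ⟨c, hc, fun P hP hd => h_lower _ _ (one_le_polyHeight hP) (abs_nonneg _) fun k hk => ?_⟩
  have h_coeff : ¬(P.coeff 0 = 0 ∧ P.coeff 1 = 0 ∧ P.coeff 2 = 0) := fun h => hP <| by
    rw [eq_quadratic_of_degree_le_two (natDegree_le_iff_degree_le.1 hd), h.1, h.2.1, h.2.2]
    simp
  rw [aeval_eq_sum_range' (Nat.lt_succ_of_le hd)]
  simpa [sum_range_succ] using hk₀ k hk _ _ _ _ h_coeff (abs_coeff_le_polyHeight P 1)
    (abs_coeff_le_polyHeight P 2)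

end AlgebraicApproximation

theorem non_quadraticity_measure_alpha_11_general {κ : ℝ} (hκ : 10.034 < κ) :
    {β : ℝ | ∃ P : Polynomial ℤ, P ≠ 0 ∧ P.natDegree ≤ 2 ∧ Polynomial.aeval β P = 0 ∧
      |Real.sqrt 21 * Real.log ((Real.sqrt 21 - 1) / (Real.sqrt 21 + 1)) - β| <
        ((polyHeight P : ℕ) : ℝ) ^ (-κ)}.Finite := by
  obtain ⟨c, hc, h_lower⟩ := exists_one_le_mul_polyHeight_rpow_mul_abs_aeval_alphaTen
  exact finite_setOf_abs_sub_lt_polyHeight_rpow hc (by norm_num) h_lower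
    (lt_of_eq_of_lt (by norm_num) hκ)

theorem non_quadraticity_measure_alpha_11 :
    ∀ κ : ℝ, κ > 10.034 →
      {β : ℝ | ∃ P : Polynomial ℤ, Irreducible P ∧ P.natDegree ≤ 2 ∧
          Polynomial.aeval β P = 0 ∧
          |Real.sqrt 21 * Real.log ((Real.sqrt 21 - 1) / (Real.sqrt 21 + 1)) - β| <
            ((polyHeight P : ℕ) : ℝ) ^ (-κ)}.Finite := by
  intro κ hκ
  refine (non_quadraticity_measure_alpha_11_general hκ).subset ?_
  rintro β ⟨P, hP, h⟩
  exact ⟨P, hP.ne_zero, h⟩
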